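/- arXiv:1608.03823 — 8 statements merged into one kernel-verified Lean document; each statement's English description precedes it below -/
import Mathlib

section
/- For every natural number n ≥ 1 there exists a finite geometric simplicial complex K_n in ℝ³ such that: (i) the union of the simplices of K_n is the unit cube [0,1]³; (ii) the vertex set of K_n is exactly the grid {(i/(2n), j/(2n), k/(2n)) : 0 ≤ i, j, k ≤ 2n} (so K_n has (2n+1)³ vertices); (iii) K_n has exactly 5·(2n)³ three-dimensional simplices; (iv) every simplex of K_n has diameter at most 1/(n·√2); and (v) for each coordinate l ∈ {1,2,3}, translation by the standard basis vector e_l maps the set of simplices of K_n contained in the face {x ∈ [0,1]³ : x_l = 0} bijectively onto the set of simplices of K_n contained in the opposite face {x ∈ [0,1]³ : x_l = 1}. (This is the combinatorial content of the paper's Theorem on the 3-torus: identifying opposite faces yields a triangulation of T³ = ℝ³/ℤ³ with 8n³ vertices and 40n³ tetrahedra.) -/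
open scoped Classical

/-- The point `(a, b, c)` of Euclidean 3-space. -/
noncomputable def pt3 (a b c : ℝ) : EuclideanSpace ℝ (Fin 3) :=
  (WithLp.equiv 2 (Fin 3 → ℝ)).symm ![a, b, c]

/-- The unit cube `[0,1]³` in Euclidean 3-space. -/
def unitCube : Set (EuclideanSpace ℝ (Fin 3)) :=
  {x | ∀ i : Fin 3, x i ∈ Set.Icc (0 : ℝ) 1}

abbrev Z3 := Fin 3 → ℤ

def InCube (c v : Z3) : Prop := ∀ i, c i ≤ v i ∧ v i ≤ c i + 1

def IFc (n : ℕ) (s : Finset Z3) : Prop :=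
  s.Nonempty ∧ (∃ c : Z3, (∀ i, 0 ≤ c i ∧ c i + 1 ≤ 2 * (n : ℤ)) ∧ ∀ v ∈ s, InCube c v) ∧
  ∀ v ∈ s, (v 0 + v 1 + v 2) % 2 = 1 → ∀ w ∈ s,
    (v 0 - w 0).natAbs + (v 1 - w 1).natAbs + (v 2 - w 2).natAbs ≤ 1

lemma ne_coord {v p : Z3} (h : v ≠ p) : v 0 ≠ p 0 ∨ v 1 ≠ p 1 ∨ v 2 ≠ p 2 := by
  by_contra hc
  push Not at hc
  apply h
  funext i
  fin_cases i
  · exact hc.1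
  · exact hc.2.1
  · exact hc.2.2

lemma incube_iff (c v : Z3) : InCube c v ↔ (c 0 ≤ v 0 ∧ v 0 ≤ c 0 + 1) ∧
    (c 1 ≤ v 1 ∧ v 1 ≤ c 1 + 1) ∧ (c 2 ≤ v 2 ∧ v 2 ≤ c 2 + 1) := by
  simp [InCube, Fin.forall_fin_succ]

lemma fun_odd (c p : Z3) : ∃ g0 g1 g2 : ℤ,
    (∀ v, InCube c v → v ≠ p → 1 ≤ g0 * (v 0 - p 0) + g1 * (v 1 - p 1) + g2 * (v 2 - p 2)) ∧
    (∀ v : Z3, (p 0 - v 0).natAbs + (p 1 - v 1).natAbs + (p 2 - v 2).natAbs ≤ 1 →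
      g0 * (v 0 - p 0) + g1 * (v 1 - p 1) + g2 * (v 2 - p 2) ≤ 1) := by
  simp only [incube_iff]
  by_cases h : InCube c p
  · rw [incube_iff] at h
    have key : ∀ x y : ℤ, x ≤ y ∧ y ≤ x + 1 → ∃ g : ℤ, (g = 1 ∧ y = x) ∨ (g = -1 ∧ y = x + 1) := by
      intro x y h
      rcases (show y = x ∨ y = x + 1 by omega) with h | h
      · exact ⟨1, Or.inl ⟨rfl, h⟩⟩
      · exact ⟨-1, Or.inr ⟨rfl, h⟩⟩
    obtain ⟨g0, h0⟩ := key _ _ h.1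
    obtain ⟨g1, h1⟩ := key _ _ h.2.1
    obtain ⟨g2, h2⟩ := key _ _ h.2.2
    refine ⟨g0, g1, g2, ?_, ?_⟩
    · intro v hv hne
      have := ne_coord hne
      rcases h0 with ⟨rfl, h0⟩ | ⟨rfl, h0⟩ <;> rcases h1 with ⟨rfl, h1⟩ | ⟨rfl, h1⟩ <;>
        rcases h2 with ⟨rfl, h2⟩ | ⟨rfl, h2⟩ <;> omega
    · intro v hv
      rcases h0 with ⟨rfl, h0⟩ | ⟨rfl, h0⟩ <;> rcases h1 with ⟨rfl, h1⟩ | ⟨rfl, h1⟩ <;>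
        rcases h2 with ⟨rfl, h2⟩ | ⟨rfl, h2⟩ <;> omega
  · rw [incube_iff] at h
    have : p 0 < c 0 ∨ c 0 + 1 < p 0 ∨ p 1 < c 1 ∨ c 1 + 1 < p 1 ∨ p 2 < c 2 ∨ c 2 + 1 < p 2 := by
      omega
    rcases this with h | h | h | h | h | h
    · exact ⟨1, 0, 0, fun v hv _ => by omega, fun v hv => by omega⟩
    · exact ⟨-1, 0, 0, fun v hv _ => by omega, fun v hv => by omega⟩
    · exact ⟨0, 1, 0, fun v hv _ => by omega, fun v hv => by omega⟩
    · exact ⟨0, -1, 0, fun v hv _ => by omega, fun v hv => by omega⟩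
    · exact ⟨0, 0, 1, fun v hv _ => by omega, fun v hv => by omega⟩
    · exact ⟨0, 0, -1, fun v hv _ => by omega, fun v hv => by omega⟩

lemma fun_even (c p : Z3) (hp : (p 0 + p 1 + p 2) % 2 = 0) : ∃ g0 g1 g2 : ℤ,
    (∀ v, InCube c v → (v 0 + v 1 + v 2) % 2 = 0 → v ≠ p →
      2 ≤ g0 * (v 0 - p 0) + g1 * (v 1 - p 1) + g2 * (v 2 - p 2)) ∧
    (∀ v c', InCube c' p → InCube c' v → (v 0 + v 1 + v 2) % 2 = 0 →
      g0 * (v 0 - p 0) + g1 * (v 1 - p 1) + g2 * (v 2 - p 2) ≤ 2) := by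
  simp only [incube_iff]
  by_cases h : InCube c p
  · rw [incube_iff] at h
    have key : ∀ x y : ℤ, x ≤ y ∧ y ≤ x + 1 → ∃ g : ℤ, (g = 1 ∧ y = x) ∨ (g = -1 ∧ y = x + 1) := by
      intro x y h
      rcases (show y = x ∨ y = x + 1 by omega) with h | h
      · exact ⟨1, Or.inl ⟨rfl, h⟩⟩
      · exact ⟨-1, Or.inr ⟨rfl, h⟩⟩
    obtain ⟨g0, h0⟩ := key _ _ h.1
    obtain ⟨g1, h1⟩ := key _ _ h.2.1
    obtain ⟨g2, h2⟩ := key _ _ h.2.2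
    refine ⟨g0, g1, g2, ?_, ?_⟩
    · intro v hv he hne
      have := ne_coord hne
      rcases h0 with ⟨rfl, h0⟩ | ⟨rfl, h0⟩ <;> rcases h1 with ⟨rfl, h1⟩ | ⟨rfl, h1⟩ <;>
        rcases h2 with ⟨rfl, h2⟩ | ⟨rfl, h2⟩ <;> omega
    · intro v c' hp' hv he
      rcases h0 with ⟨rfl, h0⟩ | ⟨rfl, h0⟩ <;> rcases h1 with ⟨rfl, h1⟩ | ⟨rfl, h1⟩ <;>
        rcases h2 with ⟨rfl, h2⟩ | ⟨rfl, h2⟩ <;> omega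
  · rw [incube_iff] at h
    have : p 0 < c 0 ∨ c 0 + 1 < p 0 ∨ p 1 < c 1 ∨ c 1 + 1 < p 1 ∨ p 2 < c 2 ∨ c 2 + 1 < p 2 := by
      omega
    rcases this with h | h | h | h | h | h
    · exact ⟨2, 0, 0, fun v hv _ _ => by omega, fun v c' hp hv _ => by omega⟩
    · exact ⟨-2, 0, 0, fun v hv _ _ => by omega, fun v c' hp hv _ => by omega⟩
    · exact ⟨0, 2, 0, fun v hv _ _ => by omega, fun v c' hp hv _ => by omega⟩
    · exact ⟨0, -2, 0, fun v hv _ _ => by omega, fun v c' hp hv _ => by omega⟩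
    · exact ⟨0, 0, 2, fun v hv _ _ => by omega, fun v c' hp hv _ => by omega⟩
    · exact ⟨0, 0, -2, fun v hv _ _ => by omega, fun v c' hp hv _ => by omega⟩

lemma one_sided (A s t : Finset Z3) (w u : Z3 → ℝ) (hw : ∀ v, 0 ≤ w v) (hu : ∀ v, 0 ≤ u v)
    (hws : ∀ v, v ∉ s → w v = 0) (hut : ∀ v, v ∉ t → u v = 0)
    (hsum : ∑ v ∈ A, w v = ∑ v ∈ A, u v)
    (hco : ∀ i, ∑ v ∈ A, w v * (v i : ℝ) = ∑ v ∈ A, u v * (v i : ℝ))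
    (p : Z3) (hp : p ∈ A) (g0 g1 g2 : ℤ) (k : ℤ) (hk : 0 < k)
    (h1 : ∀ v ∈ A, v ∈ s → g0 * (v 0 - p 0) + g1 * (v 1 - p 1) + g2 * (v 2 - p 2) ≤ k)
    (h2 : ∀ v ∈ A, v ∈ t → v ≠ p → k ≤ g0 * (v 0 - p 0) + g1 * (v 1 - p 1) + g2 * (v 2 - p 2)) :
    w p ≤ u p := by
  let f : Z3 → ℝ := fun v => ((g0 * (v 0 - p 0) + g1 * (v 1 - p 1) + g2 * (v 2 - p 2) : ℤ) : ℝ)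
  have expand : ∀ w : Z3 → ℝ, ∑ v ∈ A, w v * f v =
      g0 * ∑ v ∈ A, w v * (v 0 : ℝ) + g1 * ∑ v ∈ A, w v * (v 1 : ℝ)
        + g2 * ∑ v ∈ A, w v * (v 2 : ℝ) - (g0 * p 0 + g1 * p 1 + g2 * p 2) * ∑ v ∈ A, w v := by
    intro w
    simp only [Finset.mul_sum, ← Finset.sum_add_distrib, ← Finset.sum_sub_distrib]
    refine Finset.sum_congr rfl fun v _ => ?_
    simp only [f]
    push_cast
    ring
  have heq : ∑ v ∈ A, w v * f v = ∑ v ∈ A, u v * f v := by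
    rw [expand, expand, hco, hco, hco, hsum]
  have hfp : f p = 0 := by simp [f]
  have hkR : (0 : ℝ) < k := by exact_mod_cast hk
  have e1 : ∑ v ∈ A, w v * f v ≤ ∑ v ∈ A, (k * w v - if v = p then k * w p else 0) := by
    refine Finset.sum_le_sum fun v hv => ?_
    split_ifs with h
    · subst h; rw [hfp]; simp
    · by_cases hs : v ∈ s
      · have : f v ≤ k := Int.cast_le.2 (h1 v hv hs)
        nlinarith [hw v]
      · simp [hws v hs]
  have e2 : ∑ v ∈ A, (k * u v - if v = p then k * u p else 0) ≤ ∑ v ∈ A, u v * f v := by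
    refine Finset.sum_le_sum fun v hv => ?_
    split_ifs with h
    · subst h; rw [hfp]; simp
    · by_cases hs : v ∈ t
      · have : (k : ℝ) ≤ f v := Int.cast_le.2 (h2 v hv hs h)
        nlinarith [hu v]
      · simp [hut v hs]
  rw [Finset.sum_sub_distrib, Finset.sum_ite_eq' A p, if_pos hp, ← Finset.mul_sum] at e1 e2
  rw [hsum] at e1
  have : k * w p ≤ k * u p := by linarith
  exact le_of_mul_le_mul_left this hkR

lemma uniq_odd {n : ℕ} {s t : Finset Z3} (hs : IFc n s) (ht : IFc n t) (A : Finset Z3)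
    (w u : Z3 → ℝ) (hw : ∀ v, 0 ≤ w v) (hu : ∀ v, 0 ≤ u v)
    (hws : ∀ v, v ∉ s → w v = 0) (hut : ∀ v, v ∉ t → u v = 0)
    (hsum : ∑ v ∈ A, w v = ∑ v ∈ A, u v)
    (hco : ∀ i, ∑ v ∈ A, w v * (v i : ℝ) = ∑ v ∈ A, u v * (v i : ℝ))
    (p : Z3) (hp : p ∈ A) (hpo : (p 0 + p 1 + p 2) % 2 = 1) : w p ≤ u p := by
  by_cases hps : p ∈ s
  · obtain ⟨-, ⟨c, -, hc⟩, -⟩ := ht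
    obtain ⟨g0, g1, g2, h1, h2⟩ := fun_odd c p
    exact one_sided A s t w u hw hu hws hut hsum hco p hp g0 g1 g2 1 one_pos
      (fun v _ hv => h2 v (hs.2.2 p hps hpo v hv)) (fun v _ hv hne => h1 v (hc v hv) hne)
  · rw [hws p hps]; exact hu p

lemma uniq_even {n : ℕ} {s t : Finset Z3} (hs : IFc n s) (ht : IFc n t) (A : Finset Z3)
    (hA : ∀ v ∈ A, (v 0 + v 1 + v 2) % 2 = 0)
    (w u : Z3 → ℝ) (hw : ∀ v, 0 ≤ w v) (hu : ∀ v, 0 ≤ u v)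
    (hws : ∀ v, v ∉ s → w v = 0) (hut : ∀ v, v ∉ t → u v = 0)
    (hsum : ∑ v ∈ A, w v = ∑ v ∈ A, u v)
    (hco : ∀ i, ∑ v ∈ A, w v * (v i : ℝ) = ∑ v ∈ A, u v * (v i : ℝ))
    (p : Z3) (hp : p ∈ A) : w p ≤ u p := by
  by_cases hps : p ∈ s
  · obtain ⟨-, ⟨c, -, hc⟩, -⟩ := ht
    obtain ⟨-, ⟨c', -, hc'⟩, -⟩ := hs
    obtain ⟨g0, g1, g2, h1, h2⟩ := fun_even c p (hA p hp)
    exact one_sided A s t w u hw hu hws hut hsum hco p hp g0 g1 g2 2 two_pos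
      (fun v hvA hv => h2 v c' (hc' p hps) (hc' v hv) (hA v hvA))
      (fun v hvA hv hne => h1 v (hc v hv) (hA v hvA) hne)
  · rw [hws p hps]; exact hu p

lemma uniq {n : ℕ} {s t : Finset Z3} (hs : IFc n s) (ht : IFc n t) (A : Finset Z3)
    (w u : Z3 → ℝ) (hw : ∀ v, 0 ≤ w v) (hu : ∀ v, 0 ≤ u v)
    (hws : ∀ v, v ∉ s → w v = 0) (hut : ∀ v, v ∉ t → u v = 0)
    (hsum : ∑ v ∈ A, w v = ∑ v ∈ A, u v)
    (hco : ∀ i, ∑ v ∈ A, w v * (v i : ℝ) = ∑ v ∈ A, u v * (v i : ℝ))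
    (p : Z3) (hp : p ∈ A) : w p = u p := by
  have hodd : ∀ p ∈ A, (p 0 + p 1 + p 2) % 2 = 1 → w p = u p := fun p hp hpo => le_antisymm
    (uniq_odd hs ht A w u hw hu hws hut hsum hco p hp hpo)
    (uniq_odd ht hs A u w hu hw hut hws hsum.symm (fun i => (hco i).symm) p hp hpo)
  rcases Int.emod_two_eq_zero_or_one (p 0 + p 1 + p 2) with h | h
  swap
  · exact hodd p hp h
  let P : Z3 → Prop := fun v => (v 0 + v 1 + v 2) % 2 = 0
  have sub : ∀ f : Z3 → ℝ, ∑ v ∈ A, w v * f v = ∑ v ∈ A, u v * f v →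
      ∑ v ∈ A.filter P, w v * f v = ∑ v ∈ A.filter P, u v * f v := by
    intro f hf
    rw [← Finset.sum_filter_add_sum_filter_not A P, ← Finset.sum_filter_add_sum_filter_not A P
      (fun v => u v * f v)] at hf
    have : ∑ v ∈ A.filter (fun v => ¬ P v), w v * f v
        = ∑ v ∈ A.filter (fun v => ¬ P v), u v * f v := by
      refine Finset.sum_congr rfl fun v hv => ?_
      rw [Finset.mem_filter] at hv
      rw [hodd v hv.1 (by have := hv.2; simp only [P] at this; omega)]
    linarith
  have h1 := sub (fun _ => 1) (by simpa using hsum)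
  simp only [mul_one] at h1
  have h2 := fun i => sub (fun v => (v i : ℝ)) (hco i)
  have hA : ∀ v ∈ A.filter P, (v 0 + v 1 + v 2) % 2 = 0 := fun v hv => (Finset.mem_filter.1 hv).2
  have hp' : p ∈ A.filter P := Finset.mem_filter.2 ⟨hp, h⟩
  exact le_antisymm (uniq_even hs ht _ hA w u hw hu hws hut h1 h2 p hp')
    (uniq_even ht hs _ hA u w hu hw hut hws h1.symm (fun i => (h2 i).symm) p hp')

abbrev E3 := EuclideanSpace ℝ (Fin 3)

noncomputable def emb (n : ℕ) (v : Z3) : E3 := WithLp.toLp 2 (fun i => (v i : ℝ) / (2 * n))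

lemma emb_apply (n : ℕ) (v : Z3) (i : Fin 3) : emb n v i = (v i : ℝ) / (2 * n) := rfl

lemma emb_inj {n : ℕ} (hn : 1 ≤ n) : Function.Injective (emb n) := by
  intro v w h
  funext i
  have := congrArg (fun x : E3 => x i) h
  simp only [emb_apply] at this
  have h2 : (2 * n : ℝ) ≠ 0 := by positivity
  field_simp at this
  exact_mod_cast this

lemma sum_coord {n : ℕ} (hn : 1 ≤ n) (A : Finset Z3) (w : Z3 → ℝ) (i : Fin 3) :
    (∑ v ∈ A, w v • emb n v) i * (2 * n) = ∑ v ∈ A, w v * (v i : ℝ) := by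
  have h2 : (n : ℝ) ≠ 0 := by positivity
  have : (∑ v ∈ A, w v • emb n v) i = ∑ v ∈ A, w v * ((v i : ℝ) / (2 * n)) := by
    rw [WithLp.ofLp_sum, Finset.sum_apply]
    rfl
  rw [this, Finset.sum_mul]
  refine Finset.sum_congr rfl fun v _ => ?_
  field_simp

lemma hull_weights {n : ℕ} (hn : 1 ≤ n) {s : Finset Z3} {x : E3}
    (hx : x ∈ convexHull ℝ ((s.image (emb n) : Finset E3) : Set E3)) :
    ∃ w : Z3 → ℝ, (∀ v, 0 ≤ w v) ∧ (∀ v, v ∉ s → w v = 0) ∧ ∑ v ∈ s, w v = 1 ∧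
      ∑ v ∈ s, w v • emb n v = x := by
  rw [Finset.mem_convexHull'] at hx
  obtain ⟨w, h0, h1, h2⟩ := hx
  rw [Finset.sum_image (fun a _ b _ h => emb_inj hn h)] at h1 h2
  refine ⟨fun v => if v ∈ s then w (emb n v) else 0, ?_, ?_, ?_, ?_⟩
  · intro v
    dsimp only
    split_ifs with h
    · exact h0 _ (Finset.mem_image_of_mem _ h)
    · exact le_rfl
  · intro v hv; simp [hv]
  · rw [← h1]; exact Finset.sum_congr rfl fun v hv => by simp [hv]
  · rw [← h2]; exact Finset.sum_congr rfl fun v hv => by simp [hv]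

lemma mem_hull_of_weights {n : ℕ} {A s : Finset Z3} (w : Z3 → ℝ) (h0 : ∀ v, 0 ≤ w v)
    (hs : ∀ v ∈ A, v ∉ s → w v = 0) (h1 : ∑ v ∈ A, w v = 1) :
    ∑ v ∈ A, w v • emb n v ∈ convexHull ℝ ((s.image (emb n) : Finset E3) : Set E3) := by
  have e1 : ∑ v ∈ A, w v = ∑ v ∈ A.filter (· ∈ s), w v := by
    rw [Finset.sum_filter]
    exact Finset.sum_congr rfl fun v hv => by split_ifs with h; rfl; exact hs v hv h
  have e2 : ∑ v ∈ A, w v • emb n v = ∑ v ∈ A.filter (· ∈ s), w v • emb n v := by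
    rw [Finset.sum_filter]
    exact Finset.sum_congr rfl fun v hv => by
      split_ifs with h
      · rfl
      · rw [hs v hv h, zero_smul]
  rw [e2]
  rw [e1] at h1
  refine (convex_convexHull ℝ _).sum_mem (fun v _ => h0 v) h1 fun v hv => ?_
  refine subset_convexHull ℝ _ ?_
  exact Finset.mem_coe.2 (Finset.mem_image_of_mem _ (Finset.mem_filter.1 hv).2)

lemma indep_aux {n : ℕ} (hn : 1 ≤ n) {s : Finset Z3} (hs : IFc n s) :
    AffineIndependent ℝ ((↑) : (s.image (emb n) : Finset E3) → E3) := by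
  have main : AffineIndependent ℝ (fun v : s => emb n v) := by
    rw [affineIndependent_iff_of_fintype]
    intro c hc0 hc1
    rw [Finset.weightedVSub_eq_linear_combination (hw := hc0)] at hc1
    let C : Z3 → ℝ := fun v => if h : v ∈ s then c ⟨v, h⟩ else 0
    have hC : ∀ v : s, C v = c v := fun v => by simp [C]
    have hs0 : ∑ v ∈ s, C v = 0 := by
      rw [← hc0, ← Finset.sum_coe_sort]
      exact Finset.sum_congr rfl fun v _ => hC v
    have hs1 : ∑ v ∈ s, C v • emb n v = 0 := by
      rw [← hc1, ← Finset.sum_coe_sort s (fun v => C v • emb n v)]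
      exact Finset.sum_congr rfl fun v _ => by rw [hC v]
    have hs2 : ∀ i, ∑ v ∈ s, C v * (v i : ℝ) = 0 := by
      intro i
      rw [← sum_coord hn, hs1]
      simp
    have hpm : ∀ v, C v = max (C v) 0 - max (-C v) 0 := by
      intro v
      rcases le_total (C v) 0 with h | h
      · rw [max_eq_right h, max_eq_left (by linarith)]; ring
      · rw [max_eq_left h, max_eq_right (by linarith)]; ring
    have hz : ∀ v, v ∉ s → C v = 0 := fun v hv => by simp [C, hv]
    intro v
    have := uniq hs hs s (fun v => max (C v) 0) (fun v => max (-C v) 0)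
      (fun v => le_max_right _ _) (fun v => le_max_right _ _)
      (fun v hv => by simp [hz v hv]) (fun v hv => by simp [hz v hv])
      (by
        rw [← sub_eq_zero, ← Finset.sum_sub_distrib]
        exact (Finset.sum_congr rfl fun v _ => (hpm v).symm).trans hs0)
      (by
        intro i
        rw [← sub_eq_zero, ← Finset.sum_sub_distrib]
        exact (Finset.sum_congr rfl fun v _ => by rw [← sub_mul, ← hpm v]).trans (hs2 i))
      v v.2
    rw [← hC v, hpm v]
    exact sub_eq_zero.2 this
  have := main.range
  refine this.mono (s := ((s.image (emb n) : Finset E3) : Set E3)) ?_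
  intro x hx
  rw [Finset.mem_coe, Finset.mem_image] at hx
  obtain ⟨v, hv, rfl⟩ := hx
  exact ⟨⟨v, hv⟩, rfl⟩

lemma inter_aux {n : ℕ} (hn : 1 ≤ n) {s t : Finset Z3} (hs : IFc n s) (ht : IFc n t) :
    convexHull ℝ ((s.image (emb n) : Finset E3) : Set E3) ∩
      convexHull ℝ ((t.image (emb n) : Finset E3) : Set E3) ⊆
    convexHull ℝ (((s.image (emb n) : Finset E3) : Set E3) ∩ ((t.image (emb n) : Finset E3) : Set E3)) := by
  rintro x ⟨hxs, hxt⟩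
  obtain ⟨w, w0, ws, w1, wx⟩ := hull_weights hn hxs
  obtain ⟨u, u0, ut, u1, ux⟩ := hull_weights hn hxt
  have ext : ∀ (s t : Finset Z3) (w : Z3 → ℝ), (∀ v, v ∉ s → w v = 0) → s ⊆ t →
      (∑ v ∈ t, w v = ∑ v ∈ s, w v) ∧ (∑ v ∈ t, w v • emb n v = ∑ v ∈ s, w v • emb n v) := by
    intro s t w hw hst
    constructor
    · exact (Finset.sum_subset hst fun v _ hv => hw v hv).symm
    · exact (Finset.sum_subset hst fun v _ hv => by rw [hw v hv, zero_smul]).symm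
  have hw := ext s (s ∪ t) w ws Finset.subset_union_left
  have hu := ext t (s ∪ t) u ut Finset.subset_union_right
  rw [w1, wx] at hw
  rw [u1, ux] at hu
  have key := uniq hs ht (s ∪ t) w u w0 u0 ws ut (by rw [hw.1, hu.1])
    (fun i => by rw [← sum_coord hn, ← sum_coord hn, hw.2, hu.2])
  have := mem_hull_of_weights (n := n) (A := s ∪ t) (s := s ∩ t) w w0 (by
    intro v hv hvn
    by_cases h : v ∈ s
    · rw [key v hv]
      exact ut v fun h' => hvn (Finset.mem_inter.2 ⟨h, h'⟩)
    · exact ws v h) hw.1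
  rw [hw.2] at this
  refine convexHull_mono ?_ this
  intro y hy
  rw [Finset.mem_coe, Finset.mem_image] at hy
  obtain ⟨v, hv, rfl⟩ := hy
  rw [Finset.mem_inter] at hv
  exact ⟨Finset.mem_coe.2 (Finset.mem_image_of_mem _ hv.1),
    Finset.mem_coe.2 (Finset.mem_image_of_mem _ hv.2)⟩

lemma IFc.mono {n : ℕ} {s t : Finset Z3} (hs : IFc n s) (h : t ⊆ s) (ht : t.Nonempty) : IFc n t := by
  obtain ⟨-, ⟨c, h1, h2⟩, h3⟩ := hs
  exact ⟨ht, ⟨c, h1, fun v hv => h2 v (h hv)⟩, fun v hv ho w hw => h3 v (h hv) ho w (h hw)⟩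

noncomputable def cubeK (n : ℕ) (hn : 1 ≤ n) : Geometry.SimplicialComplex ℝ E3 where
  faces := {S | ∃ s, IFc n s ∧ s.image (emb n) = S}
  isRelLowerSet_faces := by
    rintro S ⟨s, hs, rfl⟩
    refine ⟨hs.1.image _, ?_⟩
    intro T hT hne
    obtain ⟨t, hts, rfl⟩ := Finset.subset_image_iff.1 hT
    exact ⟨t, hs.mono (by exact_mod_cast hts) (Finset.image_nonempty.1 hne), rfl⟩
  indep := by
    rintro S ⟨s, hs, rfl⟩
    exact indep_aux hn hs
  inter_subset_convexHull := by
    rintro S T ⟨s, hs, rfl⟩ ⟨t, ht, rfl⟩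
    exact inter_aux hn hs ht

lemma mem_cubeK {n : ℕ} {hn : 1 ≤ n} {S : Finset E3} :
    S ∈ (cubeK n hn).faces ↔ ∃ s, IFc n s ∧ s.image (emb n) = S := Iff.rfl

lemma diam_aux {n : ℕ} (hn : 1 ≤ n) {s : Finset Z3} (hs : IFc n s) :
    Metric.diam (convexHull ℝ ((s.image (emb n) : Finset E3) : Set E3)) ≤ 1 / (n * Real.sqrt 2) := by
  rw [convexHull_diam]
  refine Metric.diam_le_of_forall_dist_le (by positivity) ?_
  intro x hx y hy
  rw [Finset.mem_coe, Finset.mem_image] at hx hy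
  obtain ⟨v, hv, rfl⟩ := hx
  obtain ⟨w, hw, rfl⟩ := hy
  obtain ⟨-, ⟨c, h1, h2⟩, h3⟩ := hs
  have a1 := (incube_iff _ _).1 (h2 v hv)
  have a2 := (incube_iff _ _).1 (h2 w hw)
  have b1 := fun h => h3 v hv h w hw
  have b2 := fun h => h3 w hw h v hv
  have hint : (v 0 - w 0) ^ 2 + (v 1 - w 1) ^ 2 + (v 2 - w 2) ^ 2 ≤ 2 := by
    have key : ∀ x : ℤ, -1 ≤ x → x ≤ 1 → x ^ 2 = x.natAbs := by
      intro x h1 h2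
      interval_cases x <;> rfl
    rw [key _ (by omega) (by omega), key _ (by omega) (by omega), key _ (by omega) (by omega)]
    omega
  have hR : ((v 0 : ℝ) - w 0) ^ 2 + ((v 1 : ℝ) - w 1) ^ 2 + ((v 2 : ℝ) - w 2) ^ 2 ≤ 2 := by
    exact_mod_cast hint
  have hn0 : (0 : ℝ) < n := by exact_mod_cast hn
  rw [EuclideanSpace.dist_eq, Fin.sum_univ_three]
  simp only [Real.dist_eq, sq_abs, emb_apply]
  apply Real.sqrt_le_iff.2 ⟨by positivity, ?_⟩
  rw [div_pow, mul_pow, Real.sq_sqrt (by norm_num)]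
  have : ((v 0 : ℝ) / (2 * n) - w 0 / (2 * n)) ^ 2 + ((v 1 : ℝ) / (2 * n) - w 1 / (2 * n)) ^ 2
    + ((v 2 : ℝ) / (2 * n) - w 2 / (2 * n)) ^ 2 =
    (((v 0 : ℝ) - w 0) ^ 2 + ((v 1 : ℝ) - w 1) ^ 2 + ((v 2 : ℝ) - w 2) ^ 2) / (4 * n ^ 2) := by
    field_simp
    ring
  rw [this, div_le_div_iff₀ (by positivity) (by positivity)]
  nlinarith [sq_nonneg (n : ℝ)]

lemma grid_bd {n : ℕ} {s : Finset Z3} (hs : IFc n s) {v : Z3} (hv : v ∈ s) (i : Fin 3) :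
    0 ≤ v i ∧ v i ≤ 2 * (n : ℤ) := by
  obtain ⟨-, ⟨c, h1, h2⟩, -⟩ := hs
  have := h1 i
  have := h2 v hv i
  omega

lemma single_face {n : ℕ} (hn : 1 ≤ n) {v : Z3} (h : ∀ i, 0 ≤ v i ∧ v i ≤ 2 * (n : ℤ)) :
    IFc n {v} := by
  refine ⟨Finset.singleton_nonempty _, ⟨fun i => min (v i) (2 * n - 1), ?_, ?_⟩, ?_⟩
  · intro i
    have := h i
    dsimp only
    omega
  · intro w hw i
    rw [Finset.mem_singleton] at hw
    subst hw
    have := h i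
    dsimp only
    omega
  · intro w hw _ w' hw'
    rw [Finset.mem_singleton] at hw hw'
    subst hw
    subst hw'
    simp

lemma vert_iff {n : ℕ} (hn : 1 ≤ n) (x : E3) : x ∈ (cubeK n hn).vertices ↔
    ∃ v : Z3, (∀ i, 0 ≤ v i ∧ v i ≤ 2 * (n : ℤ)) ∧ emb n v = x := by
  rw [Geometry.SimplicialComplex.mem_vertices, mem_cubeK]
  constructor
  · rintro ⟨s, hs, h⟩
    obtain ⟨v, hv⟩ := hs.1
    refine ⟨v, fun i => grid_bd hs hv i, ?_⟩
    have := Finset.mem_image_of_mem (emb n) hv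
    rw [h] at this
    exact Finset.mem_singleton.1 this
  · rintro ⟨v, hv, rfl⟩
    exact ⟨{v}, single_face hn hv, by simp⟩

lemma vert_eq {n : ℕ} (hn : 1 ≤ n) : (cubeK n hn).vertices = {x | ∃ i j k : ℕ, i ≤ 2 * n ∧
    j ≤ 2 * n ∧ k ≤ 2 * n ∧
        x = pt3 ((i : ℝ) / (2 * n)) ((j : ℝ) / (2 * n)) ((k : ℝ) / (2 * n))} := by
  ext x
  rw [vert_iff]
  constructor
  · rintro ⟨v, hv, rfl⟩
    have h0 := hv 0
    have h1 := hv 1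
    have h2 := hv 2
    refine ⟨(v 0).toNat, (v 1).toNat, (v 2).toNat, by omega, by omega, by omega, ?_⟩
    have key : ∀ i, (((v i).toNat : ℕ) : ℝ) = (v i : ℝ) := by
      intro i
      have : (((v i).toNat : ℕ) : ℤ) = v i := Int.toNat_of_nonneg (hv i).1
      exact_mod_cast congrArg (fun z : ℤ => (z : ℝ)) this
    ext i
    rw [key, key, key, emb_apply]
    fin_cases i <;> rfl
  · rintro ⟨i, j, k, hi, hj, hk, rfl⟩
    refine ⟨![i, j, k], ?_, ?_⟩
    · intro l
      fin_cases l <;> simp <;> omega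
    · ext l
      rw [emb_apply]
      fin_cases l <;> simp [pt3]

lemma vert_card {n : ℕ} (hn : 1 ≤ n) : (cubeK n hn).vertices.ncard = (2 * n + 1) ^ 3 := by
  have : (cubeK n hn).vertices = emb n '' (Fintype.piFinset
      (fun _ : Fin 3 => Finset.Icc (0 : ℤ) (2 * n)) : Finset Z3) := by
    ext x
    rw [vert_iff]
    simp only [Set.mem_image, Finset.mem_coe, Fintype.mem_piFinset, Finset.mem_Icc]
  rw [this, Set.ncard_image_of_injective _ (emb_inj hn), Set.ncard_coe_finset, Fintype.card_piFinset]
  simp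
  norm_cast

lemma faces_fin {n : ℕ} (hn : 1 ≤ n) : (cubeK n hn).faces.Finite := by
  refine ((Finset.finite_toSet ((Fintype.piFinset
      (fun _ : Fin 3 => Finset.Icc (0 : ℤ) (2 * n)) : Finset Z3).powerset)).image
        (fun s => s.image (emb n))).subset ?_
  rintro S ⟨s, hs, rfl⟩
  refine ⟨s, ?_, rfl⟩
  rw [Finset.mem_coe, Finset.mem_powerset]
  intro v hv
  rw [Fintype.mem_piFinset]
  intro i
  exact Finset.mem_Icc.2 (grid_bd hs hv i)

lemma translate_face {n : ℕ} (l : Fin 3) {s : Finset Z3} {a : ℤ}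
    (hs : IFc n s) (b : ℤ) (hab : a = 0 ∧ b = 2 * n ∨ a = 2 * n ∧ b = 0) (hl : ∀ v ∈ s, v l = a) :
    IFc n (s.image (fun v => v + Pi.single l (b - a))) := by
  obtain ⟨h0, ⟨c, h1, h2⟩, h3⟩ := hs
  refine ⟨h0.image _, ⟨fun i => if i = l then (if b = 0 then 0 else 2 * n - 1) else c i, ?_, ?_⟩, ?_⟩
  · intro i
    have := h1 i
    dsimp only
    split_ifs <;> omega
  · intro w hw i
    obtain ⟨v, hv, rfl⟩ := Finset.mem_image.1 hw
    have q1 := h2 v hv i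
    have q2 := hl v hv
    have q3 := h1 i
    by_cases hi : i = l
    · subst hi
      simp only [if_true, Pi.add_apply, Pi.single_eq_same]
      split_ifs <;> omega
    · simpa [hi] using q1
  · intro w hw ho w' hw'
    obtain ⟨v, hv, rfl⟩ := Finset.mem_image.1 hw
    obtain ⟨v', hv', rfl⟩ := Finset.mem_image.1 hw'
    have := h3 v hv ?_ v' hv'
    · simpa using this
    · have : ∃ k : ℤ, b - a = 2 * k := by
        rcases hab with h | h
        · exact ⟨n, by omega⟩
        · exact ⟨-n, by omega⟩
      obtain ⟨k, hk⟩ := this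
      rw [hk] at ho
      fin_cases l <;> simp at ho <;> omega

lemma emb_translate {n : ℕ} (hn : 1 ≤ n) (l : Fin 3) (v : Z3) :
    emb n v + EuclideanSpace.single l (1 : ℝ) = emb n (v + Pi.single l (2 * (n : ℤ))) := by
  have hn0 : (n : ℝ) ≠ 0 := by positivity
  ext i
  rw [PiLp.add_apply, emb_apply, emb_apply]
  by_cases h : i = l
  · subst h
    simp
    field_simp
  · simp [h]

lemma bij_aux {n : ℕ} (hn : 1 ≤ n) (l : Fin 3) : Set.BijOn
        (fun s : Finset (EuclideanSpace ℝ (Fin 3)) =>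
          s.image (fun x => x + EuclideanSpace.single l (1 : ℝ)))
        {s | s ∈ (cubeK n hn).faces ∧ ∀ x ∈ s, x l = 0}
        {s | s ∈ (cubeK n hn).faces ∧ ∀ x ∈ s, x l = 1} := by
  have hn0 : (n : ℝ) ≠ 0 := by positivity
  refine ⟨?_, ?_, ?_⟩
  · rintro S ⟨⟨s, hs, rfl⟩, h0⟩
    refine ⟨⟨s.image (fun v => v + Pi.single l (2 * (n : ℤ) - 0)), ?_, ?_⟩, ?_⟩
    · refine translate_face (a := 0) l hs (2 * (n : ℤ)) (Or.inl ⟨rfl, rfl⟩) fun v hv => ?_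
      have := h0 _ (Finset.mem_image_of_mem _ hv)
      rw [emb_apply] at this
      field_simp at this
      exact_mod_cast this
    · simp only [Finset.image_image]
      refine Finset.image_congr fun v _ => ?_
      simp only [Function.comp, emb_translate hn, sub_zero]
    · intro x hx
      obtain ⟨y, hy, rfl⟩ := Finset.mem_image.1 hx
      have := h0 y hy
      simp [this]
  · exact (Finset.image_injective (add_left_injective _)).injOn
  · rintro S ⟨⟨s, hs, rfl⟩, h0⟩
    have hl : ∀ v ∈ s, v l = 2 * n := by
      intro v hv
      have := h0 _ (Finset.mem_image_of_mem _ hv)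
      rw [emb_apply] at this
      field_simp at this
      exact_mod_cast this
    refine ⟨(s.image (fun v => v + Pi.single l (0 - 2 * (n : ℤ)))).image (emb n), ⟨⟨_,
      translate_face (a := 2 * (n : ℤ)) l hs 0 (Or.inr ⟨rfl, rfl⟩) hl, rfl⟩, ?_⟩, ?_⟩
    · intro x hx
      simp only [Finset.mem_image] at hx
      obtain ⟨_, ⟨v, hv, rfl⟩, rfl⟩ := hx
      rw [emb_apply]
      simp [hl v hv]
    · simp only [Finset.image_image]
      refine Finset.image_congr fun v _ => ?_
      simp only [Function.comp, emb_translate hn]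
      congr 1
      rw [add_assoc, ← Pi.single_add]
      simp

lemma cov4 {n : ℕ} (hn : 1 ≤ n) (x : E3) (c v1 v2 v3 v4 : Z3)
    (hc : ∀ i, 0 ≤ c i ∧ c i + 1 ≤ 2 * (n : ℤ))
    (hin : InCube c v1 ∧ InCube c v2 ∧ InCube c v3 ∧ InCube c v4)
    (hcl : ∀ v ∈ ({v1, v2, v3, v4} : Finset Z3), (v 0 + v 1 + v 2) % 2 = 1 →
      ∀ w ∈ ({v1, v2, v3, v4} : Finset Z3),
      (v 0 - w 0).natAbs + (v 1 - w 1).natAbs + (v 2 - w 2).natAbs ≤ 1)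
    (w1 w2 w3 w4 : ℝ) (h1 : 0 ≤ w1) (h2 : 0 ≤ w2) (h3 : 0 ≤ w3) (h4 : 0 ≤ w4)
    (hsum : w1 + w2 + w3 + w4 = 1)
    (h0x : x 0 * (2 * n) = w1 * v1 0 + w2 * v2 0 + w3 * v3 0 + w4 * v4 0)
    (h1x : x 1 * (2 * n) = w1 * v1 1 + w2 * v2 1 + w3 * v3 1 + w4 * v4 1)
    (h2x : x 2 * (2 * n) = w1 * v1 2 + w2 * v2 2 + w3 * v3 2 + w4 * v4 2) :
    x ∈ (cubeK n hn).space := by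
  rw [Geometry.SimplicialComplex.mem_space_iff]
  have hs : IFc n {v1, v2, v3, v4} := by
    refine ⟨by simp, ⟨c, hc, ?_⟩, hcl⟩
    intro v hv
    simp only [Finset.mem_insert, Finset.mem_singleton] at hv
    rcases hv with rfl | rfl | rfl | rfl
    · exact hin.1
    · exact hin.2.1
    · exact hin.2.2.1
    · exact hin.2.2.2
  refine ⟨_, ⟨_, hs, rfl⟩, ?_⟩
  have hn0 : (n : ℝ) ≠ 0 := by positivity
  have hx : x = ∑ i : Fin 4, ![w1, w2, w3, w4] i • ![emb n v1, emb n v2, emb n v3, emb n v4] i := by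
    have key : ∀ (y : ℝ) (p q r s : ℤ), y * (2 * n) = w1 * p + w2 * q + w3 * r + w4 * s →
      y = w1 * (p / (2 * n)) + w2 * (q / (2 * n)) + w3 * (r / (2 * n)) + w4 * (s / (2 * n)) := by
      intro y p q r s h
      field_simp
      linarith
    rw [Fin.sum_univ_four]
    ext i
    simp only [PiLp.add_apply, PiLp.smul_apply, Matrix.cons_val, emb_apply, smul_eq_mul]
    fin_cases i
    · exact key _ _ _ _ _ h0x
    · exact key _ _ _ _ _ h1x
    · exact key _ _ _ _ _ h2x
  rw [hx]
  refine (convex_convexHull ℝ _).sum_mem ?_ ?_ ?_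
  · intro i _
    fin_cases i <;> assumption
  · rw [Fin.sum_univ_four]; exact hsum
  · intro i _
    refine subset_convexHull ℝ _ (Finset.mem_coe.2 ?_)
    fin_cases i
    · exact Finset.mem_image_of_mem _ (by simp)
    · exact Finset.mem_image_of_mem _ (by simp)
    · exact Finset.mem_image_of_mem _ (by simp)
    · exact Finset.mem_image_of_mem _ (by simp)

lemma cover_local {n : ℕ} (hn : 1 ≤ n) (x : E3) (c : Z3)
    (hc : ∀ i, 0 ≤ c i ∧ c i + 1 ≤ 2 * (n : ℤ)) (a e : ℤ)
    (hae : (e = 1 ∧ a = c 0 ∧ (c 0 + c 1 + c 2) % 2 = 0) ∨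
      (e = -1 ∧ a = c 0 + 1 ∧ (c 0 + c 1 + c 2) % 2 = 1))
    (t0 t1 t2 : ℝ) (p0 : 0 ≤ t0) (q0 : t0 ≤ 1) (p1 : 0 ≤ t1) (q1 : t1 ≤ 1) (p2 : 0 ≤ t2) (q2 : t2 ≤ 1)
    (h0 : x 0 * (2 * n) = a + e * t0) (h1 : x 1 * (2 * n) = c 1 + t1)
    (h2 : x 2 * (2 * n) = c 2 + t2) : x ∈ (cubeK n hn).space := by
  by_cases c0 : t1 + t2 ≤ t0
  · refine cov4 hn x c ![a + e, c 1, c 2] ![a, c 1, c 2] ![a + e, c 1 + 1, c 2]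
      ![a + e, c 1, c 2 + 1] hc ?_ ?_ (t0 - t1 - t2) (1 - t0) t1 t2 (by linarith) (by linarith)
      (by linarith) (by linarith) (by ring) ?_ ?_ ?_
    · simp only [incube_iff, Matrix.cons_val]; omega
    · simp only [Finset.forall_mem_insert, Finset.mem_singleton, forall_eq, Matrix.cons_val]; omega
    · rw [h0]; simp only [Matrix.cons_val]; push_cast; ring
    · rw [h1]; simp only [Matrix.cons_val]; push_cast; ring
    · rw [h2]; simp only [Matrix.cons_val]; push_cast; ring
  by_cases c1 : t0 + t2 ≤ t1
  · refine cov4 hn x c ![a, c 1 + 1, c 2] ![a, c 1, c 2] ![a + e, c 1 + 1, c 2]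
      ![a, c 1 + 1, c 2 + 1] hc ?_ ?_ (t1 - t0 - t2) (1 - t1) t0 t2 (by linarith) (by linarith)
      (by linarith) (by linarith) (by ring) ?_ ?_ ?_
    · simp only [incube_iff, Matrix.cons_val]; omega
    · simp only [Finset.forall_mem_insert, Finset.mem_singleton, forall_eq, Matrix.cons_val]; omega
    · rw [h0]; simp only [Matrix.cons_val]; push_cast; ring
    · rw [h1]; simp only [Matrix.cons_val]; push_cast; ring
    · rw [h2]; simp only [Matrix.cons_val]; push_cast; ring
  by_cases c2 : t0 + t1 ≤ t2
  · refine cov4 hn x c ![a, c 1, c 2 + 1] ![a, c 1, c 2] ![a + e, c 1, c 2 + 1]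
      ![a, c 1 + 1, c 2 + 1] hc ?_ ?_ (t2 - t0 - t1) (1 - t2) t0 t1 (by linarith) (by linarith)
      (by linarith) (by linarith) (by ring) ?_ ?_ ?_
    · simp only [incube_iff, Matrix.cons_val]; omega
    · simp only [Finset.forall_mem_insert, Finset.mem_singleton, forall_eq, Matrix.cons_val]; omega
    · rw [h0]; simp only [Matrix.cons_val]; push_cast; ring
    · rw [h1]; simp only [Matrix.cons_val]; push_cast; ring
    · rw [h2]; simp only [Matrix.cons_val]; push_cast; ring
  by_cases c3 : 2 ≤ t0 + t1 + t2
  · refine cov4 hn x c ![a + e, c 1 + 1, c 2 + 1] ![a + e, c 1 + 1, c 2] ![a + e, c 1, c 2 + 1]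
      ![a, c 1 + 1, c 2 + 1] hc ?_ ?_ (t0 + t1 + t2 - 2) (1 - t2) (1 - t1) (1 - t0)
      (by linarith) (by linarith) (by linarith) (by linarith) (by ring) ?_ ?_ ?_
    · simp only [incube_iff, Matrix.cons_val]; omega
    · simp only [Finset.forall_mem_insert, Finset.mem_singleton, forall_eq, Matrix.cons_val]; omega
    · rw [h0]; simp only [Matrix.cons_val]; push_cast; ring
    · rw [h1]; simp only [Matrix.cons_val]; push_cast; ring
    · rw [h2]; simp only [Matrix.cons_val]; push_cast; ring
  · refine cov4 hn x c ![a, c 1, c 2] ![a + e, c 1 + 1, c 2] ![a + e, c 1, c 2 + 1]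
      ![a, c 1 + 1, c 2 + 1] hc ?_ ?_ (1 - (t0 + t1 + t2) / 2) ((t0 + t1 - t2) / 2)
      ((t0 + t2 - t1) / 2) ((t1 + t2 - t0) / 2)
      (by linarith) (by linarith) (by linarith) (by linarith) (by ring) ?_ ?_ ?_
    · simp only [incube_iff, Matrix.cons_val]; omega
    · simp only [Finset.forall_mem_insert, Finset.mem_singleton, forall_eq, Matrix.cons_val]; omega
    · rw [h0]; simp only [Matrix.cons_val]; push_cast; ring
    · rw [h1]; simp only [Matrix.cons_val]; push_cast; ring
    · rw [h2]; simp only [Matrix.cons_val]; push_cast; ring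

lemma space_aux {n : ℕ} (hn : 1 ≤ n) : (cubeK n hn).space = unitCube := by
  have hn0 : (0 : ℝ) < n := by exact_mod_cast hn
  apply Set.Subset.antisymm
  · intro x hx
    rw [Geometry.SimplicialComplex.mem_space_iff] at hx
    obtain ⟨S, ⟨s, hs, rfl⟩, hx⟩ := hx
    refine convexHull_min (t := unitCube) ?_ ?_ hx
    · intro y hy
      rw [Finset.mem_coe, Finset.mem_image] at hy
      obtain ⟨v, hv, rfl⟩ := hy
      intro i
      have := grid_bd hs hv i
      have g0 : (0 : ℝ) ≤ v i := by exact_mod_cast this.1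
      have g1 : (v i : ℝ) ≤ 2 * n := by exact_mod_cast this.2
      rw [emb_apply]
      exact ⟨by positivity, by rw [div_le_one (by positivity)]; exact g1⟩
    · intro y hy z hz a b ha hb hab i
      have := (convex_Icc (0 : ℝ) 1) (hy i) (hz i) ha hb hab
      simpa using this
  · intro x hx
    have key : ∀ y : ℝ, 0 ≤ y → y ≤ 1 → ∃ c : ℤ, (0 ≤ c ∧ c + 1 ≤ 2 * (n : ℤ)) ∧
        (c : ℝ) ≤ y * (2 * n) ∧ y * (2 * n) ≤ c + 1 := by
      intro y h0 h1
      by_cases h : y = 1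
      · refine ⟨2 * n - 1, by omega, ?_⟩
        subst h
        push_cast
        constructor <;> linarith
      · have hlt : y * (2 * n) < 2 * n := by
          have : y < 1 := lt_of_le_of_ne h1 h
          nlinarith
        refine ⟨⌊y * (2 * n)⌋, ⟨Int.floor_nonneg.2 (by positivity), ?_⟩, Int.floor_le _,
          (Int.lt_floor_add_one _).le⟩
        have : ⌊y * (2 * n)⌋ < 2 * (n : ℤ) := Int.floor_lt.2 (by push_cast; exact hlt)
        omega
    choose c hc using fun i => key (x i) (hx i).1 (hx i).2
    have d0 := (hc 0).2
    have d1 := (hc 1).2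
    have d2 := (hc 2).2
    rcases Int.emod_two_eq_zero_or_one (c 0 + c 1 + c 2) with h | h
    · refine cover_local hn x c (fun i => (hc i).1) (c 0) 1 (Or.inl ⟨rfl, rfl, h⟩)
        (x 0 * (2 * n) - c 0) (x 1 * (2 * n) - c 1) (x 2 * (2 * n) - c 2)
        ?_ ?_ ?_ ?_ ?_ ?_ ?_ ?_ ?_ <;> push_cast <;> linarith
    · refine cover_local hn x c (fun i => (hc i).1) (c 0 + 1) (-1) (Or.inr ⟨rfl, rfl, h⟩)
        (c 0 + 1 - x 0 * (2 * n)) (x 1 * (2 * n) - c 1) (x 2 * (2 * n) - c 2)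
        ?_ ?_ ?_ ?_ ?_ ?_ ?_ ?_ ?_ <;> push_cast <;> linarith

abbrev Q3 := Fin 2 × Fin 2 × Fin 2

def goodP (b : ℕ) (S : Finset Q3) : Prop :=
  ∀ v ∈ S, (v.1.val + v.2.1.val + v.2.2.val + b) % 2 = 1 → ∀ w ∈ S,
    (v.1.val - w.1.val) + (w.1.val - v.1.val) + ((v.2.1.val - w.2.1.val) + (w.2.1.val - v.2.1.val))
     + ((v.2.2.val - w.2.2.val) + (w.2.2.val - v.2.2.val)) ≤ 1

instance (b : ℕ) : DecidablePred (goodP b) := fun S => by unfold goodP; infer_instance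

def good (b : ℕ) : Finset (Finset Q3) := (Finset.univ.powersetCard 4).filter (goodP b)

set_option maxRecDepth 100000 in
lemma good_card0 : (good 0).card = 5 := by decide +kernel
set_option maxRecDepth 100000 in
lemma good_card1 : (good 1).card = 5 := by decide +kernel

lemma good_span0 : ∀ S ∈ good 0, (∃ v ∈ S, v.1 = 0) ∧ (∃ v ∈ S, v.2.1 = 0) ∧ (∃ v ∈ S, v.2.2 = 0) := by
  decide +kernel
lemma good_span1 : ∀ S ∈ good 1, (∃ v ∈ S, v.1 = 0) ∧ (∃ v ∈ S, v.2.1 = 0) ∧ (∃ v ∈ S, v.2.2 = 0) := by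
  decide +kernel

lemma good_facts (c : Z3) : (good ((c 0 + c 1 + c 2) % 2).toNat).card = 5 ∧
    ∀ S ∈ good ((c 0 + c 1 + c 2) % 2).toNat,
      (∃ v ∈ S, v.1 = 0) ∧ (∃ v ∈ S, v.2.1 = 0) ∧ (∃ v ∈ S, v.2.2 = 0) := by
  rcases Int.emod_two_eq_zero_or_one (c 0 + c 1 + c 2) with h | h <;> rw [h]
  · exact ⟨good_card0, good_span0⟩
  · exact ⟨good_card1, good_span1⟩

def shiftP (c : Z3) (q : Q3) : Z3 := ![c 0 + (q.1.val : ℤ), c 1 + (q.2.1.val : ℤ), c 2 + (q.2.2.val : ℤ)]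

lemma shiftP_inj (c : Z3) : Function.Injective (shiftP c) := by
  rintro ⟨a1, a2, a3⟩ ⟨b1, b2, b3⟩ h
  have h0 := congrFun h 0
  have h1 := congrFun h 1
  have h2 := congrFun h 2
  simp only [shiftP, Matrix.cons_val] at h0 h1 h2
  simp only [Prod.mk.injEq, Fin.ext_iff]
  omega

lemma goodP_iff (c : Z3) (S : Finset Q3) : goodP ((c 0 + c 1 + c 2) % 2).toNat S ↔
    ∀ v ∈ S.image (shiftP c), (v 0 + v 1 + v 2) % 2 = 1 → ∀ w ∈ S.image (shiftP c),
    (v 0 - w 0).natAbs + (v 1 - w 1).natAbs + (v 2 - w 2).natAbs ≤ 1 := by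
  simp only [Finset.forall_mem_image, goodP]
  refine forall₂_congr fun v hv => ?_
  simp only [shiftP, Matrix.cons_val]
  refine imp_congr (by omega) (forall₂_congr fun w hw => by omega)

noncomputable def cubes (n : ℕ) : Finset Z3 := Fintype.piFinset (fun _ : Fin 3 => Finset.Ico (0 : ℤ) (2 * n))

noncomputable def tets (n : ℕ) : Finset (Finset Z3) := (cubes n).biUnion fun c =>
  (good ((c 0 + c 1 + c 2) % 2).toNat).image (fun S => S.image (shiftP c))

lemma mem_tets (n : ℕ) (s : Finset Z3) : s ∈ tets n ↔ IFc n s ∧ s.card = 4 := by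
  simp only [tets, Finset.mem_biUnion, cubes, Fintype.mem_piFinset, Finset.mem_Ico, Finset.mem_image,
    good, Finset.mem_filter, Finset.mem_powersetCard]
  constructor
  · rintro ⟨c, hc, S, ⟨⟨-, hS4⟩, hS⟩, rfl⟩
    have h4 : (S.image (shiftP c)).card = 4 := by
      rw [Finset.card_image_of_injective _ (shiftP_inj c), hS4]
    refine ⟨⟨?_, ⟨c, fun i => by have := hc i; omega, ?_⟩, (goodP_iff c S).1 hS⟩, h4⟩
    · rw [← Finset.card_pos, h4]; norm_num
    · intro v hv
      obtain ⟨q, -, rfl⟩ := Finset.mem_image.1 hv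
      simp only [incube_iff, shiftP, Matrix.cons_val]
      omega
  · rintro ⟨⟨-, ⟨c, hc, hin⟩, hcl⟩, h4⟩
    have him : (Finset.univ.filter (fun q => shiftP c q ∈ s)).image (shiftP c) = s := by
      ext v
      simp only [Finset.mem_image, Finset.mem_filter, Finset.mem_univ, true_and]
      constructor
      · rintro ⟨q, hq, rfl⟩; exact hq
      · intro hv
        have := (incube_iff _ _).1 (hin v hv)
        have hq : shiftP c (⟨(v 0 - c 0).toNat, by omega⟩, ⟨(v 1 - c 1).toNat, by omega⟩,
            ⟨(v 2 - c 2).toNat, by omega⟩) = v := by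
          funext i
          fin_cases i <;> simp [shiftP] <;> omega
        exact ⟨_, by rw [hq]; exact hv, hq⟩
    refine ⟨c, fun i => by have := hc i; omega, _, ⟨⟨Finset.subset_univ _, ?_⟩, ?_⟩, him⟩
    · rw [← Finset.card_image_of_injective _ (shiftP_inj c), him, h4]
    · rw [goodP_iff, him]
      exact hcl

lemma tets_card (n : ℕ) : (tets n).card = 5 * (2 * n) ^ 3 := by
  have h1 : ∀ c ∈ cubes n, ((good ((c 0 + c 1 + c 2) % 2).toNat).image
      (fun S => S.image (shiftP c))).card = 5 := by
    intro c _
    rw [Finset.card_image_of_injective _ (Finset.image_injective (shiftP_inj c)), (good_facts c).1]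
  rw [tets, Finset.card_biUnion, Finset.sum_congr rfl h1]
  · simp only [Finset.sum_const, cubes, Fintype.card_piFinset]
    simp
    norm_cast
    ring
  · intro c _ c' _ hne
    rw [Function.onFun, Finset.disjoint_left]
    intro s hs hs'
    apply hne
    obtain ⟨S, hS, rfl⟩ := Finset.mem_image.1 hs
    obtain ⟨S', hS', h⟩ := Finset.mem_image.1 hs'
    have le : ∀ (c c' : Z3) (S S' : Finset Q3), S ∈ good ((c 0 + c 1 + c 2) % 2).toNat →
        S.image (shiftP c) = S'.image (shiftP c') → c' 0 ≤ c 0 ∧ c' 1 ≤ c 1 ∧ c' 2 ≤ c 2 := by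
      intro c c' S S' hS h
      obtain ⟨⟨q0, hq0, e0⟩, ⟨q1, hq1, e1⟩, ⟨q2, hq2, e2⟩⟩ := (good_facts c).2 S hS
      have key : ∀ q ∈ S, ∃ q', shiftP c' q' = shiftP c q := by
        intro q hq
        have := Finset.mem_image_of_mem (shiftP c) hq
        rw [h] at this
        obtain ⟨q', -, hq'⟩ := Finset.mem_image.1 this
        exact ⟨q', hq'⟩
      obtain ⟨r0, f0⟩ := key q0 hq0
      obtain ⟨r1, f1⟩ := key q1 hq1
      obtain ⟨r2, f2⟩ := key q2 hq2
      have g0 := congrFun f0 0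
      have g1 := congrFun f1 1
      have g2 := congrFun f2 2
      simp only [shiftP, Matrix.cons_val, e0, e1, e2, Fin.val_zero] at g0 g1 g2
      omega
    have a1 := le c c' S S' hS h.symm
    have a2 := le c' c S' S hS' h
    funext i
    fin_cases i
    · exact le_antisymm a2.1 a1.1
    · exact le_antisymm a2.2.1 a1.2.1
    · exact le_antisymm a2.2.2 a1.2.2

lemma count_aux {n : ℕ} (hn : 1 ≤ n) :
    {s ∈ (cubeK n hn).faces | s.card = 4}.ncard = 5 * (2 * n) ^ 3 := by
  have : {s ∈ (cubeK n hn).faces | s.card = 4} = (fun s => s.image (emb n)) '' (tets n : Set (Finset Z3)) := by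
    ext S
    constructor
    · rintro ⟨⟨s, hs, rfl⟩, h4⟩
      rw [Finset.card_image_of_injective _ (emb_inj hn)] at h4
      exact ⟨s, Finset.mem_coe.2 ((mem_tets n s).2 ⟨hs, h4⟩), rfl⟩
    · rintro ⟨s, hs, rfl⟩
      obtain ⟨h1, h2⟩ := (mem_tets n s).1 (Finset.mem_coe.1 hs)
      refine ⟨⟨s, h1, rfl⟩, ?_⟩
      dsimp only
      rw [Finset.card_image_of_injective _ (emb_inj hn), h2]
  rw [this, Set.ncard_image_of_injective _ (Finset.image_injective (emb_inj hn)),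
    Set.ncard_coe_finset, tets_card]

/-- For every `n ≥ 1` there is a finite geometric simplicial complex triangulating the unit
cube `[0,1]³` whose vertex set is the grid `{(i/2n, j/2n, k/2n) : 0 ≤ i,j,k ≤ 2n}`
(so it has `(2n+1)³` vertices), with exactly `5·(2n)³` three-dimensional simplices,
every simplex of diameter at most `1/(n√2)`, and such that for each coordinate direction
`l`, translation by the standard basis vector `e_l` maps the simplices contained in the
face `{x_l = 0}` bijectively onto the simplices contained in the opposite face `{x_l = 1}`.
(Identifying opposite faces yields a triangulation of the 3-torus `T³ = ℝ³/ℤ³` with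
`8n³` vertices and `40n³` tetrahedra.) -/
theorem cube_triangulation_mesh_small (n : ℕ) (hn : 1 ≤ n) :
    ∃ K : Geometry.SimplicialComplex ℝ (EuclideanSpace ℝ (Fin 3)),
      K.faces.Finite ∧
      -- (i) the space of the complex is the unit cube
      K.space = unitCube ∧
      -- (ii) the vertices are exactly the grid points
      K.vertices = {x | ∃ i j k : ℕ, i ≤ 2 * n ∧ j ≤ 2 * n ∧ k ≤ 2 * n ∧
        x = pt3 ((i : ℝ) / (2 * n)) ((j : ℝ) / (2 * n)) ((k : ℝ) / (2 * n))} ∧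
      K.vertices.ncard = (2 * n + 1) ^ 3 ∧
      -- (iii) exactly `5·(2n)³` three-dimensional simplices
      {s ∈ K.faces | s.card = 4}.ncard = 5 * (2 * n) ^ 3 ∧
      -- (iv) every simplex has diameter at most `1/(n√2)`
      (∀ s ∈ K.faces, Metric.diam (convexHull ℝ (s : Set (EuclideanSpace ℝ (Fin 3))))
        ≤ 1 / (n * Real.sqrt 2)) ∧
      -- (v) translation by `e_l` maps the simplices in the face `{x_l = 0}` bijectively
      -- onto the simplices in the face `{x_l = 1}`
      (∀ l : Fin 3, Set.BijOn
        (fun s : Finset (EuclideanSpace ℝ (Fin 3)) =>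
          s.image (fun x => x + EuclideanSpace.single l (1 : ℝ)))
        {s | s ∈ K.faces ∧ ∀ x ∈ s, x l = 0}
        {s | s ∈ K.faces ∧ ∀ x ∈ s, x l = 1}) := by
  exact ⟨cubeK n hn, faces_fin hn, space_aux hn, vert_eq hn, vert_card hn, count_aux hn,
    fun s hs => by
      obtain ⟨s, hs, rfl⟩ := hs
      exact diam_aux hn hs,
    fun l => bij_aux hn l⟩
end

section
/- There exists a finite geometric simplicial complex K in ℝ³ such that: (a) the union of the simplices of K is the unit cube [0,1]³; (b) K has exactly 77 vertices, of which 64 are exactly the points {(i/3, j/3, k/3) : 0 ≤ i, j, k ≤ 3} and the remaining 13 belong to the 27-element set {((2i+1)/6, (2j+1)/6, (2k+1)/6) : 0 ≤ i, j, k ≤ 2}; (c) each of the six closed 2-dimensional faces of the cube [0,1]³ contains exactly 16 vertices of K; (d) K has exactly 202 three-dimensional simplices, 458 two-dimensional simplices and 332 one-dimensional simplices; (e) every simplex of K has diameter at most √2/3; and (f) for each coordinate l ∈ {1,2,3}, translation by the standard basis vector e_l maps the set of simplices of K contained in the face {x ∈ [0,1]³ : x_l = 0} bijectively onto the set of simplices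 of K contained in the opposite face {x ∈ [0,1]³ : x_l = 1}. -/
open scoped Classical

/-- The grid of the `64` points `(i/3, j/3, k/3)`, `0 ≤ i,j,k ≤ 3`. -/
def thirdGrid : Set (EuclideanSpace ℝ (Fin 3)) :=
  {x | ∃ i j k : ℕ, i ≤ 3 ∧ j ≤ 3 ∧ k ≤ 3 ∧
    x = pt3 ((i : ℝ) / 3) ((j : ℝ) / 3) ((k : ℝ) / 3)}

/-- The `27` centers `((2i+1)/6, (2j+1)/6, (2k+1)/6)`, `0 ≤ i,j,k ≤ 2`. -/
def centerGrid : Set (EuclideanSpace ℝ (Fin 3)) :=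
  {x | ∃ i j k : ℕ, i ≤ 2 ∧ j ≤ 2 ∧ k ≤ 2 ∧
    x = pt3 ((2 * i + 1 : ℝ) / 6) ((2 * j + 1 : ℝ) / 6) ((2 * k + 1 : ℝ) / 6)}


namespace CT

/-- Local tetrahedra of the five cube types. -/
def typ : ℕ → List (List ℕ)
  | 0 =>
    [[0, 2, 66, 2050], [0, 64, 66, 2112], [0, 66, 2050, 2112], [0, 2048, 2050, 2112],
     [66, 2050, 2112, 2114]]
  | 1 =>
    [[0, 2, 64, 2048], [2, 64, 66, 2114], [2, 64, 2048, 2114], [2, 2048, 2050, 2114],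
     [64, 2048, 2112, 2114]]
  | 2 =>
    [[0, 2, 66, 2050], [0, 64, 66, 2112], [0, 66, 1057, 2050], [0, 66, 1057, 2112],
     [0, 1057, 2050, 2112], [0, 2048, 2050, 2112], [66, 1057, 2050, 2112], [66, 2050, 2112, 2114]]
  | 3 =>
    [[0, 2, 64, 2048], [2, 64, 66, 1057], [2, 64, 1057, 2048], [2, 66, 1057, 2050],
     [2, 1057, 2048, 2050], [64, 66, 1057, 2112], [64, 1057, 2048, 2112], [66, 1057, 2050, 2112],
     [66, 2050, 2112, 2114], [1057, 2048, 2050, 2112]]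
  | _ =>
    [[0, 2, 64, 1057], [0, 2, 1057, 2048], [0, 64, 1057, 2048], [2, 64, 66, 1057],
     [2, 66, 1057, 2050], [2, 1057, 2048, 2050], [64, 66, 1057, 2112], [64, 1057, 2048, 2112],
     [66, 1057, 2050, 2114], [66, 1057, 2112, 2114], [1057, 2048, 2050, 2112],
     [1057, 2050, 2112, 2114]]

/-- Local circuits of the five cube types. -/
def circ : ℕ → List (List ℕ × List ℕ)
  | 0 =>
    [([2048, 64], [0, 2112]), ([2, 2114], [2050, 66]), ([2048, 2], [0, 2050]),
     ([64, 2114], [2112, 66]), ([64, 2], [0, 66]), ([2048, 2114], [2112, 2050]),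
     ([66, 2048, 2048], [2050, 2112, 0]), ([2050, 64, 64], [66, 0, 2112]),
     ([2112, 2, 2], [0, 66, 2050]), ([0, 2114, 2114], [2112, 2050, 66])]
  | 1 =>
    [([0, 2112], [2048, 64]), ([2050, 66], [2, 2114]), ([0, 2050], [2048, 2]),
     ([2112, 66], [64, 2114]), ([0, 66], [64, 2]), ([2112, 2050], [2048, 2114]),
     ([2114, 0, 0], [2, 64, 2048]), ([2, 2112, 2112], [2114, 2048, 64]),
     ([64, 2050, 2050], [2048, 2114, 2]), ([2048, 66, 66], [64, 2, 2114])]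
  | 2 =>
    [([0, 2114], [1057, 1057]), ([2048, 66], [1057, 1057]), ([64, 2050], [1057, 1057]),
     ([2112, 2], [1057, 1057]), ([0, 2112, 2050, 66], [1057, 1057, 1057, 1057]),
     ([2048, 64, 2, 2114], [1057, 1057, 1057, 1057]), ([2, 64, 2048], [0, 1057, 1057]),
     ([2114, 2048, 64], [2112, 1057, 1057]), ([2048, 2114, 2], [2050, 1057, 1057]),
     ([64, 2, 2114], [66, 1057, 1057]), ([2048, 64], [0, 2112]), ([2, 2114], [2050, 66]),
     ([2048, 2], [0, 2050]), ([64, 2114], [2112, 66]), ([64, 2], [0, 66]),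
     ([2048, 2114], [2112, 2050]), ([2048, 1057, 1057], [2050, 2112, 0]),
     ([64, 1057, 1057], [66, 0, 2112]), ([2, 1057, 1057], [0, 66, 2050]),
     ([2114, 1057, 1057], [2112, 2050, 66])]
  | 3 =>
    [([0, 2114], [1057, 1057]), ([2048, 66], [1057, 1057]), ([64, 2050], [1057, 1057]),
     ([2112, 2], [1057, 1057]), ([0, 2112, 2050, 66], [1057, 1057, 1057, 1057]),
     ([2048, 64, 2, 2114], [1057, 1057, 1057, 1057]), ([2050, 2112, 0], [2048, 1057, 1057]),
     ([66, 0, 2112], [64, 1057, 1057]), ([2114, 2048, 64], [2112, 1057, 1057]),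
     ([0, 66, 2050], [2, 1057, 1057]), ([2048, 2114, 2], [2050, 1057, 1057]),
     ([64, 2, 2114], [66, 1057, 1057]), ([0, 2112], [2048, 64]), ([2, 2114], [2050, 66]),
     ([0, 2050], [2048, 2]), ([64, 2114], [2112, 66]), ([0, 66], [64, 2]),
     ([2048, 2114], [2112, 2050]), ([0, 1057, 1057], [2, 64, 2048]),
     ([2114, 1057, 1057], [2112, 2050, 66])]
  | _ =>
    [([0, 2114], [1057, 1057]), ([2048, 66], [1057, 1057]), ([64, 2050], [1057, 1057]),
     ([2112, 2], [1057, 1057]), ([0, 2112, 2050, 66], [1057, 1057, 1057, 1057]),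
     ([2048, 64, 2, 2114], [1057, 1057, 1057, 1057]), ([2, 64, 2048], [0, 1057, 1057]),
     ([2050, 2112, 0], [2048, 1057, 1057]), ([66, 0, 2112], [64, 1057, 1057]),
     ([2114, 2048, 64], [2112, 1057, 1057]), ([0, 66, 2050], [2, 1057, 1057]),
     ([2048, 2114, 2], [2050, 1057, 1057]), ([64, 2, 2114], [66, 1057, 1057]),
     ([2112, 2050, 66], [2114, 1057, 1057]), ([0, 2112], [2048, 64]), ([2, 2114], [2050, 66]),
     ([0, 2050], [2048, 2]), ([64, 2114], [2112, 66]), ([0, 66], [64, 2]),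
     ([2048, 2114], [2112, 2050])]

/-- The 27 small cubes: base vertex and type. -/
def cubes : List (ℕ × ℕ) :=
   [(0, 3), (2, 1), (4, 0), (64, 1), (66, 0), (68, 4), (128, 2), (130, 4), (132, 1), (2048, 1),
    (2050, 2), (2052, 4), (2112, 2), (2114, 4), (2116, 1), (2176, 3), (2178, 1), (2180, 0),
    (4096, 2), (4098, 3), (4100, 1), (4160, 3), (4162, 1), (4164, 0), (4224, 1), (4226, 0),
    (4228, 4)]

/-- Local planes. -/
def locF : List (ℕ × ℕ × ℕ × ℕ) :=
   [(1, 1, 2, 0), (1, 1, 2, 2), (1, 2, 0, 0), (1, 2, 1, 0), (1, 2, 1, 2), (1, 2, 2, 2),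
    (0, 2, 2, 2), (2, 0, 0, 0), (2, 0, 1, 0), (2, 0, 2, 0), (2, 0, 2, 2), (2, 1, 0, 0),
    (2, 1, 1, 0), (2, 1, 1, 2), (2, 1, 2, 2), (2, 2, 0, 0), (2, 2, 0, 2), (2, 2, 1, 2),
    (2, 2, 2, 2), (2, 2, 2, 4)]

/-- Planes used inside the plane `x_l = const`. -/
def plF : ℕ → List (ℕ × ℕ × ℕ × ℕ)
  | 0 =>
    [(1, 2, 1, 2), (1, 2, 1, 4), (1, 1, 2, 2), (1, 1, 2, 4), (1, 2, 2, 2), (1, 2, 2, 4),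
     (1, 2, 2, 6), (1, 2, 2, 8), (1, 2, 2, 10), (1, 2, 0, 0), (1, 2, 0, 2), (1, 0, 2, 2),
     (1, 2, 0, 4), (1, 0, 2, 4)]
  | 1 =>
    [(2, 1, 1, 2), (2, 1, 1, 4), (1, 1, 2, 2), (1, 1, 2, 4), (2, 1, 2, 2), (2, 1, 2, 4),
     (2, 1, 2, 6), (2, 1, 2, 8), (2, 1, 2, 10), (2, 1, 0, 0), (2, 1, 0, 2), (0, 1, 2, 2),
     (2, 1, 0, 4), (0, 1, 2, 4)]
  | _ =>
    [(2, 1, 1, 2), (2, 1, 1, 4), (1, 2, 1, 2), (1, 2, 1, 4), (2, 2, 1, 2), (2, 2, 1, 4),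
     (2, 2, 1, 6), (2, 2, 1, 8), (2, 2, 1, 10), (2, 0, 1, 0), (2, 0, 1, 2), (0, 2, 1, 2),
     (2, 0, 1, 4), (0, 2, 1, 4)]

/-- The triangles of the complex in the plane `x_l = v/3`. -/
def tri : ℕ → ℕ → List (List ℕ)
  | 0, 0 =>
    [[0, 64, 2048], [64, 128, 2112], [64, 2048, 2112], [128, 192, 2240], [128, 2112, 2176],
     [128, 2176, 2240], [2048, 2112, 4096], [2112, 2176, 4224], [2112, 4096, 4160],
     [2112, 4160, 4224], [2176, 2240, 4224], [2240, 4224, 4288], [4096, 4160, 6208],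
     [4096, 6144, 6208], [4160, 4224, 6208], [4224, 4288, 6272], [4224, 6208, 6272],
     [4288, 6272, 6336]]
  | 0, 1 =>
    [[2, 66, 2050], [66, 130, 2178], [66, 2050, 2114], [66, 2114, 2178], [130, 194, 2178],
     [194, 2178, 2242], [2050, 2114, 4162], [2050, 4098, 4162], [2114, 2178, 4162],
     [2178, 2242, 4226], [2178, 4162, 4226], [2242, 4226, 4290], [4098, 4162, 6146],
     [4162, 4226, 6210], [4162, 6146, 6210], [4226, 4290, 6338], [4226, 6210, 6274],
     [4226, 6274, 6338]]
  | 0, _ =>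
    [[4, 68, 2116], [4, 2052, 2116], [68, 132, 2116], [132, 196, 2180], [132, 2116, 2180],
     [196, 2180, 2244], [2052, 2116, 4100], [2116, 2180, 4164], [2116, 4100, 4164],
     [2180, 2244, 4292], [2180, 4164, 4228], [2180, 4228, 4292], [4100, 4164, 6148],
     [4164, 4228, 6276], [4164, 6148, 6212], [4164, 6212, 6276], [4228, 4292, 6276],
     [4292, 6276, 6340]]
  | 1, 0 =>
    [[0, 2, 2048], [2, 4, 2050], [2, 2048, 2050], [4, 6, 2054], [4, 2050, 2052], [4, 2052, 2054],
     [2048, 2050, 4096], [2050, 2052, 4100], [2050, 4096, 4098], [2050, 4098, 4100],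
     [2052, 2054, 4100], [2054, 4100, 4102], [4096, 4098, 6146], [4096, 6144, 6146],
     [4098, 4100, 6146], [4100, 4102, 6148], [4100, 6146, 6148], [4102, 6148, 6150]]
  | 1, 1 =>
    [[64, 66, 2112], [66, 68, 2116], [66, 2112, 2114], [66, 2114, 2116], [68, 70, 2116],
     [70, 2116, 2118], [2112, 2114, 4162], [2112, 4160, 4162], [2114, 2116, 4162],
     [2116, 2118, 4164], [2116, 4162, 4164], [2118, 4164, 4166], [4160, 4162, 6208],
     [4162, 4164, 6210], [4162, 6208, 6210], [4164, 4166, 6214], [4164, 6210, 6212],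
     [4164, 6212, 6214]]
  | 1, _ =>
    [[128, 130, 2178], [128, 2176, 2178], [130, 132, 2178], [132, 134, 2180], [132, 2178, 2180],
     [134, 2180, 2182], [2176, 2178, 4224], [2178, 2180, 4226], [2178, 4224, 4226],
     [2180, 2182, 4230], [2180, 4226, 4228], [2180, 4228, 4230], [4224, 4226, 6272],
     [4226, 4228, 6276], [4226, 6272, 6274], [4226, 6274, 6276], [4228, 4230, 6276],
     [4230, 6276, 6278]]
  | _, 0 =>
    [[0, 2, 64], [2, 4, 66], [2, 64, 66], [4, 6, 70], [4, 66, 68], [4, 68, 70], [64, 66, 128],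
     [66, 68, 132], [66, 128, 130], [66, 130, 132], [68, 70, 132], [70, 132, 134],
     [128, 130, 194], [128, 192, 194], [130, 132, 194], [132, 134, 196], [132, 194, 196],
     [134, 196, 198]]
  | _, 1 =>
    [[2048, 2050, 2112], [2050, 2052, 2116], [2050, 2112, 2114], [2050, 2114, 2116],
     [2052, 2054, 2116], [2054, 2116, 2118], [2112, 2114, 2178], [2112, 2176, 2178],
     [2114, 2116, 2178], [2116, 2118, 2180], [2116, 2178, 2180], [2118, 2180, 2182],
     [2176, 2178, 2240], [2178, 2180, 2242], [2178, 2240, 2242], [2180, 2182, 2246],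
     [2180, 2242, 2244], [2180, 2244, 2246]]
  | _, _ =>
    [[4096, 4098, 4162], [4096, 4160, 4162], [4098, 4100, 4162], [4100, 4102, 4164],
     [4100, 4162, 4164], [4102, 4164, 4166], [4160, 4162, 4224], [4162, 4164, 4226],
     [4162, 4224, 4226], [4164, 4166, 4230], [4164, 4226, 4228], [4164, 4228, 4230],
     [4224, 4226, 4288], [4226, 4228, 4292], [4226, 4288, 4290], [4226, 4290, 4292],
     [4228, 4230, 4292], [4230, 4292, 4294]]

/-- Coordinate `l` (times six) of the point with code `p`. -/
def crd (l p : ℕ) : ℕ := p / 32 ^ l % 32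

/-- All elements of `s` are in `t`. -/
def sub (s t : List ℕ) : Bool := s.all fun p => t.any fun q => Nat.beq q p

/-- The tetrahedra of a cube. -/
def tetsOf (C : ℕ × ℕ) : List (List ℕ) := (typ C.2).map (List.map (· + C.1))

/-- All tetrahedra. -/
def tets : List (List ℕ) := cubes.flatMap tetsOf

/-- Left side of a plane equation. -/
def lv (f : ℕ × ℕ × ℕ × ℕ) (b p : ℕ) : ℕ :=
  f.1 * crd 0 p + f.2.1 * crd 1 p + f.2.2.1 * crd 2 p + (crd 0 b + crd 1 b + crd 2 b)

/-- Right side of a plane equation. -/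
def rv (f : ℕ × ℕ × ℕ × ℕ) (b p : ℕ) : ℕ :=
  crd 0 p + crd 1 p + crd 2 p +
    (f.2.2.2 + (f.1 * crd 0 b + f.2.1 * crd 1 b + f.2.2.1 * crd 2 b))

def pos (f : ℕ × ℕ × ℕ × ℕ) (b : ℕ) (s : List ℕ) : Bool :=
  s.all fun p => Nat.ble (rv f b p) (lv f b p)

def neg (f : ℕ × ℕ × ℕ × ℕ) (b : ℕ) (s : List ℕ) : Bool :=
  s.all fun p => Nat.ble (lv f b p) (rv f b p)

def zer (f : ℕ × ℕ × ℕ × ℕ) (b : ℕ) (s : List ℕ) : List ℕ :=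
  s.filter fun p => Nat.beq (lv f b p) (rv f b p)

/-- Certificate that `s` and `t` intersect in a common face. -/
def good (b : ℕ) : List (ℕ × ℕ × ℕ × ℕ) → List ℕ → List ℕ → Bool
  | [], s, t => sub s t || sub t s
  | f :: fs, s, t => sub s t || (sub t s ||
      bif (pos f b s && neg f b t) || (neg f b s && pos f b t) then
        good b fs (zer f b s) (zer f b t)
      else good b fs s t)

/-- Certificate of affine independence. -/
def indep (b : ℕ) (fs : List (ℕ × ℕ × ℕ × ℕ)) : List ℕ → Bool
  | [] => true
  | p :: s => (fs.any fun f => !(Nat.beq (lv f b p) (rv f b p)) &&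
      s.all fun q => Nat.beq (lv f b q) (rv f b q)) && indep b fs s || s.isEmpty

/-- Certificate of covering. -/
def cov (T : List (List ℕ)) : List (List ℕ × List ℕ) → List ℕ → Bool
  | [], S => T.any (sub S)
  | (P, R) :: cs, S => 
      bif sub P S then
        P.all fun p => cov T cs ((S.filter fun q => !(Nat.beq q p)) ++ R)
      else cov T cs S

/-- A circuit is a relation. -/
def okc (b : ℕ) (c : List ℕ × List ℕ) : Bool :=
  Nat.beq c.1.length c.2.length && (Nat.ble 1 c.1.length &&
    [0, 1, 2].all fun l => Nat.beq ((c.1.map fun p => crd l (p + b)).sum)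
      ((c.2.map fun p => crd l (p + b)).sum))

def corners : List ℕ := [0, 2, 64, 66, 2048, 2050, 2112, 2114]

def onp (l v : ℕ) (s : List ℕ) : List ℕ := s.filter fun p => Nat.beq (crd l p) v

/-- Ordered insertion without repetition. -/
def ins (a : ℕ) : List ℕ → List ℕ
  | [] => [a]
  | b :: l => bif Nat.blt a b then a :: b :: l else bif Nat.beq a b then b :: l else b :: ins a l

def sd (l : List ℕ) : List ℕ := l.foldr ins []

def enc : List ℕ → ℕ
  | [] => 0
  | a :: l => a + 32768 * enc l

def codes (k : ℕ) : List ℕ := (tets.flatMap (List.sublistsLen k)).map enc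

theorem chk_good : (cubes.all fun C => (tetsOf C).all fun s => (tetsOf C).all fun t =>
    good C.1 locF s t) = true := by decide +kernel
theorem chk_indep : (cubes.all fun C => (tetsOf C).all fun s => indep C.1 locF s) = true := by
  decide +kernel
theorem chk_cov : ([0, 1, 2, 3, 4].all fun i => cov (typ i) (circ i) corners) = true := by
  decide +kernel
theorem chk_ty : (cubes.all fun C => [0, 1, 2, 3, 4].any fun i => Nat.beq C.2 i) = true := by
  decide +kernel
theorem chk_okc : (cubes.all fun C => (circ C.2).all (okc C.1)) = true := by decide +kernel
theorem chk_tri : ([0, 1, 2].all fun l => [1, 2].all fun v => (tri l v).all fun s =>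
    (tri l v).all fun t => good 0 (plF l) s t) = true := by decide +kernel
theorem chk_trisub : ([0, 1, 2].all fun l => [0, 1, 2].all fun v => (tri l v).all fun s =>
    tets.any (sub s)) = true := by decide +kernel
theorem chk_onp : ([0, 1, 2].all fun l => [0, 1, 2].all fun v => tets.all fun s =>
    (onp l (2 * v) s).isEmpty || (tri l v).any (sub (onp l (2 * v) s))) = true := by
  decide +kernel
theorem chk_onp6 : ([0, 1, 2].all fun l => tets.all fun s =>
    (onp l 6 s).isEmpty || (tri l 0).any fun t =>
      sub (onp l 6 s) (t.map (· + 6 * 32 ^ l))) = true := by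
  decide +kernel
theorem chk_tri6 : ([0, 1, 2].all fun l => (tri l 0).all fun s =>
    tets.any (sub (s.map (· + 6 * 32 ^ l)))) = true := by decide +kernel
theorem chk_tri0 : ([0, 1, 2].all fun l => (tri l 0).all fun s => s.all fun p =>
    Nat.beq (crd l p) 0) = true := by decide +kernel
theorem chk_box : (cubes.all fun C => (tetsOf C).all fun s => s.all fun p =>
    Nat.blt p 32768 && [0, 1, 2].all fun l => Nat.ble (crd l C.1) (crd l p) &&
      (Nat.ble (crd l p) (crd l C.1 + 2) && Nat.ble (crd l p) 6)) = true := by decide +kernel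
theorem chk_sep : (cubes.all fun C => cubes.all fun C' => Nat.beq C.1 C'.1 ||
    [0, 1, 2].any fun l => [1, 2].any fun v =>
      (Nat.ble (crd l C.1 + 2) (2 * v) && Nat.ble (2 * v) (crd l C'.1)) ||
      (Nat.ble (crd l C'.1 + 2) (2 * v) && Nat.ble (2 * v) (crd l C.1))) = true := by
  decide +kernel
theorem chk_diam : (tets.all fun s => s.all fun p => s.all fun q =>
    Nat.ble ((crd 0 p) ^ 2 + (crd 0 q) ^ 2 + (crd 1 p) ^ 2 + (crd 1 q) ^ 2 +
      (crd 2 p) ^ 2 + (crd 2 q) ^ 2)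
      (8 + 2 * (crd 0 p * crd 0 q + crd 1 p * crd 1 q + crd 2 p * crd 2 q))) = true := by
  decide +kernel
theorem chk_sorted : (tets.all fun s => match s with
    | [a, b, c, d] => Nat.blt a b && (Nat.blt b c && Nat.blt c d)
    | _ => false) = true := by decide +kernel
theorem chk_c4 : (sd (codes 4)).length = 202 := by decide +kernel
theorem chk_c3 : (sd (codes 3)).length = 458 := by decide +kernel
theorem chk_c2 : (sd (codes 2)).length = 332 := by decide +kernel

/-- Codes of the vertices. -/
def grid : List ℕ := [0, 1, 2, 3].flatMap fun k => [0, 1, 2, 3].flatMap fun j =>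
  [0, 1, 2, 3].map fun i => 2 * i + 32 * (2 * j) + 1024 * (2 * k)

def cens : List ℕ := (cubes.filter fun C => Nat.ble 2 C.2).map fun C => C.1 + 1057

theorem chk_verts : (sub tets.flatten (grid ++ cens) && sub (grid ++ cens) tets.flatten) = true := by
  decide +kernel
theorem chk_vlen : (sd (grid ++ cens)).length = 77 := by decide +kernel
theorem chk_clen : (sd cens).length = 13 := by decide +kernel
theorem chk_face : ([0, 1, 2].all fun l => [0, 6].all fun v =>
    Nat.beq (sd (onp l v (grid ++ cens))).length 16) = true := by decide +kernel
theorem chk_base : ([0, 1, 2].all fun i => [0, 1, 2].all fun j => [0, 1, 2].all fun k =>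
    cubes.any fun C => Nat.beq C.1 (2 * i + 32 * (2 * j) + 1024 * (2 * k))) = true := by
  decide +kernel
theorem chk_corner : (cubes.all fun C => [0, 1, 2].all fun l => corners.all fun p =>
    Nat.beq (crd l (p + C.1)) (crd l p + crd l C.1)) = true := by decide +kernel
theorem chk_cen : (cubes.all fun C => [0, 1, 2].any fun i => [0, 1, 2].any fun j =>
    [0, 1, 2].any fun k => Nat.beq C.1 (2 * i + 32 * (2 * j) + 1024 * (2 * k))) = true := by
  decide +kernel
theorem chk_uniq : (cubes.all fun C => cubes.all fun C' => !(Nat.beq C.1 C'.1) ||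
    Nat.beq C.2 C'.2) = true := by decide +kernel

noncomputable section

abbrev E3 := EuclideanSpace ℝ (Fin 3)

/-- The point with a given code. -/
def φ (p : ℕ) : E3 := WithLp.toLp 2 fun l : Fin 3 => (crd l p : ℝ) / 6

/-- The point set of a list of codes. -/
def φS (s : List ℕ) : Set E3 := φ '' {p | p ∈ s}

@[simp] theorem φ_apply (p : ℕ) (l : Fin 3) : φ p l = (crd l p : ℝ) / 6 := rfl

theorem sub_iff {s t : List ℕ} : sub s t = true ↔ ∀ p ∈ s, p ∈ t := by
  simp [sub]

theorem φS_mono {s t : List ℕ} (h : ∀ p ∈ s, p ∈ t) : φS s ⊆ φS t :=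
  Set.image_mono h

theorem mem_φS {s : List ℕ} {x : E3} : x ∈ φS s ↔ ∃ p ∈ s, φ p = x := Iff.rfl

/-- Linear part of a plane. -/
def lin (f : ℕ × ℕ × ℕ × ℕ) : E3 →ₗ[ℝ] ℝ where
  toFun x := ((f.1 : ℝ) - 1) * x 0 + ((f.2.1 : ℝ) - 1) * x 1 + ((f.2.2.1 : ℝ) - 1) * x 2
  map_add' x y := by simp; ring
  map_smul' c x := by simp; ring

/-- Constant of a plane. -/
def cst (f : ℕ × ℕ × ℕ × ℕ) (b : ℕ) : ℝ := lin f (φ b) + (f.2.2.2 : ℝ) / 6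

theorem lin_φ (f : ℕ × ℕ × ℕ × ℕ) (b p : ℕ) :
    6 * (lin f (φ p) - cst f b) = (lv f b p : ℝ) - (rv f b p : ℝ) := by
  simp [cst, lin, lv, rv]
  ring

theorem lin_ge {f : ℕ × ℕ × ℕ × ℕ} {b p : ℕ} : cst f b ≤ lin f (φ p) ↔ rv f b p ≤ lv f b p := by
  have := lin_φ f b p
  rw [← Nat.cast_le (α := ℝ)]
  constructor <;> intro h <;> linarith

theorem lin_le {f : ℕ × ℕ × ℕ × ℕ} {b p : ℕ} : lin f (φ p) ≤ cst f b ↔ lv f b p ≤ rv f b p := by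
  have := lin_φ f b p
  rw [← Nat.cast_le (α := ℝ)]
  constructor <;> intro h <;> linarith

theorem lin_eq {f : ℕ × ℕ × ℕ × ℕ} {b p : ℕ} : lin f (φ p) = cst f b ↔ lv f b p = rv f b p := by
  have := lin_φ f b p
  rw [← Nat.cast_inj (R := ℝ)]
  constructor <;> intro h <;> linarith

/-- Faces exposed by a linear form. -/
theorem expose (g : E3 →ₗ[ℝ] ℝ) (c : ℝ) (A : Set E3) (hA : ∀ x ∈ A, c ≤ g x) (x : E3)
    (hx : x ∈ convexHull ℝ A) : c ≤ g x ∧ (g x = c → x ∈ convexHull ℝ {y ∈ A | g y = c}) := by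
  have hc : Convex ℝ {x : E3 | c ≤ g x ∧ (g x = c → x ∈ convexHull ℝ {y ∈ A | g y = c})} := by
    intro x hx y hy a b ha hb hab
    obtain rfl : a = 1 - b := by linarith
    obtain ⟨hx1, hx2⟩ := hx
    obtain ⟨hy1, hy2⟩ := hy
    have e : g ((1 - b) • x + b • y) = (1 - b) * g x + b * g y := by simp
    refine ⟨by rw [e]; nlinarith, fun h => ?_⟩
    rw [e] at h
    rcases eq_or_lt_of_le ha with h0 | h0
    · have hb1 : b = 1 := by linarith
      subst hb1
      simp only [sub_self, zero_smul, one_smul, zero_add]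
      exact hy2 (by linarith)
    rcases eq_or_lt_of_le hb with h1 | h1
    · subst h1
      simp only [sub_zero, zero_smul, one_smul, add_zero]
      exact hx2 (by linarith)
    have gx : g x = c := by nlinarith
    have gy : g y = c := by nlinarith
    exact convex_convexHull ℝ _ (hx2 gx) (hy2 gy) ha hb hab
  have hs : A ⊆ {x : E3 | c ≤ g x ∧ (g x = c → x ∈ convexHull ℝ {y ∈ A | g y = c})} := by
    intro y hy
    exact ⟨hA y hy, fun h => subset_convexHull ℝ _ ⟨hy, h⟩⟩
  exact convexHull_min hs hc hx

theorem expose2 (g : E3 →ₗ[ℝ] ℝ) (c : ℝ) (A B : Set E3) (hA : ∀ x ∈ A, c ≤ g x)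
    (hB : ∀ x ∈ B, g x ≤ c) (x : E3)
    (hx : x ∈ convexHull ℝ A) (hx' : x ∈ convexHull ℝ B) :
    x ∈ convexHull ℝ {y ∈ A | g y = c} ∧ x ∈ convexHull ℝ {y ∈ B | g y = c} := by
  obtain ⟨h1, h2⟩ := expose g c A hA x hx
  obtain ⟨h3, h4⟩ := expose (-g) (-c) B (fun y hy => by simpa using hB y hy) x hx'
  simp only [LinearMap.neg_apply, neg_le_neg_iff, neg_inj] at h3 h4
  have h := le_antisymm h3 h1
  exact ⟨h2 h, h4 h⟩

/-- Two vertex sets meet properly. -/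
def Good (A B : Set E3) : Prop := convexHull ℝ A ∩ convexHull ℝ B ⊆ convexHull ℝ (A ∩ B)

theorem Good.symm {A B : Set E3} (h : Good A B) : Good B A := by
  unfold Good at *
  rw [Set.inter_comm B A, Set.inter_comm (convexHull ℝ B)]
  exact h

theorem zer_eq (f : ℕ × ℕ × ℕ × ℕ) (b : ℕ) (s : List ℕ) :
    {y ∈ φS s | lin f y = cst f b} = φS (zer f b s) := by
  ext y
  simp only [Set.mem_ofPred_eq, mem_φS, zer, List.mem_filter, Nat.beq_eq]
  constructor
  · rintro ⟨⟨p, hp, rfl⟩, h⟩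
    exact ⟨p, ⟨hp, lin_eq.1 h⟩, rfl⟩
  · rintro ⟨p, ⟨hp, h⟩, rfl⟩
    exact ⟨⟨p, hp, rfl⟩, lin_eq.2 h⟩

theorem pos_spec {f : ℕ × ℕ × ℕ × ℕ} {b : ℕ} {s : List ℕ} (h : pos f b s = true) :
    ∀ x ∈ φS s, cst f b ≤ lin f x := by
  rintro _ ⟨p, hp, rfl⟩
  simp only [pos, List.all_eq_true, Nat.ble_eq] at h
  exact lin_ge.2 (h p hp)

theorem neg_spec {f : ℕ × ℕ × ℕ × ℕ} {b : ℕ} {s : List ℕ} (h : neg f b s = true) :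
    ∀ x ∈ φS s, lin f x ≤ cst f b := by
  rintro _ ⟨p, hp, rfl⟩
  simp only [neg, List.all_eq_true, Nat.ble_eq] at h
  exact lin_le.2 (h p hp)

theorem Good.of_sub {A B : Set E3} (h : A ⊆ B) : Good A B := by
  unfold Good
  rw [Set.inter_eq_left.2 h]
  exact Set.inter_subset_left

theorem good_step {f : ℕ × ℕ × ℕ × ℕ} {b : ℕ} {s t : List ℕ} (h1 : pos f b s = true)
    (h2 : neg f b t = true) (h : Good (φS (zer f b s)) (φS (zer f b t))) :
    Good (φS s) (φS t) := by
  rintro x ⟨hx, hy⟩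
  have := expose2 (lin f) (cst f b) _ _ (pos_spec h1) (neg_spec h2) x hx hy
  rw [zer_eq, zer_eq] at this
  refine convexHull_mono (Set.inter_subset_inter ?_ ?_) (h this) <;>
  · apply φS_mono
    intro p hp
    exact (List.mem_filter.1 hp).1

theorem good_spec (b : ℕ) (fs : List (ℕ × ℕ × ℕ × ℕ)) : ∀ (s t : List ℕ),
    good b fs s t = true → Good (φS s) (φS t) := by
  induction fs with
  | nil =>
    intro s t h
    simp only [good, Bool.or_eq_true, sub_iff] at h
    rcases h with h | h
    · exact Good.of_sub (φS_mono h)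
    · exact (Good.of_sub (φS_mono h)).symm
  | cons f fs ih =>
    intro s t h
    simp only [good, Bool.or_eq_true, sub_iff] at h
    rcases h with h | h | h
    · exact Good.of_sub (φS_mono h)
    · exact (Good.of_sub (φS_mono h)).symm
    · by_cases hc : ((pos f b s && neg f b t) || (neg f b s && pos f b t)) = true
      · rw [hc] at h
        have := ih _ _ h
        simp only [Bool.or_eq_true, Bool.and_eq_true] at hc
        rcases hc with ⟨h1, h2⟩ | ⟨h1, h2⟩
        · exact good_step h1 h2 this
        · exact (good_step h2 h1 this.symm).symm
      · rw [Bool.not_eq_true] at hc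
        rw [hc] at h
        exact ih _ _ h

/-- Affine independence of a point set. -/
def Ind (A : Set E3) : Prop := AffineIndependent ℝ ((↑) : A → E3)

theorem Ind.mono {A B : Set E3} (h : Ind B) (hAB : A ⊆ B) : Ind A := AffineIndependent.mono h hAB

theorem Ind.hull {A A' B' : Set E3} (h : Ind A) (hf : A.Finite) (hA' : A' ⊆ A) (hB' : B' ⊆ A) :
    convexHull ℝ (A' ∩ B') = convexHull ℝ A' ∩ convexHull ℝ B' := by
  have h1 := hf.subset hA'
  have h2 := hf.subset hB'
  lift A to Finset E3 using hf
  lift A' to Finset E3 using h1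
  lift B' to Finset E3 using h2
  exact AffineIndependent.convexHull_inter h (by exact_mod_cast hA') (by exact_mod_cast hB')

theorem Good.mono {A B A' B' : Set E3} (h : Good A B) (fA : A.Finite) (fB : B.Finite) (hA : Ind A)
    (hB : Ind B) (hA' : A' ⊆ A) (hB' : B' ⊆ B) : Good A' B' := by
  rintro x ⟨hx, hy⟩
  have hxy : x ∈ convexHull ℝ (A ∩ B) := h ⟨convexHull_mono hA' hx, convexHull_mono hB' hy⟩
  have h1 : x ∈ convexHull ℝ (A' ∩ (A ∩ B)) := by
    rw [hA.hull fA hA' Set.inter_subset_left]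
    exact ⟨hx, hxy⟩
  have h2 : x ∈ convexHull ℝ (A' ∩ (A ∩ B) ∩ B') := by
    rw [hB.hull fB (fun z hz => hz.2.2) hB']
    exact ⟨h1, hy⟩
  have h3 : A' ∩ (A ∩ B) ∩ B' ⊆ A' ∩ B' := fun z hz => ⟨hz.1.1, hz.2⟩
  exact convexHull_mono h3 h2

theorem Ind.insert {A : Set E3} {x : E3} (h : Ind A) (g : E3 →ₗ[ℝ] ℝ) (c : ℝ)
    (hg : ∀ y ∈ A, g y = c) (hx : g x ≠ c) : Ind (insert x A) := by
  have key : x ∉ affineSpan ℝ A := by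
    intro hm
    apply hx
    refine affineSpan_induction (p := fun y => g y = c) hm hg ?_
    intro a u v w hu hv hw
    simp [hu, hv, hw]
  have hne : ∀ y : (Insert.insert x A : Set E3), y ≠ ⟨x, Set.mem_insert _ _⟩ → y.1 ∈ A := by
    intro y hy
    rcases Set.mem_insert_iff.1 y.2 with h | h
    · exact absurd (Subtype.ext h) hy
    · exact h
  have := AffineIndependent.affineIndependent_of_notMem_span (k := ℝ)
    (p := fun y : (Insert.insert x A : Set E3) => (y : E3)) (i := ⟨x, Set.mem_insert _ _⟩) ?_ ?_
  · exact this
  · let e : {y : (Insert.insert x A : Set E3) // y ≠ ⟨x, Set.mem_insert _ _⟩} ↪ A :=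
      ⟨fun y => ⟨y.1.1, hne y.1 y.2⟩, fun y z hyz => by
        simp only [Subtype.mk.injEq] at hyz
        exact Subtype.ext (Subtype.ext hyz)⟩
    have h' : AffineIndependent ℝ (fun y : A => (y : E3)) := h
    exact h'.comp_embedding e
  · intro hm
    apply key
    refine affineSpan_mono ℝ ?_ hm
    rintro _ ⟨y, hy, rfl⟩
    exact hne y hy

theorem φS_cons (p : ℕ) (s : List ℕ) : φS (p :: s) = insert (φ p) (φS s) := by
  ext x
  simp [mem_φS, eq_comm]

theorem φS_nil : φS [] = ∅ := by
  ext x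
  simp [mem_φS]

theorem indep_spec (b : ℕ) (fs : List (ℕ × ℕ × ℕ × ℕ)) (s : List ℕ) (h : indep b fs s = true) :
    Ind (φS s) := by
  induction s with
  | nil => 
    rw [φS_nil]
    exact affineIndependent_of_subsingleton ℝ _
  | cons p s ih =>
    simp only [indep, Bool.or_eq_true, Bool.and_eq_true, List.any_eq_true, Bool.not_eq_true',
      List.all_eq_true, List.isEmpty_iff, Nat.beq_eq] at h
    rcases h with ⟨⟨f, -, h1, h2⟩, h3⟩ | h
    · rw [φS_cons]
      refine (ih h3).insert (lin f) (cst f b) ?_ ?_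
      · rintro _ ⟨q, hq, rfl⟩
        exact lin_eq.2 (h2 q hq)
      · intro h
        rw [lin_eq, ← Nat.beq_eq, h1] at h
        exact Bool.false_ne_true h
    · subst h
      rw [φS_cons, φS_nil, insert_empty_eq]
      exact affineIndependent_of_subsingleton ℝ _

theorem sum_count {M : Type*} [AddCommGroup M] [Module ℝ M] (f : E3 → M) (U : Finset E3)
    (P : List E3) (hP : ∀ p ∈ P, p ∈ U) :
    ∑ y ∈ U, (P.count y : ℝ) • f y = (P.map f).sum := by
  induction P with
  | nil => simp
  | cons a P ih =>
    have h1 := ih fun p hp => hP p (List.mem_cons_of_mem _ hp)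
    have ha := hP a List.mem_cons_self
    simp only [List.count_cons, Nat.cast_add, add_smul, Finset.sum_add_distrib, h1, List.map_cons,
      List.sum_cons]
    rw [add_comm]
    congr 1
    rw [Finset.sum_eq_single a]
    · simp
    · intro b _ hb
      simp [Ne.symm hb]
    · intro h
      exact absurd ha h

theorem circuit (S : Finset E3) (P R : List E3) (hP : ∀ p ∈ P, p ∈ S) (hne : P ≠ [])
    (hlen : P.length = R.length) (hsum : P.sum = R.sum) (x : E3)
    (hx : x ∈ convexHull ℝ (S : Set E3)) :
    ∃ p ∈ P, x ∈ convexHull ℝ ((S.erase p ∪ R.toFinset : Finset E3) : Set E3) := by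
  rw [Finset.mem_convexHull'] at hx
  obtain ⟨w, hw0, hw1, hwx⟩ := hx
  obtain ⟨p, hp, hmin⟩ := Finset.exists_min_image P.toFinset (fun y => w y / (P.count y : ℝ))
    (by simpa using hne)
  have hp' : p ∈ P := by simpa using hp
  refine ⟨p, hp', ?_⟩
  have hcp : (0 : ℝ) < P.count p := by exact_mod_cast List.count_pos_iff.2 hp'
  set θ := w p / (P.count p : ℝ) with hθ
  have hθ0 : 0 ≤ θ := div_nonneg (hw0 p (hP p hp')) hcp.le
  set w0 : E3 → ℝ := fun y => if y ∈ S then w y else 0 with hw0'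
  set w' : E3 → ℝ := fun y => w0 y - θ * P.count y + θ * R.count y with hw'
  have hSU : S ⊆ S ∪ R.toFinset := Finset.subset_union_left
  have hVU : S.erase p ∪ R.toFinset ⊆ S ∪ R.toFinset :=
    Finset.union_subset_union (Finset.erase_subset _ _) (le_refl _)
  have hout : ∀ y ∈ S ∪ R.toFinset, y ∉ S.erase p ∪ R.toFinset → w' y = 0 := by
    intro y hy hy'
    simp only [Finset.mem_union, Finset.mem_erase, List.mem_toFinset, not_or, not_and] at hy hy'
    have hyS : y ∈ S := by tauto
    have hyp : y = p := by
      by_contra h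
      exact hy'.1 h hyS
    subst hyp
    have : R.count y = 0 := List.count_eq_zero.2 hy'.2
    simp only [hw', hw0', if_pos hyS, this]
    rw [hθ]
    field_simp
    simp
  have h1 : ∀ (M : Type) [AddCommGroup M] [Module ℝ M] (f : E3 → M),
      (P.map f).sum = (R.map f).sum → 
      ∑ y ∈ S.erase p ∪ R.toFinset, w' y • f y = ∑ y ∈ S, w y • f y := by
    intro M _ _ f hf
    rw [Finset.sum_subset hVU (fun y hy hy' => by rw [hout y hy hy', zero_smul])]
    simp only [hw', add_smul, sub_smul, mul_smul, Finset.sum_add_distrib, Finset.sum_sub_distrib,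
      ← Finset.smul_sum]
    rw [sum_count f _ P (fun q hq => hSU (hP q hq)),
      sum_count f _ R (fun q hq => Finset.mem_union_right _ (List.mem_toFinset.2 hq)), hf]
    rw [sub_add_cancel, ← Finset.sum_subset hSU]
    · apply Finset.sum_congr rfl
      intro y hy
      simp [hw0', hy]
    · intro y _ hy
      simp [hw0', hy]
  rw [Finset.mem_convexHull']
  refine ⟨w', ?_, ?_, ?_⟩
  · intro y hy
    have hR : 0 ≤ θ * R.count y := by positivity
    by_cases hyP : y ∈ P
    · have hc : (0 : ℝ) < P.count y := by exact_mod_cast List.count_pos_iff.2 hyP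
      have := hmin y (by simpa using hyP)
      rw [le_div_iff₀ hc] at this
      simp only [hw', hw0', if_pos (hP y hyP)]
      linarith
    · have : P.count y = 0 := List.count_eq_zero.2 hyP
      have h0 : 0 ≤ w0 y := by
        simp only [hw0']
        split_ifs with h
        · exact hw0 y h
        · exact le_rfl
      simp only [hw', this]
      simpa using add_nonneg h0 hR
  · have := h1 ℝ (fun _ => 1) (by simp [hlen])
    simpa [hw1] using this
  · have := h1 E3 (fun y => y) (by simpa using hsum)
    rw [this, hwx]

theorem cov_spec (ψ : ℕ → E3) (T : List (List ℕ)) (x : E3) (cs : List (List ℕ × List ℕ))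
    (hcs : ∀ c ∈ cs, c.1 ≠ [] ∧ c.1.length = c.2.length ∧ (c.1.map ψ).sum = (c.2.map ψ).sum) :
    ∀ S, cov T cs S = true → x ∈ convexHull ℝ (ψ '' {p | p ∈ S}) →
      ∃ t ∈ T, x ∈ convexHull ℝ (ψ '' {p | p ∈ t}) := by
  induction cs with
  | nil =>
    intro S h hx
    simp only [cov, List.any_eq_true, sub_iff] at h
    obtain ⟨t, ht, h⟩ := h
    exact ⟨t, ht, convexHull_mono (Set.image_mono h) hx⟩
  | cons c cs ih =>
    obtain ⟨P, R⟩ := c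
    have ih' := ih fun c hc => hcs c (List.mem_cons_of_mem _ hc)
    obtain ⟨hne, hlen, hsum⟩ := hcs _ List.mem_cons_self
    simp only at hne hlen hsum
    intro S h hx
    rw [cov] at h
    by_cases hc : sub P S = true
    · rw [hc] at h
      simp only [cond_true, List.all_eq_true] at h
      rw [sub_iff] at hc
      obtain ⟨q, hq, hxq⟩ := circuit (S.map ψ).toFinset (P.map ψ) (R.map ψ)
        (by
          intro q hq
          obtain ⟨p, hp, rfl⟩ := List.mem_map.1 hq
          exact List.mem_toFinset.2 (List.mem_map.2 ⟨p, hc p hp, rfl⟩))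
        (by simpa using hne) (by simpa using hlen) hsum x
        (by
          convert hx using 2
          ext y
          simp)
      obtain ⟨p, hp, rfl⟩ := List.mem_map.1 hq
      refine ih' _ (h p hp) (convexHull_mono ?_ hxq)
      intro y hy
      simp only [Finset.coe_union, Set.mem_union, Finset.mem_coe, Finset.mem_erase,
        List.mem_toFinset, List.mem_map] at hy
      rcases hy with ⟨hy, a, ha, rfl⟩ | ⟨a, ha, rfl⟩
      · refine ⟨a, ?_, rfl⟩
        have : a ≠ p := fun e => hy (by rw [e])
        have hb : Nat.beq a p = false := by rw [← Bool.not_eq_true, Nat.beq_eq]; exact this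
        simp [ha, hb]
      · refine ⟨a, ?_, rfl⟩
        simp [ha]
    · rw [Bool.not_eq_true] at hc
      rw [hc] at h
      exact ih' _ h hx

theorem sum_crd (b : ℕ) (P : List ℕ) (l : Fin 3) :
    (P.map fun p => φ (p + b)).sum l = (((P.map fun p => crd l (p + b)).sum : ℕ) : ℝ) / 6 := by
  induction P with
  | nil => simp
  | cons a P ih =>
    simp only [List.map_cons, List.sum_cons, PiLp.add_apply, ih, φ_apply]
    push_cast
    ring

theorem okc_spec {b : ℕ} {c : List ℕ × List ℕ} (h : okc b c = true) :
    c.1 ≠ [] ∧ c.1.length = c.2.length ∧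
      (c.1.map fun p => φ (p + b)).sum = (c.2.map fun p => φ (p + b)).sum := by
  simp only [okc, Bool.and_eq_true, Nat.beq_eq, Nat.ble_eq, List.all_cons, List.all_nil] at h
  obtain ⟨h1, h2, h3, h4, h5, -⟩ := h
  refine ⟨?_, h1, ?_⟩
  · intro h
    simp [h] at h2
  · ext l
    rw [sum_crd, sum_crd]
    fin_cases l
    · simp [h3]
    · simp [h4]
    · simp [h5]

theorem hull_box (C : Set E3) (hC : Convex ℝ C) (a d : Fin 3 → ℝ) (x : E3)
    (hx : ∀ l, a l ≤ x l ∧ x l ≤ d l)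
    (h : ∀ e : Fin 3 → Bool, WithLp.toLp 2 (fun l => bif e l then d l else a l) ∈ C) : x ∈ C := by
  have key : ∀ (l : Fin 3) (y : Fin 3 → ℝ) (t : ℝ), a l ≤ t → t ≤ d l →
      WithLp.toLp 2 (Function.update y l (a l)) ∈ C →
      WithLp.toLp 2 (Function.update y l (d l)) ∈ C →
      WithLp.toLp 2 (Function.update y l t) ∈ C := by
    intro l y t h1 h2 ha hd
    rcases eq_or_lt_of_le (h1.trans h2) with h0 | h0
    · have : t = a l := by linarith
      rw [this]
      exact ha
    · have hp : 0 < d l - a l := by linarith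
      have := hC ha hd (a := (d l - t) / (d l - a l)) (b := (t - a l) / (d l - a l))
        (div_nonneg (by linarith) hp.le) (div_nonneg (by linarith) hp.le) (by field_simp; ring)
      convert this using 1
      ext m
      by_cases hm : m = l
      · subst hm
        simp
        field_simp
        ring
      · simp [hm]
        field_simp
        ring
  have k0 : ∀ e : Fin 3 → Bool,
      (WithLp.toLp 2 ![x 0, bif e 1 then d 1 else a 1, bif e 2 then d 2 else a 2] : E3) ∈ C := by
    intro e
    have := key 0 ![0, bif e 1 then d 1 else a 1, bif e 2 then d 2 else a 2] (x 0)
      (hx 0).1 (hx 0).2 ?_ ?_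
    · convert this using 2
      ext m; fin_cases m <;> simp
    · convert h ![false, e 1, e 2] using 2
      ext m; fin_cases m <;> simp
    · convert h ![true, e 1, e 2] using 2
      ext m; fin_cases m <;> simp
  have k1 : ∀ e : Fin 3 → Bool,
      (WithLp.toLp 2 ![x 0, x 1, bif e 2 then d 2 else a 2] : E3) ∈ C := by
    intro e
    have := key 1 ![x 0, 0, bif e 2 then d 2 else a 2] (x 1) (hx 1).1 (hx 1).2 ?_ ?_
    · convert this using 2
      ext m; fin_cases m <;> simp
    · convert k0 ![false, false, e 2] using 2
      ext m; fin_cases m <;> simp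
    · convert k0 ![false, true, e 2] using 2
      ext m; fin_cases m <;> simp
  have := key 2 ![x 0, x 1, 0] (x 2) (hx 2).1 (hx 2).2 ?_ ?_
  · convert this using 1
    ext m; fin_cases m <;> simp
  · convert k1 ![false, false, false] using 2
    ext m; fin_cases m <;> simp
  · convert k1 ![false, false, true] using 2
    ext m; fin_cases m <;> simp

theorem mem_tets {T : List ℕ} : T ∈ tets ↔ ∃ C ∈ cubes, T ∈ tetsOf C := by
  simp only [tets, List.mem_flatMap]

theorem φS_fin (s : List ℕ) : (φS s).Finite := (List.finite_toSet s).image φ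

theorem tets_ind {T : List ℕ} (h : T ∈ tets) : Ind (φS T) := by
  obtain ⟨C, hC, hT⟩ := mem_tets.1 h
  have := chk_indep
  simp only [List.all_eq_true] at this
  exact indep_spec C.1 locF T (this C hC T hT)

theorem fin3_mem (l : Fin 3) : (l : ℕ) ∈ [0, 1, 2] := by
  fin_cases l <;> simp

theorem box {C : ℕ × ℕ} (hC : C ∈ cubes) {T : List ℕ} (hT : T ∈ tetsOf C) {p : ℕ} (hp : p ∈ T) :
    p < 32768 ∧ ∀ l ∈ [0, 1, 2], crd l C.1 ≤ crd l p ∧ crd l p ≤ crd l C.1 + 2 ∧ crd l p ≤ 6 := by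
  have h := chk_box
  rw [List.all_eq_true] at h
  have h := h C hC
  rw [List.all_eq_true] at h
  have h := h T hT
  rw [List.all_eq_true] at h
  have h := h p hp
  rw [Bool.and_eq_true, List.all_eq_true, Nat.blt_eq] at h
  refine ⟨h.1, fun l hl => ?_⟩
  have h := h.2 l hl
  simpa only [Bool.and_eq_true, Nat.ble_eq] using h

theorem tets_lt {T : List ℕ} (h : T ∈ tets) {p : ℕ} (hp : p ∈ T) : p < 32768 := by
  obtain ⟨C, hC, hT⟩ := mem_tets.1 h
  exact (box hC hT hp).1

/-- Coordinate form. -/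
def co (l : Fin 3) : E3 →ₗ[ℝ] ℝ where
  toFun x := x l
  map_add' x y := by simp
  map_smul' c x := by simp

theorem co_apply (l : Fin 3) (x : E3) : co l x = x l := rfl

theorem onp_eq (l : Fin 3) (v : ℕ) (s : List ℕ) (c : ℝ) (hc : c = (v : ℝ) / 6) :
    {y ∈ φS s | y l = c} = φS (onp l v s) := by
  subst hc
  ext y
  simp only [Set.mem_ofPred_eq, mem_φS, onp, List.mem_filter, Nat.beq_eq]
  constructor
  · rintro ⟨⟨p, hp, rfl⟩, h⟩
    refine ⟨p, ⟨hp, ?_⟩, rfl⟩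
    rw [φ_apply] at h
    have h' : (crd l p : ℝ) = v := by linarith
    exact_mod_cast h'
  · rintro ⟨p, ⟨hp, h⟩, rfl⟩
    exact ⟨⟨p, hp, rfl⟩, by rw [φ_apply, h]⟩

theorem onp_sub (l v : ℕ) (s : List ℕ) : φS (onp l v s) ⊆ φS s :=
  φS_mono fun _ hp => (List.mem_filter.1 hp).1

theorem onp_tri {l : ℕ} (hl : l ∈ [0, 1, 2]) {v : ℕ} (hv : v ∈ [0, 1, 2]) {T : List ℕ}
    (hT : T ∈ tets) : onp l (2 * v) T = [] ∨ ∃ τ ∈ tri l v, ∀ p ∈ onp l (2 * v) T, p ∈ τ := by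
  have h := chk_onp
  rw [List.all_eq_true] at h
  have h := h l hl
  rw [List.all_eq_true] at h
  have h := h v hv
  rw [List.all_eq_true] at h
  have h := h T hT
  simpa only [Bool.or_eq_true, List.isEmpty_iff, List.any_eq_true, sub_iff] using h

theorem tri_tet {l : ℕ} (hl : l ∈ [0, 1, 2]) {v : ℕ} (hv : v ∈ [0, 1, 2]) {τ : List ℕ}
    (hτ : τ ∈ tri l v) : ∃ T ∈ tets, ∀ p ∈ τ, p ∈ T := by
  have h := chk_trisub
  rw [List.all_eq_true] at h
  have h := h l hl
  rw [List.all_eq_true] at h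
  have h := h v hv
  rw [List.all_eq_true] at h
  have h := h τ hτ
  simpa only [List.any_eq_true, sub_iff] using h

theorem tri_ind {l : ℕ} (hl : l ∈ [0, 1, 2]) {v : ℕ} (hv : v ∈ [0, 1, 2]) {τ : List ℕ}
    (hτ : τ ∈ tri l v) : Ind (φS τ) := by
  obtain ⟨T, hT, h⟩ := tri_tet hl hv hτ
  exact (tets_ind hT).mono (φS_mono h)

theorem tri_good {l : ℕ} (hl : l ∈ [0, 1, 2]) {v : ℕ} (hv : v ∈ [1, 2]) {τ τ' : List ℕ}
    (hτ : τ ∈ tri l v) (hτ' : τ' ∈ tri l v) : Good (φS τ) (φS τ') := by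
  have h := chk_tri
  rw [List.all_eq_true] at h
  have h := h l hl
  rw [List.all_eq_true] at h
  have h := h v hv
  rw [List.all_eq_true] at h
  have h := h τ hτ
  rw [List.all_eq_true] at h
  exact good_spec _ _ _ _ (h τ' hτ')

theorem good_sep {S T : List ℕ} (hS : S ∈ tets) (hT : T ∈ tets) (l : Fin 3) {v : ℕ}
    (hv : v ∈ [1, 2]) (h1 : ∀ p ∈ S, 2 * v ≤ crd l p) (h2 : ∀ p ∈ T, crd l p ≤ 2 * v) :
    Good (φS S) (φS T) := by
  rintro x ⟨hx, hy⟩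
  have hv' : v ∈ [0, 1, 2] := List.mem_cons_of_mem _ hv
  have hl := fin3_mem l
  have h := expose2 (co l) (((2 * v : ℕ) : ℝ) / 6) (φS S) (φS T)
    (by
      rintro _ ⟨p, hp, rfl⟩
      rw [co_apply, φ_apply]
      have := h1 p hp
      gcongr)
    (by
      rintro _ ⟨p, hp, rfl⟩
      rw [co_apply, φ_apply]
      have := h2 p hp
      gcongr) x hx hy
  simp only [co_apply] at h
  rw [onp_eq l (2 * v) S _ rfl, onp_eq l (2 * v) T _ rfl] at h
  obtain ⟨ha, hb⟩ := h
  rcases onp_tri hl hv' hS with e | ⟨τ, hτ, e⟩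
  · simp [e, φS_nil] at ha
  rcases onp_tri hl hv' hT with e' | ⟨τ', hτ', e'⟩
  · simp [e', φS_nil] at hb
  have hg := (tri_good hl hv hτ hτ').mono (φS_fin _) (φS_fin _) (tri_ind hl hv' hτ)
    (tri_ind hl hv' hτ') (φS_mono e) (φS_mono e')
  exact convexHull_mono (Set.inter_subset_inter (onp_sub _ _ _) (onp_sub _ _ _)) (hg ⟨ha, hb⟩)

theorem tets_good {S T : List ℕ} (hS : S ∈ tets) (hT : T ∈ tets) : Good (φS S) (φS T) := by
  obtain ⟨C, hC, hSC⟩ := mem_tets.1 hS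
  obtain ⟨D, hD, hTD⟩ := mem_tets.1 hT
  have h := chk_sep
  rw [List.all_eq_true] at h
  have h := h C hC
  rw [List.all_eq_true] at h
  have h := h D hD
  rw [Bool.or_eq_true, Nat.beq_eq] at h
  rcases h with h | h
  · have hu := chk_uniq
    rw [List.all_eq_true] at hu
    have hu := hu C hC
    rw [List.all_eq_true] at hu
    have hu := hu D hD
    have hh : Nat.beq C.1 D.1 = true := by rw [Nat.beq_eq]; exact h
    rw [hh] at hu
    have e : C.2 = D.2 := Nat.eq_of_beq_eq_true hu
    have e' : C = D := Prod.ext h e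
    subst e'
    have hg := chk_good
    rw [List.all_eq_true] at hg
    have hg := hg C hC
    rw [List.all_eq_true] at hg
    have hg := hg S hSC
    rw [List.all_eq_true] at hg
    exact good_spec _ _ _ _ (hg T hTD)
  · rw [List.any_eq_true] at h
    obtain ⟨l, hl, h⟩ := h
    rw [List.any_eq_true] at h
    obtain ⟨v, hv, h⟩ := h
    simp only [Bool.or_eq_true, Bool.and_eq_true, Nat.ble_eq] at h
    have hl3 : l < 3 := by simp at hl; omega
    rcases h with ⟨h1, h2⟩ | ⟨h1, h2⟩
    · refine (good_sep hT hS ⟨l, hl3⟩ hv ?_ ?_).symm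
      · intro p hp
        exact h2.trans ((box hD hTD hp).2 l hl).1
      · intro p hp
        exact ((box hC hSC hp).2 l hl).2.1.trans h1
    · refine good_sep hS hT ⟨l, hl3⟩ hv ?_ ?_
      · intro p hp
        exact h2.trans ((box hC hSC hp).2 l hl).1
      · intro p hp
        exact ((box hD hTD hp).2 l hl).2.1.trans h1

theorem K_inter {s t : Set E3} {S T : List ℕ} (hS : S ∈ tets) (hT : T ∈ tets) (hs : s ⊆ φS S)
    (ht : t ⊆ φS T) : Good s t :=
  (tets_good hS hT).mono (φS_fin _) (φS_fin _) (tets_ind hS) (tets_ind hT) hs ht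

/-- The faces. -/
def Kf : Set (Finset E3) := {s | s.Nonempty ∧ ∃ T ∈ tets, (s : Set E3) ⊆ φS T}

/-- The triangulation. -/
def KK : Geometry.SimplicialComplex ℝ E3 where
  faces := Kf
  indep := by
    rintro s ⟨-, T, hT, h⟩
    exact (tets_ind hT).mono h
  isRelLowerSet_faces := by
    rintro s ⟨hs, T, hT, h⟩
    refine ⟨hs, fun t ht hn => ⟨hn, T, hT, ?_⟩⟩
    exact subset_trans (Finset.coe_subset.2 ht) h
  inter_subset_convexHull := by
    rintro s t ⟨-, S, hS, hs⟩ ⟨-, T, hT, ht⟩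
    exact K_inter hS hT hs ht

theorem mem_KK {s : Finset E3} : s ∈ KK.faces ↔ s.Nonempty ∧ ∃ T ∈ tets, (s : Set E3) ⊆ φS T :=
  Iff.rfl

theorem KK_fin : KK.faces.Finite := by
  have hf : (φS tets.flatten).Finite := φS_fin _
  refine (hf.toFinset.powerset.finite_toSet).subset ?_
  rintro s ⟨-, T, hT, h⟩
  simp only [Finset.coe_powerset, Set.mem_preimage, Set.mem_powerset_iff, Set.Finite.coe_toFinset]
  exact h.trans (φS_mono fun p hp => List.mem_flatten.2 ⟨T, hT, hp⟩)

theorem third (t : ℝ) (h0 : 0 ≤ t) (h1 : t ≤ 1) :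
    ∃ i : ℕ, i ∈ [0, 1, 2] ∧ ((2 * i : ℕ) : ℝ) / 6 ≤ t ∧ t ≤ ((2 * i + 2 : ℕ) : ℝ) / 6 := by
  rcases le_total t (1/3) with h | h
  · exact ⟨0, by simp, by push_cast; linarith, by push_cast; linarith⟩
  rcases le_total t (2/3) with h' | h'
  · exact ⟨1, by simp, by push_cast; linarith, by push_cast; linarith⟩
  · exact ⟨2, by simp, by push_cast; linarith, by push_cast; linarith⟩

theorem crd_mk (a b c : ℕ) (ha : a < 32) (hb : b < 32) (hc : c < 32) :
    crd 0 (a + 32 * b + 1024 * c) = a ∧ crd 1 (a + 32 * b + 1024 * c) = b ∧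
      crd 2 (a + 32 * b + 1024 * c) = c := by
  simp only [crd]
  norm_num
  omega

/-- Codes of corners. -/
def cor (e : Fin 3 → Bool) : ℕ :=
  (bif e 0 then 2 else 0) + 32 * (bif e 1 then 2 else 0) + 1024 * (bif e 2 then 2 else 0)

theorem cor_mem (e : Fin 3 → Bool) : cor e ∈ corners := by
  unfold cor
  cases e 0 <;> cases e 1 <;> cases e 2 <;> decide

theorem crd_cor (e : Fin 3 → Bool) (l : Fin 3) : crd l (cor e) = bif e l then 2 else 0 := by
  have hb : ∀ b : Bool, (bif b then 2 else 0) < 32 := by decide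
  have h := crd_mk _ _ _ (hb (e 0)) (hb (e 1)) (hb (e 2))
  fin_cases l
  · exact h.1
  · exact h.2.1
  · exact h.2.2

theorem cover (x : E3) (hx : x ∈ unitCube) : ∃ T ∈ tets, x ∈ convexHull ℝ (φS T) := by
  obtain ⟨i, hi, hi1, hi2⟩ := third (x 0) (hx 0).1 (hx 0).2
  obtain ⟨j, hj, hj1, hj2⟩ := third (x 1) (hx 1).1 (hx 1).2
  obtain ⟨k, hk, hk1, hk2⟩ := third (x 2) (hx 2).1 (hx 2).2
  have h := chk_base
  rw [List.all_eq_true] at h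
  have h := h i hi
  rw [List.all_eq_true] at h
  have h := h j hj
  rw [List.all_eq_true] at h
  have h := h k hk
  simp only [List.any_eq_true, Nat.beq_eq] at h
  obtain ⟨C, hC, hb⟩ := h
  have hm := crd_mk (2 * i) (2 * j) (2 * k) (by simp at hi; omega) (by simp at hj; omega)
    (by simp at hk; omega)
  rw [← hb] at hm
  have hbox : ∀ l : Fin 3, (crd l C.1 : ℝ) / 6 ≤ x l ∧ x l ≤ ((crd l C.1 + 2 : ℕ) : ℝ) / 6 := by
    intro l
    fin_cases l
    · change (crd 0 C.1 : ℝ) / 6 ≤ x 0 ∧ x 0 ≤ ((crd 0 C.1 + 2 : ℕ) : ℝ) / 6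
      rw [hm.1]; exact ⟨hi1, hi2⟩
    · change (crd 1 C.1 : ℝ) / 6 ≤ x 1 ∧ x 1 ≤ ((crd 1 C.1 + 2 : ℕ) : ℝ) / 6
      rw [hm.2.1]; exact ⟨hj1, hj2⟩
    · change (crd 2 C.1 : ℝ) / 6 ≤ x 2 ∧ x 2 ≤ ((crd 2 C.1 + 2 : ℕ) : ℝ) / 6
      rw [hm.2.2]; exact ⟨hk1, hk2⟩
  have hcor := chk_corner
  rw [List.all_eq_true] at hcor
  have hcor := hcor C hC
  have hin : x ∈ convexHull ℝ ((fun p => φ (p + C.1)) '' {p | p ∈ corners}) := by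
    refine hull_box _ (convex_convexHull ℝ _) (fun l => (crd l C.1 : ℝ) / 6)
      (fun l => ((crd l C.1 + 2 : ℕ) : ℝ) / 6) x hbox ?_
    intro e
    apply subset_convexHull
    refine ⟨cor e, cor_mem e, ?_⟩
    ext l
    rw [List.all_eq_true] at hcor
    have hc := hcor l (fin3_mem l)
    rw [List.all_eq_true] at hc
    have hc := hc (cor e) (cor_mem e)
    rw [Nat.beq_eq] at hc
    simp only [φ_apply, hc, crd_cor]
    cases e l <;> simp [add_comm]
  have hty := chk_ty
  rw [List.all_eq_true] at hty
  have hty := hty C hC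
  simp only [List.any_eq_true, Nat.beq_eq] at hty
  obtain ⟨n, hn, hCn⟩ := hty
  have hcov := chk_cov
  rw [List.all_eq_true] at hcov
  have hcov := hcov n hn
  rw [← hCn] at hcov
  have hok := chk_okc
  rw [List.all_eq_true] at hok
  have hok := hok C hC
  rw [List.all_eq_true] at hok
  obtain ⟨t, ht, hxt⟩ := cov_spec (fun p => φ (p + C.1)) (typ C.2) x (circ C.2)
    (fun c hc => okc_spec (hok c hc)) corners hcov hin
  refine ⟨t.map (· + C.1), mem_tets.2 ⟨C, hC, List.mem_map.2 ⟨t, ht, rfl⟩⟩, ?_⟩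
  convert hxt using 2
  ext y
  simp [mem_φS]

theorem KK_space : KK.space = unitCube := by
  ext x
  rw [Geometry.SimplicialComplex.mem_space_iff]
  constructor
  · rintro ⟨s, ⟨-, T, hT, hs⟩, hx⟩ l
    obtain ⟨C, hC, hTC⟩ := mem_tets.1 hT
    have h1 : Convex ℝ {y : E3 | y l ∈ Set.Icc (0 : ℝ) 1} :=
      (convex_Icc (0 : ℝ) 1).linear_preimage (co l)
    have h2 : (s : Set E3) ⊆ {y : E3 | y l ∈ Set.Icc (0 : ℝ) 1} := by
      intro y hy
      obtain ⟨p, hp, rfl⟩ := hs hy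
      have := ((box hC hTC hp).2 l (fin3_mem l)).2.2
      have h' : (crd l p : ℝ) ≤ 6 := by exact_mod_cast this
      constructor
      · rw [φ_apply]; positivity
      · rw [φ_apply]; linarith
    exact convexHull_min h2 h1 hx
  · intro hx
    obtain ⟨T, hT, h⟩ := cover x hx
    refine ⟨(φS_fin T).toFinset, ⟨?_, T, hT, by simp⟩, by simpa using h⟩
    rw [Set.Finite.toFinset_nonempty]
    exact convexHull_nonempty_iff.1 ⟨x, h⟩

theorem mem_ins (a b : ℕ) (l : List ℕ) : b ∈ ins a l ↔ b = a ∨ b ∈ l := by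
  induction l with
  | nil => simp [ins]
  | cons c l ih =>
    rw [ins]
    by_cases h : Nat.blt a c = true
    · rw [h]; simp
    · rw [Bool.not_eq_true] at h
      rw [h]
      by_cases h2 : Nat.beq a c = true
      · have e := Nat.eq_of_beq_eq_true h2
        subst e
        rw [h2]
        simp
      · rw [Bool.not_eq_true] at h2
        rw [h2]
        simp only [cond_false, List.mem_cons, ih]
        tauto

theorem mem_sd (b : ℕ) (l : List ℕ) : b ∈ sd l ↔ b ∈ l := by
  induction l with
  | nil => simp [sd]
  | cons c l ih =>
    have : sd (c :: l) = ins c (sd l) := rfl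
    rw [this, mem_ins, ih, List.mem_cons]

theorem ins_sorted (a : ℕ) (l : List ℕ) (h : l.Pairwise (· < ·)) :
    (ins a l).Pairwise (· < ·) := by
  induction l with
  | nil => simp [ins]
  | cons c l ih =>
    rw [List.pairwise_cons] at h
    rw [ins]
    by_cases h1 : Nat.blt a c = true
    · rw [h1, cond_true]
      rw [Nat.blt_eq] at h1
      refine List.pairwise_cons.2 ⟨?_, List.pairwise_cons.2 h⟩
      intro b hb
      rcases List.mem_cons.1 hb with rfl | hb
      · exact h1
      · exact h1.trans (h.1 b hb)
    · have h1' := h1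
      rw [Bool.not_eq_true] at h1
      rw [h1, cond_false]
      by_cases h2 : Nat.beq a c = true
      · rw [h2, cond_true]
        exact List.pairwise_cons.2 h
      · have h2' := h2
        rw [Bool.not_eq_true] at h2
        rw [h2, cond_false]
        rw [Nat.blt_eq] at h1'
        rw [Nat.beq_eq] at h2'
        refine List.pairwise_cons.2 ⟨?_, ih h.2⟩
        intro b hb
        rcases (mem_ins _ _ _).1 hb with rfl | hb
        · omega
        · exact h.1 b hb

theorem sd_sorted (l : List ℕ) : (sd l).Pairwise (· < ·) := by
  induction l with
  | nil => exact List.Pairwise.nil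
  | cons c l ih => exact ins_sorted c _ ih

theorem ncard_list (L : List ℕ) : {p | p ∈ L}.ncard = (sd L).length := by
  have h : {p | p ∈ L} = (((sd L).toFinset : Finset ℕ) : Set ℕ) := by
    ext p
    simp [mem_sd]
  rw [h, Set.ncard_coe_finset, List.toFinset_card_of_nodup]
  exact (sd_sorted L).imp fun h => ne_of_lt h

theorem φ_inj {p q : ℕ} (hp : p < 32768) (hq : q < 32768) (h : φ p = φ q) : p = q := by
  have key : ∀ l : Fin 3, crd l p = crd l q := by
    intro l
    have := congrArg (fun x : E3 => x l) h
    simp only [φ_apply] at this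
    have h' : (crd l p : ℝ) = crd l q := by linarith
    exact_mod_cast h'
  have h0 := key 0
  have h1 := key 1
  have h2 := key 2
  simp only [crd] at h0 h1 h2
  norm_num at h0 h1 h2
  omega

theorem ncard_φS (L : List ℕ) (hL : ∀ p ∈ L, p < 32768) : (φS L).ncard = (sd L).length := by
  rw [← ncard_list]
  exact Set.ncard_image_of_injOn fun p hp q hq h => φ_inj (hL p hp) (hL q hq) h

theorem verts_iff (p : ℕ) : p ∈ grid ++ cens ↔ ∃ T ∈ tets, p ∈ T := by
  have h := chk_verts
  rw [Bool.and_eq_true, sub_iff, sub_iff] at h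
  rw [← List.mem_flatten]
  exact ⟨h.2 p, h.1 p⟩

theorem verts_lt {p : ℕ} (h : p ∈ grid ++ cens) : p < 32768 := by
  obtain ⟨T, hT, hp⟩ := (verts_iff p).1 h
  exact tets_lt hT hp

theorem KK_vert : KK.vertices = φS (grid ++ cens) := by
  ext x
  rw [Geometry.SimplicialComplex.mem_vertices, mem_KK]
  constructor
  · rintro ⟨-, T, hT, h⟩
    obtain ⟨p, hp, rfl⟩ := h (by simp : x ∈ _)
    exact ⟨p, (verts_iff p).2 ⟨T, hT, hp⟩, rfl⟩
  · rintro ⟨p, hp, rfl⟩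
    obtain ⟨T, hT, hpT⟩ := (verts_iff p).1 hp
    refine ⟨by simp, T, hT, ?_⟩
    rw [Finset.coe_singleton, Set.singleton_subset_iff]
    exact ⟨p, hpT, rfl⟩

theorem φ_mk (a b c : ℕ) (ha : a < 32) (hb : b < 32) (hc : c < 32) :
    φ (a + 32 * b + 1024 * c) = pt3 ((a : ℝ) / 6) ((b : ℝ) / 6) ((c : ℝ) / 6) := by
  obtain ⟨h0, h1, h2⟩ := crd_mk a b c ha hb hc
  ext l
  fin_cases l
  · change (crd 0 _ : ℝ) / 6 = (a : ℝ) / 6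
    rw [h0]
  · change (crd 1 _ : ℝ) / 6 = (b : ℝ) / 6
    rw [h1]
  · change (crd 2 _ : ℝ) / 6 = (c : ℝ) / 6
    rw [h2]

theorem le3_mem {i : ℕ} : i ∈ [0, 1, 2, 3] ↔ i ≤ 3 := by
  simp
  omega

theorem grid_eq : φS grid = thirdGrid := by
  ext x
  simp only [mem_φS, thirdGrid, Set.mem_ofPred_eq, grid, List.mem_flatMap, List.mem_map, le3_mem]
  have hd : ∀ i : ℕ, ((2 * i : ℕ) : ℝ) / 6 = (i : ℝ) / 3 := by
    intro i
    push_cast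
    ring
  constructor
  · rintro ⟨_, ⟨k, hk, j, hj, i, hi, rfl⟩, rfl⟩
    refine ⟨i, j, k, hi, hj, hk, ?_⟩
    rw [φ_mk _ _ _ (by omega) (by omega) (by omega), hd, hd, hd]
  · rintro ⟨i, j, k, hi, hj, hk, rfl⟩
    refine ⟨_, ⟨k, hk, j, hj, i, hi, rfl⟩, ?_⟩
    rw [φ_mk _ _ _ (by omega) (by omega) (by omega), hd, hd, hd]

theorem cens_sub : φS cens ⊆ centerGrid := by
  rintro _ ⟨p, hp, rfl⟩
  obtain ⟨C, hC, rfl⟩ := List.mem_map.1 hp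
  have hC := (List.mem_filter.1 hC).1
  have h := chk_cen
  rw [List.all_eq_true] at h
  have h := h C hC
  simp only [List.any_eq_true, Nat.beq_eq] at h
  obtain ⟨i, hi, j, hj, k, hk, h⟩ := h
  have hi : i ≤ 2 := by simp at hi; omega
  have hj : j ≤ 2 := by simp at hj; omega
  have hk : k ≤ 2 := by simp at hk; omega
  refine ⟨i, j, k, hi, hj, hk, ?_⟩
  have e : C.1 + 1057 = (2 * i + 1) + 32 * (2 * j + 1) + 1024 * (2 * k + 1) := by omega
  rw [e, φ_mk _ _ _ (by omega) (by omega) (by omega)]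
  push_cast
  rfl

theorem KK_vert' : KK.vertices = thirdGrid ∪ φS cens := by
  rw [KK_vert, ← grid_eq]
  ext x
  simp only [mem_φS, List.mem_append, Set.mem_union]
  constructor
  · rintro ⟨p, h | h, e⟩
    · exact Or.inl ⟨p, h, e⟩
    · exact Or.inr ⟨p, h, e⟩
  · rintro (⟨p, h, e⟩ | ⟨p, h, e⟩)
    · exact ⟨p, Or.inl h, e⟩
    · exact ⟨p, Or.inr h, e⟩

theorem KK_face (l : Fin 3) (v : ℝ) (hv : v ∈ ({0, 1} : Set ℝ)) :
    {x ∈ KK.vertices | x l = v}.ncard = 16 := by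
  have h := chk_face
  rw [List.all_eq_true] at h
  have h := h l (fin3_mem l)
  rw [List.all_eq_true] at h
  have key : ∀ n : ℕ, n ∈ [0, 6] → v = (n : ℝ) / 6 → {x ∈ KK.vertices | x l = v}.ncard = 16 := by
    intro n hn e
    have h := h n hn
    rw [Nat.beq_eq] at h
    rw [KK_vert, onp_eq l n _ v e, ncard_φS, h]
    intro p hp
    exact verts_lt (List.mem_filter.1 hp).1
  rcases hv with rfl | hv
  · exact key 0 (by simp) (by norm_num)
  · exact key 6 (by simp) (by rw [Set.mem_singleton_iff.1 hv]; norm_num)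

/-- Ordered faces of size `k`. -/
def Sub (k : ℕ) : Set (List ℕ) := {L | ∃ T ∈ tets, L ∈ T.sublistsLen k}

theorem tets_sorted {T : List ℕ} (h : T ∈ tets) : T.Pairwise (· < ·) := by
  have hs := chk_sorted
  rw [List.all_eq_true] at hs
  have hs := hs T h
  split at hs
  · simp only [Bool.and_eq_true, Nat.blt_eq] at hs
    simp
    omega
  · exact absurd hs Bool.false_ne_true

theorem Sub_sorted {k : ℕ} {L : List ℕ} (h : L ∈ Sub k) : L.Pairwise (· < ·) := by
  obtain ⟨T, hT, h⟩ := h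
  exact (tets_sorted hT).sublist (List.mem_sublistsLen.1 h).1

theorem Sub_lt {k : ℕ} {L : List ℕ} (h : L ∈ Sub k) : ∀ p ∈ L, p < 32768 := by
  obtain ⟨T, hT, h⟩ := h
  intro p hp
  exact tets_lt hT ((List.mem_sublistsLen.1 h).1.subset hp)

theorem Sub_len {k : ℕ} {L : List ℕ} (h : L ∈ Sub k) : L.length = k := by
  obtain ⟨T, hT, h⟩ := h
  exact (List.mem_sublistsLen.1 h).2

theorem enc_inj : ∀ (L M : List ℕ), L.length = M.length → (∀ p ∈ L, p < 32768) →
    (∀ p ∈ M, p < 32768) → enc L = enc M → L = M := by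
  intro L
  induction L with
  | nil =>
    intro M h _ _ _
    exact (List.length_eq_zero_iff.1 h.symm).symm
  | cons a L ih =>
    intro M h h1 h2 e
    cases M with
    | nil => simp at h
    | cons b M =>
      simp only [enc] at e
      have ha := h1 a List.mem_cons_self
      have hb := h2 b List.mem_cons_self
      have e1 : a = b := by omega
      have e2 : enc L = enc M := by omega
      rw [e1, ih M (by simpa using h) (fun p hp => h1 p (List.mem_cons_of_mem _ hp))
        (fun p hp => h2 p (List.mem_cons_of_mem _ hp)) e2]

theorem Sub_ncard (k : ℕ) : (Sub k).ncard = (sd (codes k)).length := by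
  rw [← ncard_list]
  have h : {p | p ∈ codes k} = enc '' Sub k := by
    ext p
    simp only [codes, Set.mem_ofPred_eq, List.mem_map, List.mem_flatMap, Set.mem_image]
    rfl
  rw [h, Set.ncard_image_of_injOn]
  intro L hL M hM e
  exact enc_inj L M (by rw [Sub_len hL, Sub_len hM]) (Sub_lt hL) (Sub_lt hM) e

/-- The simplex of an ordered face. -/
def FF (L : List ℕ) : Finset E3 := (L.map φ).toFinset

theorem FF_coe (L : List ℕ) : (FF L : Set E3) = φS L := by
  ext x
  simp [FF, mem_φS]

theorem FF_card (L : List ℕ) (h : L.Pairwise (· < ·)) (h2 : ∀ p ∈ L, p < 32768) :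
    (FF L).card = L.length := by
  rw [FF, List.toFinset_card_of_nodup, List.length_map]
  refine List.Nodup.map_on (fun p hp q hq e => φ_inj (h2 p hp) (h2 q hq) e) ?_
  exact h.imp fun h => ne_of_lt h

theorem mem_of_FF {L M : List ℕ} (h1 : ∀ p ∈ L, p < 32768) (h2 : ∀ p ∈ M, p < 32768)
    (e : FF L = FF M) {p : ℕ} (hp : p ∈ L) : p ∈ M := by
  have : φ p ∈ FF M := by
    rw [← e]
    simp only [FF, List.mem_toFinset, List.mem_map]
    exact ⟨p, hp, rfl⟩
  simp only [FF, List.mem_toFinset, List.mem_map] at this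
  obtain ⟨q, hq, h⟩ := this
  rwa [← φ_inj (h2 q hq) (h1 p hp) h]

theorem faces_eq (k : ℕ) (hk : 0 < k) : {s ∈ KK.faces | s.card = k} = FF '' Sub k := by
  ext s
  simp only [Set.mem_ofPred_eq, mem_KK]
  constructor
  · rintro ⟨⟨-, T, hT, h⟩, hc⟩
    have hsub : (T.filter fun p => decide (φ p ∈ s)).Sublist T := List.filter_sublist
    have e : FF (T.filter fun p => decide (φ p ∈ s)) = s := by
      ext x
      simp only [FF, List.mem_toFinset, List.mem_map, List.mem_filter, decide_eq_true_eq]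
      constructor
      · rintro ⟨p, ⟨-, h⟩, rfl⟩
        exact h
      · intro hx
        obtain ⟨p, hp, rfl⟩ := h hx
        exact ⟨p, ⟨hp, hx⟩, rfl⟩
    refine ⟨_, ⟨T, hT, List.mem_sublistsLen.2 ⟨hsub, ?_⟩⟩, e⟩
    rw [← hc, ← FF_card _ ((tets_sorted hT).sublist hsub), e]
    intro p hp
    exact tets_lt hT (hsub.subset hp)
  · rintro ⟨L, hL, rfl⟩
    have hc : (FF L).card = k := by rw [FF_card L (Sub_sorted hL) (Sub_lt hL), Sub_len hL]
    refine ⟨⟨Finset.card_pos.1 (by omega), ?_⟩, hc⟩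
    obtain ⟨T, hT, h⟩ := hL
    refine ⟨T, hT, ?_⟩
    rw [FF_coe]
    exact φS_mono fun p hp => (List.mem_sublistsLen.1 h).1.subset hp

theorem faces_ncard (k : ℕ) (hk : 0 < k) :
    {s ∈ KK.faces | s.card = k}.ncard = (sd (codes k)).length := by
  rw [faces_eq k hk, ← Sub_ncard, Set.ncard_image_of_injOn]
  intro L hL M hM e
  have hp : L.Perm M := by
    rw [List.perm_ext_iff_of_nodup ((Sub_sorted hL).imp fun h => ne_of_lt h)
      ((Sub_sorted hM).imp fun h => ne_of_lt h)]
    intro p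
    exact ⟨mem_of_FF (Sub_lt hL) (Sub_lt hM) e, mem_of_FF (Sub_lt hM) (Sub_lt hL) e.symm⟩
  exact hp.eq_of_pairwise (fun a b _ _ h1 h2 => absurd h1 (not_lt.2 h2.le)) (Sub_sorted hL)
    (Sub_sorted hM)

theorem tet_dist {T : List ℕ} (hT : T ∈ tets) {p q : ℕ} (hp : p ∈ T) (hq : q ∈ T) :
    dist (φ p) (φ q) ≤ √2 / 3 := by
  have h := chk_diam
  rw [List.all_eq_true] at h
  have h := h T hT
  rw [List.all_eq_true] at h
  have h := h p hp
  rw [List.all_eq_true] at h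
  have h := h q hq
  rw [Nat.ble_eq, ← Nat.cast_le (α := ℝ)] at h
  push_cast at h
  rw [EuclideanSpace.dist_eq, Fin.sum_univ_three]
  apply Real.sqrt_le_iff.2
  refine ⟨by positivity, ?_⟩
  simp only [Real.dist_eq, sq_abs, φ_apply, div_pow]
  rw [Real.sq_sqrt (by norm_num)]
  simp only [Fin.val_zero, Fin.val_one, Fin.val_two]
  nlinarith

theorem KK_diam (s : Finset E3) (hs : s ∈ KK.faces) :
    Metric.diam (convexHull ℝ (s : Set E3)) ≤ √2 / 3 := by
  obtain ⟨-, T, hT, h⟩ := mem_KK.1 hs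
  rw [convexHull_diam]
  refine Metric.diam_le_of_forall_dist_le (by positivity) ?_
  intro x hx y hy
  obtain ⟨p, hp, rfl⟩ := h hx
  obtain ⟨q, hq, rfl⟩ := h hy
  exact tet_dist hT hp hq

theorem shift (l : Fin 3) {p : ℕ} (hp : p < 32768) (h0 : crd l p = 0) :
    φ (p + 6 * 32 ^ (l : ℕ)) = φ p + EuclideanSpace.single l (1 : ℝ) := by
  have key : ∀ m : Fin 3, crd m (p + 6 * 32 ^ (l : ℕ)) = crd m p + if m = l then 6 else 0 := by
    intro m
    fin_cases l <;> fin_cases m <;> simp [crd] at h0 ⊢ <;> omega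
  ext m
  simp only [φ_apply, key, PiLp.add_apply, PiLp.single_apply, EuclideanSpace.single]
  by_cases hm : m = l <;> simp [hm]
  ring

theorem tri0 (l : Fin 3) {τ : List ℕ} (hτ : τ ∈ tri l 0) {p : ℕ} (hp : p ∈ τ) :
    φ (p + 6 * 32 ^ (l : ℕ)) = φ p + EuclideanSpace.single l (1 : ℝ) := by
  obtain ⟨T, hT, h⟩ := tri_tet (fin3_mem l) (by simp : 0 ∈ [0, 1, 2]) hτ
  apply shift l (tets_lt hT (h p hp))
  have h := chk_tri0
  rw [List.all_eq_true] at h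
  have h := h l (fin3_mem l)
  rw [List.all_eq_true] at h
  have h := h τ hτ
  rw [List.all_eq_true] at h
  exact Nat.eq_of_beq_eq_true (h p hp)

theorem KK_bij (l : Fin 3) : Set.BijOn
        (fun s : Finset E3 => s.image (fun x => x + EuclideanSpace.single l (1 : ℝ)))
        {s | s ∈ KK.faces ∧ ∀ x ∈ s, x l = 0}
        {s | s ∈ KK.faces ∧ ∀ x ∈ s, x l = 1} := by
  have hl := fin3_mem l
  have hinj : Function.Injective (fun x : E3 => x + EuclideanSpace.single l (1 : ℝ)) :=
    add_left_injective _
  have hco : ∀ x : E3, (x + EuclideanSpace.single l (1 : ℝ)) l = x l + 1 := by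
    intro x
    simp
  refine ⟨?_, ?_, ?_⟩
  · rintro s ⟨hs, h0⟩
    obtain ⟨hn, T, hT, h⟩ := mem_KK.1 hs
    have hsub : (s : Set E3) ⊆ φS (onp l (2 * 0) T) := by
      rw [← onp_eq l (2 * 0) T 0 (by norm_num)]
      exact fun x hx => ⟨h hx, h0 x hx⟩
    rcases onp_tri hl (by simp : 0 ∈ [0, 1, 2]) hT with e | ⟨τ, hτ, e⟩
    · rw [e, φS_nil] at hsub
      obtain ⟨x, hx⟩ := hn
      exact absurd (hsub hx) (Set.notMem_empty x)
    have hsub := hsub.trans (φS_mono e)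
    refine ⟨mem_KK.2 ⟨hn.image _, ?_⟩, ?_⟩
    · have h6 := chk_tri6
      rw [List.all_eq_true] at h6
      have h6 := h6 l hl
      rw [List.all_eq_true] at h6
      have h6 := h6 τ hτ
      simp only [List.any_eq_true, sub_iff] at h6
      obtain ⟨T', hT', h6⟩ := h6
      refine ⟨T', hT', ?_⟩
      intro y hy
      obtain ⟨x, hx, rfl⟩ := Finset.mem_image.1 (Finset.mem_coe.1 hy)
      obtain ⟨p, hp, rfl⟩ := hsub hx
      exact ⟨p + 6 * 32 ^ (l : ℕ), h6 _ (List.mem_map.2 ⟨p, hp, rfl⟩), tri0 l hτ hp⟩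
    · intro y hy
      obtain ⟨x, hx, rfl⟩ := Finset.mem_image.1 hy
      rw [hco, h0 x hx, zero_add]
  · intro s _ t _ e
    exact Finset.image_injective hinj e
  · rintro s ⟨hs, h1⟩
    obtain ⟨hn, T, hT, h⟩ := mem_KK.1 hs
    have hsub : (s : Set E3) ⊆ φS (onp l 6 T) := by
      rw [← onp_eq l 6 T 1 (by norm_num)]
      exact fun x hx => ⟨h hx, h1 x hx⟩
    have h6 := chk_onp6
    rw [List.all_eq_true] at h6
    have h6 := h6 l hl
    rw [List.all_eq_true] at h6
    have h6 := h6 T hT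
    simp only [Bool.or_eq_true, List.isEmpty_iff, List.any_eq_true, sub_iff] at h6
    rcases h6 with e | ⟨τ, hτ, e⟩
    · rw [e, φS_nil] at hsub
      obtain ⟨x, hx⟩ := hn
      exact absurd (hsub hx) (Set.notMem_empty x)
    have hsub := hsub.trans (φS_mono e)
    have key : ∀ x ∈ s, x - EuclideanSpace.single l (1 : ℝ) ∈ φS τ := by
      intro x hx
      obtain ⟨q, hq, rfl⟩ := hsub hx
      obtain ⟨p, hp, rfl⟩ := List.mem_map.1 hq
      refine ⟨p, hp, ?_⟩
      rw [tri0 l hτ hp, add_sub_cancel_right]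
    obtain ⟨T', hT', hs'⟩ := tri_tet hl (by simp : 0 ∈ [0, 1, 2]) hτ
    refine ⟨s.image (fun x => x - EuclideanSpace.single l (1 : ℝ)), ⟨mem_KK.2 ⟨hn.image _, T', hT',
      ?_⟩, ?_⟩, ?_⟩
    · intro y hy
      obtain ⟨x, hx, rfl⟩ := Finset.mem_image.1 (Finset.mem_coe.1 hy)
      exact φS_mono hs' (key x hx)
    · intro y hy
      obtain ⟨x, hx, rfl⟩ := Finset.mem_image.1 hy
      have := hco (x - EuclideanSpace.single l (1 : ℝ))
      rw [sub_add_cancel, h1 x hx] at this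
      linarith
    · ext x
      simp only [Finset.mem_image]
      constructor
      · rintro ⟨_, ⟨z, hz, rfl⟩, rfl⟩
        rwa [sub_add_cancel]
      · intro hx
        exact ⟨_, ⟨x, hx, rfl⟩, sub_add_cancel _ _⟩

end

end CT

/-- There is a `77`-vertex finite geometric simplicial complex triangulating the unit cube
`[0,1]³`, with `64` vertices the points `(i/3, j/3, k/3)`, `0 ≤ i,j,k ≤ 3`, and the
remaining `13` vertices among the `27` points `((2i+1)/6, (2j+1)/6, (2k+1)/6)`,
`0 ≤ i,j,k ≤ 2`; each closed `2`-face of the cube contains exactly `16` vertices; there are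
exactly `202` tetrahedra, `458` triangles and `332` edges; every simplex has diameter at
most `√2/3`; and for each coordinate direction `l`, translation by the standard basis
vector `e_l` maps the simplices contained in the face `{x_l = 0}` bijectively onto the
simplices contained in the opposite face `{x_l = 1}`. -/
theorem cube_triangulation_77_vertices :
    ∃ K : Geometry.SimplicialComplex ℝ (EuclideanSpace ℝ (Fin 3)),
      K.faces.Finite ∧
      -- (a) the space of the complex is the unit cube
      K.space = unitCube ∧
      -- (b) 77 vertices: the 64 grid points together with 13 of the 27 centers
      K.vertices.ncard = 77 ∧
      (∃ C : Set (EuclideanSpace ℝ (Fin 3)), C ⊆ centerGrid ∧ C.ncard = 13 ∧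
        K.vertices = thirdGrid ∪ C) ∧
      -- (c) each closed 2-dimensional face of the cube contains exactly 16 vertices
      (∀ l : Fin 3, ∀ v ∈ ({0, 1} : Set ℝ),
        {x ∈ K.vertices | x l = v}.ncard = 16) ∧
      -- (d) face numbers
      {s ∈ K.faces | s.card = 4}.ncard = 202 ∧
      {s ∈ K.faces | s.card = 3}.ncard = 458 ∧
      {s ∈ K.faces | s.card = 2}.ncard = 332 ∧
      -- (e) every simplex has diameter at most `√2/3`
      (∀ s ∈ K.faces, Metric.diam (convexHull ℝ (s : Set (EuclideanSpace ℝ (Fin 3))))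
        ≤ Real.sqrt 2 / 3) ∧
      -- (f) translation by `e_l` maps the simplices in the face `{x_l = 0}` bijectively
      -- onto the simplices in the face `{x_l = 1}`
      (∀ l : Fin 3, Set.BijOn
        (fun s : Finset (EuclideanSpace ℝ (Fin 3)) =>
          s.image (fun x => x + EuclideanSpace.single l (1 : ℝ)))
        {s | s ∈ K.faces ∧ ∀ x ∈ s, x l = 0}
        {s | s ∈ K.faces ∧ ∀ x ∈ s, x l = 1}) := by
  exact ⟨CT.KK, CT.KK_fin, CT.KK_space,
    by rw [CT.KK_vert, CT.ncard_φS _ fun p hp => CT.verts_lt hp, CT.chk_vlen],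
    ⟨CT.φS CT.cens, CT.cens_sub, by
      rw [CT.ncard_φS _ fun p hp => CT.verts_lt (List.mem_append_right _ hp), CT.chk_clen],
      CT.KK_vert'⟩,
    CT.KK_face,
    by rw [CT.faces_ncard 4 (by norm_num), CT.chk_c4],
    by rw [CT.faces_ncard 3 (by norm_num), CT.chk_c3],
    by rw [CT.faces_ncard 2 (by norm_num), CT.chk_c2],
    CT.KK_diam, CT.KK_bij⟩
end

section
/- Let 0 < r₀ < r₀ + ε < 1/2. There exist smooth functions h₁, h₂, h₃ defined for (r, φ) ∈ (0, r₀+ε] × ℝ and 2π-periodic in φ, such that: (i) h₁(r,φ) = 1, h₂(r,φ) = r² and h₃(r,φ) = 0 whenever 0 < r ≤ r₀; (ii) there is δ > 0 such that for all r ∈ (r₀+ε−δ, r₀+ε] one has h₁(r,φ) = cos(2πx), h₂(r,φ) = (x − 1/2)·sin(2πx) and h₃(r,φ) = sin(φ)·sin(2πx), where x = r·cos(φ) + 1/2; and (iii) for all (r,φ) with 0 < r ≤ r₀+ε, (h₁·∂_r h₂ − h₂·∂_r h₁) − (h₁·∂_φ h₃ − h₃·∂_φ h₁) ≠ 0. 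-/
open Real

lemma cfi_cutoff (p q : ℝ) (h : p < q) : ∃ f : ℝ → ℝ, ContDiff ℝ (⊤ : ℕ∞) f ∧
    (∀ x ≤ p, f x = 0) ∧ (∀ x, q ≤ x → f x = 1) ∧ (∀ x, 0 ≤ f x) ∧ (∀ x, f x ≤ 1) ∧
    (∀ x, 0 ≤ deriv f x) := by
  have hq : 0 < q - p := by linarith
  refine ⟨fun x => Real.smoothTransition ((x - p) / (q - p)), ?_, ?_, ?_, ?_, ?_, ?_⟩
  · exact Real.smoothTransition.contDiff.comp (by fun_prop)
  · intro x hx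
    exact Real.smoothTransition.zero_of_nonpos (div_nonpos_of_nonpos_of_nonneg (by linarith) hq.le)
  · intro x hx
    exact Real.smoothTransition.one_of_one_le ((one_le_div hq).2 (by linarith))
  · intro x; exact Real.smoothTransition.nonneg _
  · intro x; exact Real.smoothTransition.le_one _
  · intro x
    apply Monotone.deriv_nonneg
    intro a b hab
    apply Real.smoothTransition.monotone
    gcongr

/-- The outer complex vector (up to sign). -/
noncomputable def cfiZ (r φ : ℝ) : ℂ :=
  ((Real.cos (2 * π * (r * Real.cos φ)) : ℝ) : ℂ) +
    ((r * Real.cos φ * Real.sin (2 * π * (r * Real.cos φ)) : ℝ) : ℂ) * Complex.I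

/-- The inner complex vector. -/
noncomputable def cfiY (r : ℝ) : ℂ := 1 + ((r ^ 2 : ℝ) : ℂ) * Complex.I

/-- The interpolated logarithm. -/
noncomputable def cfiL (μ ψ : ℝ → ℝ) (r φ : ℝ) : ℂ :=
  ((1 - μ r : ℝ) : ℂ) * Complex.log (cfiY r) +
    ((μ r : ℝ) : ℂ) * (Complex.log (cfiZ r φ) + ((π - ψ r : ℝ) : ℂ) * Complex.I)

lemma cfiZ_re (r φ : ℝ) : (cfiZ r φ).re = Real.cos (2 * π * (r * Real.cos φ)) := by
  simp only [cfiZ, Complex.add_re, Complex.re_ofReal_mul, Complex.ofReal_re, Complex.I_re]; ring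

lemma cfiZ_im (r φ : ℝ) :
    (cfiZ r φ).im = r * Real.cos φ * Real.sin (2 * π * (r * Real.cos φ)) := by
  simp only [cfiZ, Complex.add_im, Complex.im_ofReal_mul, Complex.ofReal_im, Complex.I_im]; ring

lemma cfiY_re (r : ℝ) : (cfiY r).re = 1 := by
  simp only [cfiY, Complex.add_re, Complex.re_ofReal_mul, Complex.one_re, Complex.I_re]; ring

lemma cfiY_im (r : ℝ) : (cfiY r).im = r ^ 2 := by
  simp only [cfiY, Complex.add_im, Complex.im_ofReal_mul, Complex.one_im, Complex.I_im]; ring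

lemma cfiY_slit (r : ℝ) : cfiY r ∈ Complex.slitPlane := by
  rw [Complex.mem_slitPlane_iff, cfiY_re]; left; norm_num

lemma cfi_abs (r φ : ℝ) (h0 : 0 < r) (h1 : r < 1 / 2) : |r * Real.cos φ| < 1 / 2 := by
  rw [abs_mul, abs_of_pos h0]
  have := Real.abs_cos_le_one φ
  nlinarith [abs_nonneg (Real.cos φ)]

lemma cfi_tsin (t : ℝ) (h : |t| < 1 / 2) : 0 ≤ t * Real.sin (2 * π * t) := by
  have hp := Real.pi_pos
  obtain ⟨h1, h2⟩ := abs_lt.1 h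
  rcases le_total 0 t with ht | ht
  · exact mul_nonneg ht (Real.sin_nonneg_of_nonneg_of_le_pi (by positivity) (by nlinarith))
  · have := Real.sin_nonneg_of_nonneg_of_le_pi (x := 2 * π * (-t))
      (mul_nonneg (by positivity) (by linarith)) (by nlinarith)
    rw [mul_neg, Real.sin_neg] at this
    nlinarith

lemma cfiZ_slit (r φ : ℝ) (h0 : 0 < r) (h1 : r < 1 / 2) : cfiZ r φ ∈ Complex.slitPlane := by
  rw [Complex.mem_slitPlane_iff, cfiZ_re, cfiZ_im]
  have hp := Real.pi_pos
  have hb := cfi_abs r φ h0 h1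
  set t := r * Real.cos φ
  by_cases ht : t = 0
  · left; simp [ht]
  · right
    refine mul_ne_zero ht ?_
    obtain ⟨h1, h2⟩ := abs_lt.1 hb
    intro hs
    have := (Real.sin_eq_zero_iff_of_lt_of_lt (x := 2 * π * t) (by nlinarith) (by nlinarith)).1 hs
    rcases mul_eq_zero.1 this with h | h
    · linarith
    · exact ht h

lemma cfi_P (r u : ℝ) (h0 : 0 < r) :
    0 ≤ u * Real.sin (2 * π * (r * u)) * Real.cos (2 * π * (r * u)) + 2 * π * r * u ^ 2 := by
  have hp := Real.pi_pos
  set s := 2 * π * (r * u) with hs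
  have hc : 0 < 2 * π * r := by positivity
  have key : 0 ≤ s * (Real.sin s * Real.cos s) + s ^ 2 := by
    have a1 := Real.abs_sin_le_abs (x := s)
    have a2 := Real.abs_cos_le_one s
    have : |s * (Real.sin s * Real.cos s)| ≤ s ^ 2 := by
      rw [abs_mul s, abs_mul (Real.sin s), ← sq_abs s, sq]
      apply mul_le_mul_of_nonneg_left _ (abs_nonneg s)
      calc _ ≤ |s| * 1 := by gcongr
        _ = _ := mul_one _
    linarith [(abs_le.1 this).1]
  have e : s * (Real.sin s * Real.cos s) + s ^ 2 =
      (2 * π * r) * (u * Real.sin s * Real.cos s + 2 * π * r * u ^ 2) := by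
    rw [hs]; ring
  rw [e] at key
  exact nonneg_of_mul_nonneg_right key hc

lemma cfiZ_hasDeriv (r φ : ℝ) : HasDerivAt (fun r' => cfiZ r' φ)
    (((-Real.sin (2 * π * (r * Real.cos φ)) * (2 * π * Real.cos φ) : ℝ) : ℂ) +
     ((Real.cos φ * Real.sin (2 * π * (r * Real.cos φ)) + r * Real.cos φ *
       (Real.cos (2 * π * (r * Real.cos φ)) * (2 * π * Real.cos φ)) : ℝ) : ℂ) * Complex.I) r := by
  have hs : HasDerivAt (fun r' : ℝ => 2 * π * (r' * Real.cos φ)) (2 * π * Real.cos φ) r := by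
    simpa using ((hasDerivAt_id r).mul_const (Real.cos φ)).const_mul (2 * π)
  have hu : HasDerivAt (fun r' : ℝ => r' * Real.cos φ) (Real.cos φ) r := by
    simpa using ((hasDerivAt_id r).mul_const (Real.cos φ))
  exact hs.cos.ofReal_comp.add ((hu.mul hs.sin).ofReal_comp.mul_const Complex.I)

lemma cfiY_hasDeriv (r : ℝ) : HasDerivAt cfiY (((2 * r : ℝ) : ℂ) * Complex.I) r := by
  have : HasDerivAt (fun r : ℝ => r ^ 2) (2 * r) r := by simpa using hasDerivAt_pow 2 r
  exact (this.ofReal_comp.mul_const Complex.I).const_add 1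

/-- Derivative of the interpolated logarithm; only the imaginary part matters. -/
lemma cfiL_hasDeriv (μ ψ : ℝ → ℝ) (μ' ψ' r φ : ℝ) (hμ : HasDerivAt μ μ' r)
    (hψ : HasDerivAt ψ ψ' r) (h0 : 0 < r) (h1 : r < 1 / 2) :
    ∃ D : ℂ, HasDerivAt (fun r' => cfiL μ ψ r' φ) D r ∧
      D.im = (1 - μ r) * (2 * r / (1 + r ^ 4)) +
        μ' * ((cfiZ r φ).arg + π - ψ r - (cfiY r).arg) +
        μ r * ((Real.cos φ * Real.sin (2 * π * (r * Real.cos φ)) *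
          Real.cos (2 * π * (r * Real.cos φ)) + 2 * π * r * Real.cos φ ^ 2) /
            Complex.normSq (cfiZ r φ) - ψ') := by
  refine ⟨_, (((hμ.const_sub 1).ofReal_comp.mul ((cfiY_hasDeriv r).clog_real (cfiY_slit r))).add
    (hμ.ofReal_comp.mul (((cfiZ_hasDeriv r φ).clog_real (cfiZ_slit r φ h0 h1)).add
      ((hψ.const_sub π).ofReal_comp.mul_const Complex.I)))), ?_⟩
  have e1 : (((2 * r : ℝ) : ℂ) * Complex.I / cfiY r).im = 2 * r / (1 + r ^ 4) := by
    rw [Complex.div_im, Complex.normSq_apply, cfiY_re, cfiY_im]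
    simp only [Complex.im_ofReal_mul, Complex.re_ofReal_mul, Complex.I_re, Complex.I_im]
    ring_nf
  have e2 : ((((-Real.sin (2 * π * (r * Real.cos φ)) * (2 * π * Real.cos φ) : ℝ) : ℂ) +
     ((Real.cos φ * Real.sin (2 * π * (r * Real.cos φ)) + r * Real.cos φ *
       (Real.cos (2 * π * (r * Real.cos φ)) * (2 * π * Real.cos φ)) : ℝ) : ℂ) * Complex.I) /
       cfiZ r φ).im = (Real.cos φ * Real.sin (2 * π * (r * Real.cos φ)) *
          Real.cos (2 * π * (r * Real.cos φ)) + 2 * π * r * Real.cos φ ^ 2) /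
            Complex.normSq (cfiZ r φ) := by
    rw [Complex.div_im, cfiZ_re, cfiZ_im, ← sub_div]
    congr 1
    simp only [Complex.add_im, Complex.add_re, Complex.im_ofReal_mul, Complex.re_ofReal_mul,
      Complex.I_re, Complex.I_im, Complex.ofReal_re, Complex.ofReal_im]
    have := Real.sin_sq_add_cos_sq (2 * π * (r * Real.cos φ))
    linear_combination (2 * π * r * Real.cos φ ^ 2) * this
  simp only [Complex.add_im, Complex.im_ofReal_mul, Complex.I_im, e1, e2, Complex.log_im]
  ring

lemma cfiL_inner (μ ψ : ℝ → ℝ) (r φ : ℝ) (h : μ r = 0) :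
    Complex.exp (cfiL μ ψ r φ) = cfiY r := by
  simp only [cfiL, h]
  simp only [sub_zero, Complex.ofReal_one, one_mul, Complex.ofReal_zero, zero_mul, add_zero]
  exact Complex.exp_log (Complex.slitPlane_ne_zero (cfiY_slit r))

lemma cfiL_outer (μ ψ : ℝ → ℝ) (r φ : ℝ) (h : μ r = 1) (h0 : 0 < r) (h1 : r < 1 / 2) :
    Complex.exp (cfiL μ ψ r φ) = cfiZ r φ *
      (((-Real.cos (ψ r) : ℝ) : ℂ) + ((Real.sin (ψ r) : ℝ) : ℂ) * Complex.I) := by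
  simp only [cfiL, h]
  simp only [sub_self, Complex.ofReal_one, one_mul, Complex.ofReal_zero, zero_mul, zero_add]
  rw [Complex.exp_add, Complex.exp_log (Complex.slitPlane_ne_zero (cfiZ_slit r φ h0 h1)),
    Complex.exp_mul_I, ← Complex.ofReal_cos, ← Complex.ofReal_sin, Real.cos_pi_sub,
    Real.sin_pi_sub]

lemma cfiL_smooth (μ ψ : ℝ → ℝ) (hμ : ContDiff ℝ (⊤ : ℕ∞) μ) (hψ : ContDiff ℝ (⊤ : ℕ∞) ψ)
    (R : ℝ) (hR : R < 1 / 2) :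
    ContDiffOn ℝ (⊤ : ℕ∞) (fun p : ℝ × ℝ => Complex.exp (cfiL μ ψ p.1 p.2))
      (Set.Ioc 0 R ×ˢ Set.univ) := by
  have hof : ContDiff ℝ (⊤ : ℕ∞) (fun x : ℝ => (x : ℂ)) := Complex.ofRealCLM.contDiff
  have hZ : ContDiff ℝ (⊤ : ℕ∞) (fun p : ℝ × ℝ => cfiZ p.1 p.2) := by
    unfold cfiZ
    exact (hof.comp (by fun_prop)).add ((hof.comp (by fun_prop)).mul contDiff_const)
  have hY : ContDiff ℝ (⊤ : ℕ∞) (fun p : ℝ × ℝ => cfiY p.1) := by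
    unfold cfiY
    exact contDiff_const.add ((hof.comp (by fun_prop)).mul contDiff_const)
  rintro ⟨r, φ⟩ ⟨⟨h0, h1⟩, -⟩
  apply ContDiffAt.contDiffWithinAt
  simp only at h0 h1
  have lZ : ContDiffAt ℝ (⊤ : ℕ∞) (fun p : ℝ × ℝ => Complex.log (cfiZ p.1 p.2)) (r, φ) :=
    ContDiffAt.comp (g := Complex.log) (r, φ) ((Complex.contDiffAt_log (cfiZ_slit r φ h0 (by linarith))).restrict_scalars ℝ)
      hZ.contDiffAt
  have lY : ContDiffAt ℝ (⊤ : ℕ∞) (fun p : ℝ × ℝ => Complex.log (cfiY p.1)) (r, φ) :=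
    ContDiffAt.comp (g := Complex.log) (r, φ) ((Complex.contDiffAt_log (cfiY_slit r)).restrict_scalars ℝ)
      hY.contDiffAt
  apply ContDiffAt.cexp
  unfold cfiL
  have m1 : ContDiff ℝ (⊤ : ℕ∞) (fun p : ℝ × ℝ => ((1 - μ p.1 : ℝ) : ℂ)) :=
    hof.comp (contDiff_const.sub (hμ.comp contDiff_fst))
  have m2 : ContDiff ℝ (⊤ : ℕ∞) (fun p : ℝ × ℝ => ((μ p.1 : ℝ) : ℂ)) :=
    hof.comp (hμ.comp contDiff_fst)
  have m3 : ContDiff ℝ (⊤ : ℕ∞) (fun p : ℝ × ℝ => ((π - ψ p.1 : ℝ) : ℂ)) :=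
    hof.comp (contDiff_const.sub (hψ.comp contDiff_fst))
  exact (m1.contDiffAt.mul lY).add (m2.contDiffAt.mul
    (lZ.add (m3.contDiffAt.mul contDiffAt_const)))

/-- The radial part of the contact condition. -/
lemma cfi_radial (F : ℝ → ℂ) (D : ℂ) (r : ℝ) (h : HasDerivAt F D r) :
    (Complex.exp (F r)).re * deriv (fun x => (Complex.exp (F x)).im) r -
      (Complex.exp (F r)).im * deriv (fun x => (Complex.exp (F x)).re) r =
      Complex.normSq (Complex.exp (F r)) * D.im := by
  have hE := h.cexp
  have h1 : HasDerivAt (fun x => (Complex.exp (F x)).re) (Complex.exp (F r) * D).re r :=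
    Complex.reCLM.hasFDerivAt.comp_hasDerivAt r hE
  have h2 : HasDerivAt (fun x => (Complex.exp (F x)).im) (Complex.exp (F r) * D).im r :=
    Complex.imCLM.hasFDerivAt.comp_hasDerivAt r hE
  rw [h1.deriv, h2.deriv, Complex.mul_re, Complex.mul_im, Complex.normSq_apply]
  ring

/-- The angular part of the contact condition. -/
lemma cfi_angular (r φ c d χ : ℝ) :
    (-(c * Real.cos (2 * π * (r * Real.cos φ))
        + d * (r * Real.cos φ * Real.sin (2 * π * (r * Real.cos φ))))) *
      deriv (fun φ' => χ * (-(Real.sin φ' * Real.sin (2 * π * (r * Real.cos φ'))))) φ -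
    χ * (-(Real.sin φ * Real.sin (2 * π * (r * Real.cos φ)))) *
      deriv (fun φ' => -(c * Real.cos (2 * π * (r * Real.cos φ'))
        + d * (r * Real.cos φ' * Real.sin (2 * π * (r * Real.cos φ'))))) φ =
    χ * (c * (Real.cos φ * Real.sin (2 * π * (r * Real.cos φ)) *
          Real.cos (2 * π * (r * Real.cos φ)) + 2 * π * r * Real.cos φ ^ 2 - 2 * π * r)
      + d * (r * Real.sin (2 * π * (r * Real.cos φ)) ^ 2)) := by
  have hu : HasDerivAt (fun x : ℝ => r * Real.cos x) (r * (-Real.sin φ)) φ :=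
    (Real.hasDerivAt_cos φ).const_mul r
  have hs : HasDerivAt (fun x : ℝ => 2 * π * (r * Real.cos x)) (2 * π * (r * (-Real.sin φ))) φ :=
    hu.const_mul (2 * π)
  have d1 := (((Real.hasDerivAt_sin φ).mul hs.sin).neg).const_mul χ
  have d2 := ((hs.cos.const_mul c).add ((hu.mul hs.sin).const_mul d)).neg
  have e1 := d1.deriv
  have e2 := d2.deriv
  simp only [Pi.mul_def, Pi.neg_def, Pi.add_def] at e1 e2
  rw [e1, e2]
  have t1 := Real.sin_sq_add_cos_sq (2 * π * (r * Real.cos φ))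
  have t2 := Real.sin_sq_add_cos_sq φ
  generalize Real.sin (2 * π * (r * Real.cos φ)) = S at *
  generalize Real.cos (2 * π * (r * Real.cos φ)) = C at *
  generalize Real.sin φ = v at *
  generalize Real.cos φ = u at *
  have hv : v ^ 2 = 1 - u ^ 2 := by linarith
  have hS : S ^ 2 = 1 - C ^ 2 := by linarith
  ring_nf
  simp only [hv, hS]
  ring



/-- There exist smooth functions `h₁, h₂, h₃` of `(r, φ) ∈ (0, r₀+ε] × ℝ`, `2π`-periodic
in `φ`, which agree with `(1, r², 0)` for `r ≤ r₀`, agree near `r = r₀+ε` with the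
coefficients of the contact form `α₀ = cos(2πx) dz + sin(2πx) dy` written in polar
coordinates (where `x = r cos φ + 1/2`), and satisfy the contact condition
`(h₁ ∂_r h₂ − h₂ ∂_r h₁) − (h₁ ∂_φ h₃ − h₃ ∂_φ h₁) ≠ 0` throughout. -/
theorem contact_form_interpolation_on_torus (r₀ ε : ℝ)
    (hr₀ : 0 < r₀) (hε : r₀ < r₀ + ε) (hhalf : r₀ + ε < 1 / 2) :
    ∃ h₁ h₂ h₃ : ℝ → ℝ → ℝ,
      -- smoothness on `(0, r₀+ε] × ℝ`
      ContDiffOn ℝ (⊤ : ℕ∞) (fun p : ℝ × ℝ => h₁ p.1 p.2) (Set.Ioc 0 (r₀ + ε) ×ˢ Set.univ) ∧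
      ContDiffOn ℝ (⊤ : ℕ∞) (fun p : ℝ × ℝ => h₂ p.1 p.2) (Set.Ioc 0 (r₀ + ε) ×ˢ Set.univ) ∧
      ContDiffOn ℝ (⊤ : ℕ∞) (fun p : ℝ × ℝ => h₃ p.1 p.2) (Set.Ioc 0 (r₀ + ε) ×ˢ Set.univ) ∧
      -- `2π`-periodicity in `φ`
      (∀ r φ : ℝ, h₁ r (φ + 2 * π) = h₁ r φ) ∧
      (∀ r φ : ℝ, h₂ r (φ + 2 * π) = h₂ r φ) ∧
      (∀ r φ : ℝ, h₃ r (φ + 2 * π) = h₃ r φ) ∧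
      -- (i) standard form for `0 < r ≤ r₀`
      (∀ φ : ℝ, ∀ r ∈ Set.Ioc 0 r₀,
        h₁ r φ = 1 ∧ h₂ r φ = r ^ 2 ∧ h₃ r φ = 0) ∧
      -- (ii) boundary values near `r = r₀ + ε`
      (∃ δ > 0, ∀ φ : ℝ, ∀ r ∈ Set.Ioc (r₀ + ε - δ) (r₀ + ε),
        h₁ r φ = Real.cos (2 * π * (r * Real.cos φ + 1 / 2)) ∧
        h₂ r φ = ((r * Real.cos φ + 1 / 2) - 1 / 2) *
          Real.sin (2 * π * (r * Real.cos φ + 1 / 2)) ∧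
        h₃ r φ = Real.sin φ * Real.sin (2 * π * (r * Real.cos φ + 1 / 2))) ∧
      -- (iii) the contact condition
      (∀ φ : ℝ, ∀ r ∈ Set.Ioc 0 (r₀ + ε),
        (h₁ r φ * deriv (fun r' => h₂ r' φ) r - h₂ r φ * deriv (fun r' => h₁ r' φ) r) -
        (h₁ r φ * deriv (fun φ' => h₃ r φ') φ - h₃ r φ * deriv (fun φ' => h₁ r φ') φ)
          ≠ 0) := by
  have hp := Real.pi_pos
  have hp3 := Real.pi_gt_three
  set R := r₀ + ε with hR
  have hεp : 0 < ε := by linarith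
  set a := r₀ + ε / 3 with ha
  set b := r₀ + 2 * ε / 3 with hb
  obtain ⟨μ, μs, μ0, μ1, μn, μl, μd⟩ := cfi_cutoff r₀ a (by linarith)
  obtain ⟨χ, χs, χ0, χ1, χn, χl, χd⟩ := cfi_cutoff a b (by linarith)
  let ψ : ℝ → ℝ := fun r => (b - r) * (1 - χ r)
  have ψs : ContDiff ℝ (⊤ : ℕ∞) ψ := (contDiff_const.sub contDiff_id).mul (contDiff_const.sub χs)
  have ψd : ∀ r, HasDerivAt ψ (-(1 - χ r) - (b - r) * deriv χ r) r := by
    intro r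
    have hχ : HasDerivAt χ (deriv χ r) r := (χs.differentiable (by simp) r).hasDerivAt
    have := ((hasDerivAt_id r).const_sub b).mul (hχ.const_sub 1)
    refine this.congr_deriv ?_
    simp only [id]; ring
  have ψ'le : ∀ r, 0 ≤ (b - r) * deriv χ r := by
    intro r
    rcases le_total r b with h | h
    · exact mul_nonneg (by linarith) (χd r)
    · have : deriv χ r = 0 := by
        apply IsLocalMax.deriv_eq_zero
        refine Filter.Eventually.of_forall fun x => ?_
        rw [χ1 r h]; exact χl x
      rw [this]; simp
  have ψ0 : ∀ r, 0 ≤ ψ r := by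
    intro r
    rcases le_total r b with h | h
    · exact mul_nonneg (by linarith) (by linarith [χl r])
    · simp [ψ, χ1 r h]
  have ψ1 : ∀ r, 0 < r → ψ r ≤ 1 / 2 := by
    intro r hr
    rcases le_total r b with h | h
    · have h1 := χl r
      have h2 := χn r
      show (b - r) * (1 - χ r) ≤ 1 / 2
      nlinarith
    · simp [ψ, χ1 r h]
  have trig1 : ∀ φ r : ℝ, Real.cos (2 * π * (r * Real.cos φ + 1 / 2)) =
      -Real.cos (2 * π * (r * Real.cos φ)) := by
    intro φ r
    rw [← Real.cos_add_pi]; congr 1; ring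
  have trig2 : ∀ φ r : ℝ, Real.sin (2 * π * (r * Real.cos φ + 1 / 2)) =
      -Real.sin (2 * π * (r * Real.cos φ)) := by
    intro φ r
    rw [← Real.sin_add_pi]; congr 1; ring
  have per : ∀ r φ, cfiL μ ψ r (φ + 2 * π) = cfiL μ ψ r φ := by
    intro r φ
    simp only [cfiL, cfiZ, Real.cos_add_two_pi]
  have houtre : ∀ φ r, 0 < r → r < 1 / 2 → μ r = 1 → (Complex.exp (cfiL μ ψ r φ)).re =
      -(Real.cos (ψ r) * Real.cos (2 * π * (r * Real.cos φ))
        + Real.sin (ψ r) * (r * Real.cos φ * Real.sin (2 * π * (r * Real.cos φ)))) := by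
    intro φ r h0 h1 h
    rw [cfiL_outer μ ψ r φ h h0 h1, Complex.mul_re, cfiZ_re, cfiZ_im]
    simp only [Complex.add_im, Complex.add_re, Complex.im_ofReal_mul, Complex.re_ofReal_mul,
      Complex.I_re, Complex.I_im, Complex.ofReal_re, Complex.ofReal_im]
    ring
  have houtim : ∀ φ r, 0 < r → r < 1 / 2 → μ r = 1 → (Complex.exp (cfiL μ ψ r φ)).im =
      -(Real.cos (ψ r) * (r * Real.cos φ * Real.sin (2 * π * (r * Real.cos φ)))
        - Real.sin (ψ r) * Real.cos (2 * π * (r * Real.cos φ))) := by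
    intro φ r h0 h1 h
    rw [cfiL_outer μ ψ r φ h h0 h1, Complex.mul_im, cfiZ_re, cfiZ_im]
    simp only [Complex.add_im, Complex.add_re, Complex.im_ofReal_mul, Complex.re_ofReal_mul,
      Complex.I_re, Complex.I_im, Complex.ofReal_re, Complex.ofReal_im]
    ring
  have hsm := cfiL_smooth μ ψ μs ψs R hhalf
  refine ⟨fun r φ => (Complex.exp (cfiL μ ψ r φ)).re, fun r φ => (Complex.exp (cfiL μ ψ r φ)).im,
    fun r φ => χ r * (-(Real.sin φ * Real.sin (2 * π * (r * Real.cos φ)))),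
    Complex.reCLM.contDiff.comp_contDiffOn hsm, Complex.imCLM.contDiff.comp_contDiffOn hsm,
    ?_, ?_, ?_, ?_, ?_, ?_, ?_⟩
  · apply ContDiff.contDiffOn
    exact (χs.comp contDiff_fst).mul (by fun_prop)
  · intro r φ; simp only [per]
  · intro r φ; simp only [per]
  · intro r φ; simp only [Real.cos_add_two_pi, Real.sin_add_two_pi]
  · rintro φ r ⟨h0, h1⟩
    simp only [cfiL_inner μ ψ r φ (μ0 r h1), cfiY_re, cfiY_im, χ0 r (by linarith), zero_mul,
      and_self]
  · refine ⟨ε / 3, by linarith, ?_⟩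
    rintro φ r ⟨h0, h1⟩
    have hr0 : 0 < r := by linarith
    have hrb : b ≤ r := by linarith
    have hm := μ1 r (by linarith)
    have hψ : ψ r = 0 := by simp [ψ, χ1 r hrb]
    simp only [houtre φ r hr0 (by linarith) hm, houtim φ r hr0 (by linarith) hm, hψ, χ1 r hrb,
      trig1, trig2, Real.cos_zero, Real.sin_zero]
    refine ⟨by ring, by ring, by ring⟩
  · rintro φ r ⟨h0, h1⟩
    have hr : r < 1 / 2 := by linarith
    have hμ : HasDerivAt μ (deriv μ r) r := (μs.differentiable (by simp) r).hasDerivAt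
    obtain ⟨D, hD, hDi⟩ := cfiL_hasDeriv μ ψ _ _ r φ hμ (ψd r) h0 hr
    have hrad := cfi_radial _ D r hD
    simp only at hrad ⊢
    rw [hrad]
    have hargZ : 0 ≤ (cfiZ r φ).arg := by
      rw [Complex.arg_nonneg_iff, cfiZ_im]
      exact cfi_tsin _ (cfi_abs r φ h0 hr)
    have hargY : (cfiY r).arg ≤ π / 2 := by
      have : |(cfiY r).arg| < π / 2 := by
        rw [Complex.abs_arg_lt_pi_div_two_iff, cfiY_re]; left; norm_num
      exact (abs_lt.1 this).2.le
    have hP := cfi_P r (Real.cos φ) h0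
    have hNZ : 0 < Complex.normSq (cfiZ r φ) :=
      Complex.normSq_pos.2 (Complex.slitPlane_ne_zero (cfiZ_slit r φ h0 hr))
    have hmid : 0 ≤ deriv μ r * ((cfiZ r φ).arg + π - ψ r - (cfiY r).arg) :=
      mul_nonneg (μd r) (by linarith [ψ1 r h0])
    have hψr := ψ'le r
    apply ne_of_gt
    by_cases hχ : χ r = 0
    · simp only [hχ, zero_mul, deriv_const, mul_zero, sub_zero]
      apply mul_pos (Complex.normSq_pos.2 (Complex.exp_ne_zero _))
      rw [hDi, hχ]
      have hq : 0 < 2 * r / (1 + r ^ 4) := by positivity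
      have hq2 := div_nonneg hP hNZ.le
      set A := 2 * r / (1 + r ^ 4)
      set B := (Real.cos φ * Real.sin (2 * π * (r * Real.cos φ)) *
          Real.cos (2 * π * (r * Real.cos φ)) + 2 * π * r * Real.cos φ ^ 2) /
            Complex.normSq (cfiZ r φ)
      have hB : 1 ≤ B - (-(1 - 0) - (b - r) * deriv χ r) := by linarith
      have m0 := μn r
      have m1 := μl r
      rcases eq_or_lt_of_le m0 with h | h
      · rw [← h]; linarith
      · have : 0 ≤ (1 - μ r) * A := mul_nonneg (by linarith) hq.le
        nlinarith
    · have hχp : 0 < χ r := lt_of_le_of_ne (χn r) (Ne.symm hχ)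
      have hra : a < r := by
        by_contra h
        exact hχ (χ0 r (not_lt.1 h))
      have hm := μ1 r hra.le
      have hfun : (fun φ' => (Complex.exp (cfiL μ ψ r φ')).re) = fun φ' =>
        -(Real.cos (ψ r) * Real.cos (2 * π * (r * Real.cos φ'))
        + Real.sin (ψ r) * (r * Real.cos φ' * Real.sin (2 * π * (r * Real.cos φ')))) := by
        funext φ'; exact houtre φ' r h0 hr hm
      rw [hfun, houtre φ r h0 hr hm, cfi_angular]
      have hN : Complex.normSq (Complex.exp (cfiL μ ψ r φ)) = Complex.normSq (cfiZ r φ) := by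
        rw [cfiL_outer μ ψ r φ hm h0 hr, map_mul]
        have : Complex.normSq (((-Real.cos (ψ r) : ℝ) : ℂ) +
            ((Real.sin (ψ r) : ℝ) : ℂ) * Complex.I) = 1 := by
          rw [Complex.normSq_add_mul_I]
          linarith [Real.sin_sq_add_cos_sq (ψ r)]
        rw [this, mul_one]
      rw [hN]
      set P := Real.cos φ * Real.sin (2 * π * (r * Real.cos φ)) *
          Real.cos (2 * π * (r * Real.cos φ)) + 2 * π * r * Real.cos φ ^ 2 with hPdef
      have hDP : P ≤ Complex.normSq (cfiZ r φ) * D.im := by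
        have : P / Complex.normSq (cfiZ r φ) ≤ D.im := by
          rw [hDi, hm]; linarith [χl r]
        rwa [div_le_iff₀' hNZ] at this
      have hc1 := Real.cos_le_one (ψ r)
      have hs0 : 0 ≤ Real.sin (ψ r) :=
        Real.sin_nonneg_of_nonneg_of_le_pi (ψ0 r) (by linarith [ψ1 r h0])
      have hs1 : Real.sin (ψ r) ≤ 1 / 2 := (Real.sin_le (ψ0 r)).trans (ψ1 r h0)
      have hc0 : 1 / 2 ≤ Real.cos (ψ r) := by
        have := Real.one_sub_sq_div_two_le_cos (x := ψ r)
        nlinarith [ψ1 r h0, ψ0 r]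
      have hS : Real.sin (2 * π * (r * Real.cos φ)) ^ 2 ≤ 1 := Real.sin_sq_le_one _
      have hS0 : 0 ≤ Real.sin (2 * π * (r * Real.cos φ)) ^ 2 := sq_nonneg _
      set S2 := Real.sin (2 * π * (r * Real.cos φ)) ^ 2
      set c := Real.cos (ψ r)
      set d := Real.sin (ψ r)
      have k1 : χ r * c * P ≤ P := by
        have : χ r * c ≤ 1 := mul_le_one₀ (χl r) (by linarith) hc1
        exact mul_le_of_le_one_left hP this
      have k2 : d * (r * S2) ≤ 1 / 2 * (r * 1) := by gcongr
      have k3 : r < c * (2 * π * r) := by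
        have : (1 / 2) * (2 * π * r) ≤ c * (2 * π * r) := by gcongr
        have : 0 < r * (π - 1) := mul_pos h0 (by linarith)
        linarith
      have k4 : 0 < χ r * (c * (2 * π * r) - d * (r * S2)) := mul_pos hχp (by linarith)
      have k5 : χ r * (c * (P - 2 * π * r) + d * (r * S2)) = χ r * c * P -
          χ r * (c * (2 * π * r) - d * (r * S2)) := by ring
      rw [k5]
      linarith
end

section
/- For every R with 0 < R < 1 there exist infinitely differentiable functions h₁, h₂ : ℝ → ℝ such that: (i) h₁(r) = −cos(πr/R) and h₂(r) = r²·sin(πr/R) for all r ∈ [0, R]; (ii) there is δ > 0 such that h₁(r) = 1 and h₂(r) = −r² for all r ∈ (1−δ, 1]; and (iii) h₁(r)·h₂′(r) − h₂(r)·h₁′(r) ≠ 0 for all r ∈ (0, 1]. -/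
open Real

/-- For every `0 < R < 1` there exist smooth functions `h₁, h₂ : ℝ → ℝ` with
`h₁(r) = −cos(πr/R)` and `h₂(r) = r² sin(πr/R)` on `[0, R]`, with `h₁(r) = 1` and
`h₂(r) = −r²` near `r = 1`, and satisfying the contact condition
`h₁ h₂′ − h₂ h₁′ ≠ 0` on `(0, 1]`.  (Such a pair realizes the Lutz twist of the standard
contact structure along the core of the solid torus, with overtwisted disks of radius
`R` in the meridional disks.) -/
theorem lutz_twist_profile_exists (R : ℝ) (hR0 : 0 < R) (hR1 : R < 1) :
    ∃ h₁ h₂ : ℝ → ℝ,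
      ContDiff ℝ (⊤ : ℕ∞) h₁ ∧ ContDiff ℝ (⊤ : ℕ∞) h₂ ∧
      -- (i) prescribed values on `[0, R]`
      (∀ r ∈ Set.Icc (0 : ℝ) R,
        h₁ r = -Real.cos (π * r / R) ∧ h₂ r = r ^ 2 * Real.sin (π * r / R)) ∧
      -- (ii) prescribed values near `r = 1`
      (∃ δ > 0, ∀ r ∈ Set.Ioc (1 - δ) (1 : ℝ), h₁ r = 1 ∧ h₂ r = -r ^ 2) ∧
      -- (iii) the contact condition on `(0, 1]`
      (∀ r ∈ Set.Ioc (0 : ℝ) 1, h₁ r * deriv h₂ r - h₂ r * deriv h₁ r ≠ 0) := by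
  have hpi := Real.pi_pos
  obtain ⟨b, hb⟩ : ∃ b, b = R + R * (1 - R) / 4 := ⟨_, rfl⟩
  have hRb : R < b := by nlinarith
  have hb1 : b < 1 := by nlinarith
  have hb54 : b ≤ 5 / 4 * R := by nlinarith
  have hm : 0 < b - R := by linarith
  obtain ⟨χ, hχ⟩ : ∃ χ : ℝ → ℝ, χ = fun r => Real.smoothTransition ((r - R) / (b - R)) := ⟨_, rfl⟩
  have hχs : ContDiff ℝ (⊤ : ℕ∞) χ := by
    rw [hχ]
    exact Real.smoothTransition.contDiff.comp ((contDiff_id.sub contDiff_const).div_const _)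
  have hχ0 : ∀ r, r ≤ R → χ r = 0 := by
    intro r hr
    rw [hχ]
    exact Real.smoothTransition.zero_of_nonpos (div_nonpos_of_nonpos_of_nonneg (by linarith) hm.le)
  have hχ1 : ∀ r, b ≤ r → χ r = 1 := by
    intro r hr
    rw [hχ]
    exact Real.smoothTransition.one_of_one_le ((one_le_div hm).2 (by linarith))
  have hχn : ∀ r, 0 ≤ χ r := fun r => by rw [hχ]; exact Real.smoothTransition.nonneg _
  have hχl : ∀ r, χ r ≤ 1 := fun r => by rw [hχ]; exact Real.smoothTransition.le_one _
  have hχm : Monotone χ := by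
    intro x y hxy
    rw [hχ]
    apply Real.smoothTransition.monotone
    show (x - R) / (b - R) ≤ (y - R) / (b - R)
    gcongr
  have hd : ∀ r, 0 ≤ deriv χ r := fun r => hχm.deriv_nonneg
  have hd0 : ∀ r, r < R → deriv χ r = 0 := by
    intro r hr
    have : χ =ᶠ[nhds r] fun _ => 0 := by
      filter_upwards [Iio_mem_nhds hr] with x hx using hχ0 x (le_of_lt hx)
    rw [this.deriv_eq]; simp
  have hd1 : ∀ r, b < r → deriv χ r = 0 := by
    intro r hr
    have : χ =ᶠ[nhds r] fun _ => 1 := by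
      filter_upwards [Ioi_mem_nhds hr] with x hx using hχ1 x (le_of_lt hx)
    rw [this.deriv_eq]; simp
  refine ⟨fun r => (1 - χ r) * (-Real.cos (π * r / R)) + χ r,
    fun r => (1 - χ r) * (r ^ 2 * Real.sin (π * r / R)) + χ r * (-r ^ 2), ?_, ?_, ?_, ?_, ?_⟩
  · fun_prop
  · fun_prop
  · intro r hr
    simp [hχ0 r hr.2]
  · refine ⟨1 - b, by linarith, fun r hr => ?_⟩
    have := hr.1
    simp [hχ1 r (by linarith)]
  · intro r hr
    obtain ⟨hr0, hr1⟩ := hr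
    have hχd : HasDerivAt χ (deriv χ r) r :=
      ((hχs.differentiable (by simp)) r).hasDerivAt
    have ht : HasDerivAt (fun r : ℝ => π * r / R) (π / R) r := by
      simpa using ((hasDerivAt_id r).const_mul π).div_const R
    have hp : HasDerivAt (fun r : ℝ => r ^ 2) (2 * r) r := by
      simpa using hasDerivAt_pow 2 r
    have e1 := ((hχd.const_sub 1).mul ht.cos.neg).add hχd
    have e2 := ((hχd.const_sub 1).mul (hp.mul ht.sin)).add (hχd.mul hp.neg)
    have E1 := HasDerivAt.deriv e1
    have E2 := HasDerivAt.deriv e2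
    have F1 : deriv (fun r => (1 - χ r) * (-Real.cos (π * r / R)) + χ r) r = _ := E1
    have F2 : deriv (fun r => (1 - χ r) * (r ^ 2 * Real.sin (π * r / R)) + χ r * (-r ^ 2)) r = _ := E2
    rw [F1, F2]
    simp only [Pi.neg_apply, Pi.mul_apply]
    have hc : r * (π / R) = π * r / R := by ring
    generalize π / R = c at *
    have htp : 0 < π * r / R := by positivity
    have hsc := Real.sin_sq_add_cos_sq (π * r / R)
    have hA : 0 < π * r / R + 2 * Real.sin (π * r / R) * Real.cos (π * r / R) ∨ b < r := by
      left
      rw [← Real.sin_two_mul]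
      generalize π * r / R = t at *
      rcases le_or_gt t (π / 2) with h | h
      · have := Real.sin_nonneg_of_nonneg_of_le_pi (x := 2 * t) (by linarith) (by linarith)
        linarith
      · have := Real.neg_one_le_sin (2 * t)
        linarith [Real.pi_gt_three]
    have hS : R ≤ r → r ≤ b → Real.sin (π * r / R) ≤ 0 ∧ Real.cos (π * r / R) ≤ Real.sin (π * r / R) := by
      intro h1 h2
      have hs0 : 0 ≤ π * r / R - π := by
        have : π * r / R - π = π * (r - R) / R := by field_simp
        rw [this]
        have : 0 ≤ r - R := by linarith
        positivity
      have hs1 : π * r / R - π ≤ π / 4 := by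
        have : π * r / R ≤ 5 / 4 * π := by
          rw [div_le_iff₀ hR0]; nlinarith
        linarith
      generalize π * r / R = t at *
      obtain ⟨s, rfl⟩ : ∃ s, t = s + π := ⟨t - π, by ring⟩
      rw [Real.sin_add_pi, Real.cos_add_pi]
      have h3 : 0 ≤ Real.sin s := Real.sin_nonneg_of_nonneg_of_le_pi (by linarith) (by linarith)
      have h4 : Real.sin s ≤ Real.sin (π / 4) :=
        Real.sin_le_sin_of_le_of_le_pi_div_two (by linarith) (by linarith) (by linarith)
      have h5 : Real.cos (π / 4) ≤ Real.cos s :=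
        Real.cos_le_cos_of_nonneg_of_le_pi (by linarith) (by linarith) (by linarith)
      rw [Real.sin_pi_div_four] at h4
      rw [Real.cos_pi_div_four] at h5
      constructor <;> linarith
    have hk0 := hχn r
    have hk1 := hχl r
    have hdr := hd r
    have hd0r := hd0 r
    have hd1r := hd1 r
    have hχ0r := hχ0 r
    have hχ1r := hχ1 r
    generalize deriv χ r = d at *
    generalize χ r = k at *
    generalize Real.sin (π * r / R) = S at *
    generalize Real.cos (π * r / R) = C at *
    generalize π * r / R = t at *
    apply ne_of_lt
    have key : ((1 - k) * -C + k) * ((-d) * (r ^ 2 * S) + (1 - k) * (2 * r * S + r ^ 2 * (C * c)) + (d * (-r ^ 2) + k * (-(2 * r)))) - ((1 - k) * (r ^ 2 * S) + k * (-r ^ 2)) * ((-d) * (-C) + (1 - k) * (-(-S * c)) + d)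
      = (1 - k) ^ 2 * (-(r * (t + 2 * S * C))) + k ^ 2 * (-(2 * r)) + k * (1 - k) * (r * (2 * C + 2 * S + t * C + t * S)) + d * (r ^ 2 * (C - S)) := by
      have : C ^ 2 = 1 - S ^ 2 := by linarith
      subst hc
      linear_combination (-(1 - k) ^ 2 * r ^ 2 * c) * hsc
    refine lt_of_eq_of_lt (Eq.trans ?_ key) ?_
    · ring
    · rcases lt_or_ge r R with h | h
      · rw [hd0r h, hχ0r h.le]
        have := hA.resolve_right (by linarith)
        nlinarith [mul_pos hr0 this]
      · rcases le_or_gt r b with h' | h'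
        · have hA' := mul_pos hr0 (hA.resolve_right (by linarith))
          obtain ⟨h1, h2⟩ := hS h h'
          have a1 : d * (r ^ 2 * (C - S)) ≤ 0 :=
            mul_nonpos_of_nonneg_of_nonpos hdr (mul_nonpos_of_nonneg_of_nonpos (by positivity) (by linarith))
          have hC : C ≤ 0 := by linarith
          have a2 : k * (1 - k) * (r * (2 * C + 2 * S + t * C + t * S)) ≤ 0 := by
            apply mul_nonpos_of_nonneg_of_nonpos (mul_nonneg hk0 (by linarith))
            apply mul_nonpos_of_nonneg_of_nonpos hr0.le
            nlinarith
          rcases hk0.eq_or_lt with h3 | h3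
          · subst h3; linarith
          · have a3 : 0 < k ^ 2 * (2 * r) := by positivity
            have a4 : 0 ≤ (1 - k) ^ 2 * (r * (t + 2 * S * C)) := by positivity
            linarith
        · rw [hd1r h', hχ1r h'.le]
          linarith
end

section
/- Fix R > 0 and define h₁(r) = −cos(πr/R) and h₂(r) = r²·sin(πr/R) for r ∈ ℝ. Then for every r with 0 < r ≤ R one has h₁(r)·h₂′(r) − h₂(r)·h₁′(r) = −r·(sin(2πr/R) + πr/R), and this quantity is strictly negative; in particular h₁·h₂′ − h₂·h₁′ ≠ 0 on (0, R], so the 1-form h₁(r) dθ + h₂(r) dφ satisfies the contact condition there. -/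
open Real

/-- The first Lutz-twist profile function `h₁(r) = −cos(πr/R)`. -/
noncomputable def lutzH₁ (R r : ℝ) : ℝ := -Real.cos (π * r / R)

/-- The second Lutz-twist profile function `h₂(r) = r² sin(πr/R)`. -/
noncomputable def lutzH₂ (R r : ℝ) : ℝ := r ^ 2 * Real.sin (π * r / R)

/-- For `h₁(r) = −cos(πr/R)` and `h₂(r) = r² sin(πr/R)` one has, for `0 < r ≤ R`,
`h₁ h₂′ − h₂ h₁′ = −r (sin(2πr/R) + πr/R)`, and this quantity is strictly negative; in
particular `h₁ h₂′ − h₂ h₁′ ≠ 0` on `(0, R]`, so the 1-form `h₁ dθ + h₂ dφ` satisfies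
the contact condition there. -/
theorem lutz_twist_contact_condition (R : ℝ) (hR : 0 < R)
    (r : ℝ) (hr0 : 0 < r) (hrR : r ≤ R) :
    lutzH₁ R r * deriv (lutzH₂ R) r - lutzH₂ R r * deriv (lutzH₁ R) r
      = -r * (Real.sin (2 * π * r / R) + π * r / R) ∧
    lutzH₁ R r * deriv (lutzH₂ R) r - lutzH₂ R r * deriv (lutzH₁ R) r < 0 ∧
    lutzH₁ R r * deriv (lutzH₂ R) r - lutzH₂ R r * deriv (lutzH₁ R) r ≠ 0 := by
  have hx : HasDerivAt (fun r : ℝ => π * r / R) (π / R) r := by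
    simpa using ((hasDerivAt_id r).const_mul π).div_const R
  have h1 : deriv (lutzH₁ R) r = Real.sin (π * r / R) * (π / R) := by
    have h : HasDerivAt (lutzH₁ R) (-(-Real.sin (π * r / R) * (π / R))) r := hx.cos.neg
    rw [h.deriv]; ring
  have h2 : deriv (lutzH₂ R) r
      = 2 * r * Real.sin (π * r / R) + r ^ 2 * (Real.cos (π * r / R) * (π / R)) := by
    have h : HasDerivAt (lutzH₂ R) (((2 : ℕ) : ℝ) * r ^ (2 - 1) * Real.sin (π * r / R)
        + r ^ 2 * (Real.cos (π * r / R) * (π / R))) r := (hasDerivAt_pow 2 r).mul hx.sin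
    rw [h.deriv]; norm_num
  have e2 : 2 * π * r / R = 2 * (π * r / R) := by ring
  have key : lutzH₁ R r * deriv (lutzH₂ R) r - lutzH₂ R r * deriv (lutzH₁ R) r
      = -r * (Real.sin (2 * π * r / R) + π * r / R) := by
    rw [h1, h2, e2, Real.sin_two_mul]
    unfold lutzH₁ lutzH₂
    linear_combination (-(r ^ 2 * (π / R))) * Real.sin_sq_add_cos_sq (π * r / R)
  have hpos : 0 < Real.sin (2 * π * r / R) + π * r / R := by
    rw [e2]
    have hp : 0 < π * r / R := by positivity
    rcases le_or_gt (π * r / R) (π / 2) with h | h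
    · have := Real.sin_nonneg_of_nonneg_of_le_pi (x := 2 * (π * r / R)) (by linarith) (by linarith)
      linarith
    · have := Real.neg_one_le_sin (2 * (π * r / R))
      linarith [Real.pi_gt_three]
  have hneg : -r * (Real.sin (2 * π * r / R) + π * r / R) < 0 := by
    have := mul_pos hr0 hpos
    linarith
  rw [key]
  exact ⟨rfl, hneg, hneg.ne⟩
end

section
/- For t₁ > 0, t₂ > 0 with t₁ + t₂ < 1, let u(t₁,t₂) = (t₁, t₂, 1−t₁−t₂, 0) ∈ ℝ⁴ and σ(t₁,t₂) = u(t₁,t₂)/‖u(t₁,t₂)‖, a parametrization of the interior of the spherical 2-face Δ = u₁v₁w₁ of the triangulation (the radial projection to S³ of the 2-simplex with vertices e₁, e₂, e₃). Then for all such (t₁,t₂) the partial derivative ∂σ/∂t₁ exists and β_{σ(t₁,t₂)}(∂σ/∂t₁(t₁,t₂)) = (1 − t₂)/‖u(t₁,t₂)‖² > 0. In particular, at every interior point p of Δ the tangent plane T_pΔ is not contained in ker β_p, so T_pΔ ≠ ξ_p and Δ is nowhere tangent to the contact structure (hence Δ is not an overtwisted disk). -/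
/-- The point `(a, b, c, d)` of Euclidean 4-space, with coordinates `(x₁, y₁, x₂, y₂)`. -/
noncomputable def pt4 (a b c d : ℝ) : EuclideanSpace ℝ (Fin 4) :=
  (WithLp.equiv 2 (Fin 4 → ℝ)).symm ![a, b, c, d]

/-- The 1-form `β = x₂ dx₁ + y₂ dy₁ − x₁ dx₂ − y₁ dy₂` on `ℝ⁴`, evaluated at the point `p`
on the tangent vector `v`:  `β_p(v) = p₃v₁ + p₄v₂ − p₁v₃ − p₂v₄`. -/
noncomputable def betaForm (p v : EuclideanSpace ℝ (Fin 4)) : ℝ :=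
  p 2 * v 0 + p 3 * v 1 - p 0 * v 2 - p 1 * v 3

/-- `u(t₁,t₂) = (t₁, t₂, 1 − t₁ − t₂, 0)`. -/
noncomputable def faceU (t₁ t₂ : ℝ) : EuclideanSpace ℝ (Fin 4) :=
  pt4 t₁ t₂ (1 - t₁ - t₂) 0

/-- `σ(t₁,t₂) = u(t₁,t₂)/‖u(t₁,t₂)‖`, parametrizing the interior of the spherical 2-face
`Δ = u₁v₁w₁` (the radial projection to `S³` of the 2-simplex with vertices `e₁,e₂,e₃`). -/
noncomputable def faceσ (t₁ t₂ : ℝ) : EuclideanSpace ℝ (Fin 4) :=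
  ‖faceU t₁ t₂‖⁻¹ • faceU t₁ t₂

/-- For `t₁, t₂ > 0` with `t₁ + t₂ < 1`, the partial derivative `∂σ/∂t₁` exists and
`β_{σ(t₁,t₂)}(∂σ/∂t₁(t₁,t₂)) = (1 − t₂)/‖u(t₁,t₂)‖² > 0`.  In particular, at every
interior point `p` of the spherical face `Δ` the tangent plane `T_pΔ` is not contained in
`ker β_p`, so `T_pΔ ≠ ξ_p` and `Δ` is nowhere tangent to the contact structure (hence `Δ`
is not an overtwisted disk). -/
theorem face_not_tangent (t₁ t₂ : ℝ) (h₁ : 0 < t₁) (h₂ : 0 < t₂) (h₃ : t₁ + t₂ < 1) :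
    ∃ D : EuclideanSpace ℝ (Fin 4),
      HasDerivAt (fun s => faceσ s t₂) D t₁ ∧
      betaForm (faceσ t₁ t₂) D = (1 - t₂) / ‖faceU t₁ t₂‖ ^ 2 ∧
      0 < (1 - t₂) / ‖faceU t₁ t₂‖ ^ 2 := by
  have hu : HasDerivAt (fun s => faceU s t₂) (pt4 1 0 (-1) 0) t₁ := by
    have e : (fun s => faceU s t₂) = fun s => pt4 0 t₂ (1 - t₂) 0 + s • pt4 1 0 (-1) 0 := by
      funext s
      ext i
      fin_cases i <;> simp [faceU, pt4]
      ring
    rw [e]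
    have h := ((hasDerivAt_id t₁).smul_const (pt4 1 0 (-1) 0)).const_add (pt4 0 t₂ (1 - t₂) 0)
    simpa using h
  have hne : faceU t₁ t₂ ≠ 0 := by
    intro h
    have h0 := congrArg (fun v : EuclideanSpace ℝ (Fin 4) => v 0) h
    simp [faceU, pt4] at h0
    exact h₁.ne' h0
  have hn : 0 < ‖faceU t₁ t₂‖ := norm_pos_iff.mpr hne
  have hd : DifferentiableAt ℝ (fun s => ‖faceU s t₂‖⁻¹) t₁ :=
    (hu.differentiableAt.norm ℝ hne).inv hn.ne'
  refine ⟨_, hd.hasDerivAt.smul hu, ?_, ?_⟩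
  · generalize deriv (fun s => ‖faceU s t₂‖⁻¹) t₁ = c
    unfold faceσ
    generalize ‖faceU t₁ t₂‖ = n at *
    simp [betaForm, faceU, pt4]
    field_simp
    ring
  · have : 0 < 1 - t₂ := by linarith
    positivity
end

section
/- Let S^{2,1}_{10} be the simplicial complex on vertex set ℤ/10ℤ whose facets are the thirty 4-element subsets {i, i+1, i+2, i+4}, {i, i+1, i+3, i+4}, {i, i+2, i+3, i+4}, for i ∈ ℤ/10ℤ (arithmetic mod 10). Then every 3-element subset of ℤ/10ℤ that is contained in some facet of S^{2,1}_{10} is contained in exactly two facets of S^{2,1}_{10} (i.e. Walkup's complex S^{2,1}_{10} is a closed 3-pseudomanifold). -/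
/-- The facets of Walkup's 10-vertex triangulation `S^{2,1}_{10}` of `S² × S¹`: the thirty
4-element subsets `{i, i+1, i+2, i+4}`, `{i, i+1, i+3, i+4}`, `{i, i+2, i+3, i+4}` of
`ℤ/10ℤ`. -/
def walkupComplex : Finset (Finset (ZMod 10)) :=
  Finset.univ.image (fun i : ZMod 10 => {i, i + 1, i + 2, i + 4}) ∪
  Finset.univ.image (fun i : ZMod 10 => {i, i + 1, i + 3, i + 4}) ∪
  Finset.univ.image (fun i : ZMod 10 => {i, i + 2, i + 3, i + 4})

theorem walkup_aux :
    ∀ s ∈ ({{0, 1, 2, 4}, {0, 1, 3, 4}, {0, 2, 3, 4}} : Finset (Finset (ZMod 10))),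
      ∀ t ∈ s.powersetCard 3, (walkupComplex.filter (fun s => t ⊆ s)).card = 2 := by
  decide +kernel

theorem mem_walkup (s : Finset (ZMod 10)) : s ∈ walkupComplex ↔
    ∃ i : ZMod 10, ∃ r ∈ ({{0, 1, 2, 4}, {0, 1, 3, 4}, {0, 2, 3, 4}} : Finset (Finset (ZMod 10))),
      s = r.image (fun x => i + x) := by
  have h : ∀ i a b c : ZMod 10, ({0, a, b, c} : Finset (ZMod 10)).image (fun x => i + x)
      = {i, i + a, i + b, i + c} := by
    intro i a b c
    simp [Finset.image_insert]
  simp only [walkupComplex, Finset.mem_union, Finset.mem_image, Finset.mem_univ, true_and,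
    Finset.mem_insert, Finset.mem_singleton, exists_eq_or_imp, exists_eq_left, h, exists_or,
    or_assoc, eq_comm (a := s)]

theorem walkup_shift (k : ZMod 10) (s : Finset (ZMod 10)) (hs : s ∈ walkupComplex) :
    s.image (fun x => k + x) ∈ walkupComplex := by
  obtain ⟨i, r, hr, rfl⟩ := (mem_walkup s).1 hs
  refine (mem_walkup _).2 ⟨k + i, r, hr, ?_⟩
  rw [Finset.image_image]
  congr 1
  funext x
  simp [add_assoc]

theorem walkup_le (k : ZMod 10) (t : Finset (ZMod 10)) :
    (walkupComplex.filter (fun s => t ⊆ s)).card ≤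
      (walkupComplex.filter (fun s => t.image (fun x => k + x) ⊆ s)).card := by
  refine Finset.card_le_card_of_injOn (fun s => s.image (fun x => k + x)) ?_ ?_
  · intro s hs
    have hs' := Finset.mem_filter.1 hs
    exact Finset.mem_filter.2 ⟨walkup_shift k s hs'.1, Finset.image_subset_image hs'.2⟩
  · exact (Finset.image_injective (add_right_injective k)).injOn

theorem shift_back (k : ZMod 10) (t : Finset (ZMod 10)) :
    (t.image (fun x => -k + x)).image (fun x => k + x) = t := by
  rw [Finset.image_image]
  have : ((fun x => k + x) ∘ fun x => -k + x) = (id : ZMod 10 → ZMod 10) := by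
    funext x
    simp
  rw [this, Finset.image_id]

/-- Every 3-element subset of `ℤ/10ℤ` contained in some facet of Walkup's complex
`S^{2,1}_{10}` is contained in exactly two facets: `S^{2,1}_{10}` is a closed
3-pseudomanifold. -/
theorem walkup_is_pseudomanifold :
    ∀ t : Finset (ZMod 10), t.card = 3 → (∃ s ∈ walkupComplex, t ⊆ s) →
      (walkupComplex.filter (fun s => t ⊆ s)).card = 2 := by
  rintro t ht ⟨s, hs, hts⟩
  obtain ⟨i, r, hr, rfl⟩ := (mem_walkup s).1 hs
  have h1 := walkup_le (-i) t
  have h2 := walkup_le i (t.image (fun x => -i + x))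
  rw [shift_back] at h2
  rw [le_antisymm h1 h2]
  refine walkup_aux r hr _ (Finset.mem_powersetCard.2 ⟨?_, ?_⟩)
  · have h3 := Finset.image_subset_image (f := fun x => -i + x) hts
    have h4 := shift_back (-i) r
    rw [neg_neg] at h4
    rwa [h4] at h3
  · rw [Finset.card_image_of_injective _ (add_right_injective _), ht]
end

section
/- With arithmetic mod 10, let T₄ and T₅ be the families of 4-element subsets of ℤ/10ℤ defined by T₄ = {{2i, 2i+1, 2i+2, 2i+4}, {2i+1, 2i+2, 2i+4, 2i+5}, {2i, 2i+2, 2i+3, 2i+4} : i ∈ ℤ/10ℤ} and T₅ = {{2i+1, 2i+2, 2i+3, 2i+5}, {2i, 2i+1, 2i+3, 2i+4}, {2i+1, 2i+3, 2i+4, 2i+5} : i ∈ ℤ/10ℤ}. Then the set of 3-element subsets of ℤ/10ℤ contained in exactly one member of T₄ equals the set of 3-element subsets contained in exactly one member of T₅, and this common boundary is exactly the set of twenty triangles {i, i+1, i+4} and {i, i+3, i+4}, i ∈ ℤ/10ℤ (the 10-vertex triangulated torus τ₁). That is, ∂T₄ = ∂T₅ = τ₁. -/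
/-- The family `T₄` of fifteen 4-element subsets `{2i, 2i+1, 2i+2, 2i+4}`,
`{2i+1, 2i+2, 2i+4, 2i+5}`, `{2i, 2i+2, 2i+3, 2i+4}` of `ℤ/10ℤ`. -/
def torusT₄ : Finset (Finset (ZMod 10)) :=
  Finset.univ.image (fun i : ZMod 10 => {2*i, 2*i + 1, 2*i + 2, 2*i + 4}) ∪
  Finset.univ.image (fun i : ZMod 10 => {2*i + 1, 2*i + 2, 2*i + 4, 2*i + 5}) ∪
  Finset.univ.image (fun i : ZMod 10 => {2*i, 2*i + 2, 2*i + 3, 2*i + 4})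

/-- The family `T₅` of fifteen 4-element subsets `{2i+1, 2i+2, 2i+3, 2i+5}`,
`{2i, 2i+1, 2i+3, 2i+4}`, `{2i+1, 2i+3, 2i+4, 2i+5}` of `ℤ/10ℤ`. -/
def torusT₅ : Finset (Finset (ZMod 10)) :=
  Finset.univ.image (fun i : ZMod 10 => {2*i + 1, 2*i + 2, 2*i + 3, 2*i + 5}) ∪
  Finset.univ.image (fun i : ZMod 10 => {2*i, 2*i + 1, 2*i + 3, 2*i + 4}) ∪
  Finset.univ.image (fun i : ZMod 10 => {2*i + 1, 2*i + 3, 2*i + 4, 2*i + 5})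

/-- The boundary of a family of facets: the 3-element subsets contained in exactly one
facet. -/
def facetBoundary (F : Finset (Finset (ZMod 10))) : Set (Finset (ZMod 10)) :=
  {t | t.card = 3 ∧ (F.filter (fun s => t ⊆ s)).card = 1}

/-- The 10-vertex triangulated torus `τ₁`: the twenty triangles `{i, i+1, i+4}` and
`{i, i+3, i+4}`, `i ∈ ℤ/10ℤ`. -/
def tau₁ : Set (Finset (ZMod 10)) :=
  {t | ∃ i : ZMod 10, t = {i, i + 1, i + 4} ∨ t = {i, i + 3, i + 4}}

/-- The subset of `ℤ/10ℤ` with a given bit mask. -/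
def maskSet (m : ℕ) : Finset (ZMod 10) := Finset.univ.filter (fun a => m.testBit a.val = true)

def masks₄ : List ℕ := [23, 29, 54, 92, 116, 216, 263, 368, 387, 449, 464, 525, 773, 833, 864]

def masks₅ : List ℕ := [27, 46, 58, 108, 184, 232, 432, 523, 526, 643, 705, 736, 774, 898, 928]

def masksτ : List ℕ := [19, 25, 38, 50, 76, 100, 131, 152, 193, 200, 262, 304, 386, 400, 521, 524, 577, 608, 772, 800]

theorem torusT₄_eq : torusT₄ = (masks₄.map maskSet).toFinset := by decide +kernel

theorem torusT₅_eq : torusT₅ = (masks₅.map maskSet).toFinset := by decide +kernel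

theorem nodup₄ : (masks₄.map maskSet).Nodup := by decide +kernel

theorem nodup₅ : (masks₅.map maskSet).Nodup := by decide +kernel

theorem tau_card : ∀ i : ZMod 10, ({i, i + 1, i + 4} : Finset (ZMod 10)).card = 3 ∧
    ({i, i + 3, i + 4} : Finset (ZMod 10)).card = 3 := by
  decide +kernel

theorem tau_masks : ∀ i : ZMod 10, (∃ m ∈ masksτ, {i, i + 1, i + 4} = maskSet m) ∧
    (∃ m ∈ masksτ, {i, i + 3, i + 4} = maskSet m) := by
  decide +kernel

theorem masks_tau : ∀ m ∈ masksτ, ∃ i : ZMod 10,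
    maskSet m = {i, i + 1, i + 4} ∨ maskSet m = {i, i + 3, i + 4} := by
  decide +kernel

/-- Whether the mask `m` contains the three bits. -/
def has3 (x y z m : ℕ) : Bool := m.testBit x && m.testBit y && m.testBit z

theorem has3_iff (a b c : ZMod 10) (m : ℕ) :
    ({a, b, c} : Finset (ZMod 10)) ⊆ maskSet m ↔ has3 a.val b.val c.val m = true := by
  simp [Finset.insert_subset_iff, maskSet, has3, and_assoc]

theorem num_key : ∀ x ∈ List.range 10, ∀ y ∈ List.range 10, ∀ z ∈ List.range 10,
    (x ≠ y ∧ x ≠ z ∧ y ≠ z) →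
    ((masks₄.filter (has3 x y z)).length = 1 ↔ masksτ.any (has3 x y z) = true) ∧
    ((masks₅.filter (has3 x y z)).length = 1 ↔ masksτ.any (has3 x y z) = true) := by
  decide +kernel

theorem filter_card (l : List ℕ) (hl : (l.map maskSet).Nodup) (a b c : ZMod 10) :
    ((l.map maskSet).toFinset.filter (fun s => {a, b, c} ⊆ s)).card =
      (l.filter (has3 a.val b.val c.val)).length := by
  have e : (l.map maskSet).toFinset.filter (fun s => {a, b, c} ⊆ s) =
      ((l.map maskSet).filter (fun s => decide ({a, b, c} ⊆ s))).toFinset := by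
    ext s
    simp
  rw [e, List.toFinset_card_of_nodup (hl.filter _), List.filter_map, List.length_map]
  congr 2
  ext m
  simp [has3_iff]

theorem mem_tau_iff (t : Finset (ZMod 10)) (ht : t.card = 3) :
    t ∈ tau₁ ↔ ∃ m ∈ masksτ, t ⊆ maskSet m := by
  constructor
  · rintro ⟨i, rfl | rfl⟩
    · obtain ⟨m, hm, h⟩ := (tau_masks i).1
      exact ⟨m, hm, h.le⟩
    · obtain ⟨m, hm, h⟩ := (tau_masks i).2
      exact ⟨m, hm, h.le⟩
  · rintro ⟨m, hm, h⟩
    obtain ⟨i, hi⟩ := masks_tau m hm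
    have hc : (maskSet m).card = 3 := by
      rcases hi with hi | hi <;> rw [hi]
      · exact (tau_card i).1
      · exact (tau_card i).2
    have : t = maskSet m := Finset.eq_of_subset_of_card_le h (by omega)
    exact ⟨i, this ▸ hi⟩

theorem boundary_key (t : Finset (ZMod 10)) (ht : t.card = 3) :
    ((torusT₄.filter (fun s => t ⊆ s)).card = 1 ↔ t ∈ tau₁) ∧
    ((torusT₅.filter (fun s => t ⊆ s)).card = 1 ↔ t ∈ tau₁) := by
  rw [mem_tau_iff t ht, torusT₄_eq, torusT₅_eq]
  obtain ⟨a, b, c, hab, hac, hbc, rfl⟩ := Finset.card_eq_three.1 ht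
  rw [filter_card _ nodup₄, filter_card _ nodup₅]
  have h := num_key a.val (List.mem_range.2 (ZMod.val_lt a)) b.val (List.mem_range.2 (ZMod.val_lt b)) c.val (List.mem_range.2 (ZMod.val_lt c))
    ⟨fun h => hab (ZMod.val_injective 10 h), fun h => hac (ZMod.val_injective 10 h),
    fun h => hbc (ZMod.val_injective 10 h)⟩
  simpa only [List.any_eq_true, has3_iff] using h

theorem boundary_eq (F : Finset (Finset (ZMod 10)))
    (h : ∀ t : Finset (ZMod 10), t.card = 3 → ((F.filter (fun s => t ⊆ s)).card = 1 ↔ t ∈ tau₁)) :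
    facetBoundary F = tau₁ := by
  ext t
  constructor
  · rintro ⟨h3, h1⟩
    exact (h t h3).1 h1
  · intro ht
    have h3 : t.card = 3 := by
      obtain ⟨i, rfl | rfl⟩ := ht
      · exact (tau_card i).1
      · exact (tau_card i).2
    exact ⟨h3, (h t h3).2 ht⟩

/-- The set of triangles contained in exactly one member of `T₄` equals the set of
triangles contained in exactly one member of `T₅`, and this common boundary is exactly the
10-vertex triangulated torus `τ₁`:  `∂T₄ = ∂T₅ = τ₁`. -/
theorem solid_tori_common_boundary :
    facetBoundary torusT₄ = facetBoundary torusT₅ ∧ facetBoundary torusT₄ = tau₁ := by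
  have h4 : facetBoundary torusT₄ = tau₁ := boundary_eq _ fun t ht =>
    (boundary_key t ht).1
  have h5 : facetBoundary torusT₅ = tau₁ := boundary_eq _ fun t ht =>
    (boundary_key t ht).2
  exact ⟨h4.trans h5.symm, h4⟩
end
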